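/- arXiv:1403.2852 — 4 statements merged into one kernel-verified Lean document; each statement's English description precedes it below -/
import Mathlib

section
/- Suppose the sequence g_n is non-decreasing, the sequence k_n/g_n is eventually non-decreasing, and ∑_{n≥1} g_n^{-1} = ∞. If the initial condition x belongs to H^s for every s>0, then there exists a weak solution X of the dyadic model with initial condition x such that X ∈ L^∞([0,∞); H^s) for every s>0 (i.e. sup_{t≥0} ∑_{n≥1} 2^{2sn} X_n(t)² < ∞ for every s>0), and this solution is unique in the class L³_loc([0,∞); W^{β/3,3}). -/
open scoped BigOperators ENNReal
open MeasureTheory Filter Set Topology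

/-- `kₙ = 2^{βn}`. -/
noncomputable def kk (β : ℝ) (n : ℕ) : ℝ := (2 : ℝ) ^ (β * n)

/-- A weak solution of the dyadic model: `X 0 ≡ 0`, `X n 0 = x n`, and the ODE holds
for every `n ≥ 1` and `t ≥ 0` (the derivative being taken within `[0,∞)`). -/
def IsDyadicSolution (β : ℝ) (φ g : ℕ → ℝ) (x : ℕ → ℝ) (X : ℕ → ℝ → ℝ) : Prop :=
  (∀ t : ℝ, X 0 t = 0) ∧
  (∀ n : ℕ, 1 ≤ n → X n 0 = x n) ∧
  (∀ n : ℕ, 1 ≤ n → ∀ t : ℝ, 0 ≤ t →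
    HasDerivWithinAt (X n)
      (φ (n - 1) * kk β (n - 1) * (X (n - 1) t) ^ 2
        - φ n * kk β n * X n t * X (n + 1) t
        - kk β n / g n * X n t) (Set.Ici 0) t)

/-- `x ∈ Hˢ`, i.e. `∑_{n≥1} 2^{2sn} xₙ² < ∞`. -/
def MemHs (s : ℝ) (x : ℕ → ℝ) : Prop :=
  Summable (fun n : ℕ => (2 : ℝ) ^ (2 * s * ((n : ℝ) + 1)) * (x (n + 1)) ^ 2)

/-- `X ∈ L^∞(I; Hˢ)`. -/
def MemLinftyHs (s : ℝ) (X : ℕ → ℝ → ℝ) (I : Set ℝ) : Prop :=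
  ∃ M : ℝ, ∀ t ∈ I,
    Summable (fun n : ℕ => (2 : ℝ) ^ (2 * s * ((n : ℝ) + 1)) * (X (n + 1) t) ^ 2) ∧
    (∑' n : ℕ, (2 : ℝ) ^ (2 * s * ((n : ℝ) + 1)) * (X (n + 1) t) ^ 2) ≤ M

/-- `X ∈ L³([0,T]; W^{β/3,3})`, i.e. `∫_0^T ∑_{n≥1} 2^{βn} |Xₙ(t)|³ dt < ∞`. -/
def MemL3W (β : ℝ) (X : ℕ → ℝ → ℝ) (T : ℝ) : Prop :=
  (∫⁻ t in Set.Ioc (0 : ℝ) T,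
      ∑' n : ℕ, ENNReal.ofReal ((2 : ℝ) ^ (β * ((n : ℝ) + 1)) * |X (n + 1) t| ^ 3)) < ⊤


def rh (a d : ℕ → ℝ) (y : ℕ → ℝ) (n : ℕ) : ℝ :=
  a n * y n ^ 2 - a (n+1) * y (n+1) * y (n+2) - d (n+1) * y (n+1)

lemma tele (a d y : ℕ → ℝ) (n N : ℕ) (h : n ≤ N) :
    ∑ i ∈ Finset.Ico n N, y (i+1) * rh a d y i =
      a n * y n ^ 2 * y (n+1) - a N * y N ^ 2 * y (N+1)
        - ∑ i ∈ Finset.Ico n N, d (i+1) * y (i+1) ^ 2 := by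
  induction N, h using Nat.le_induction with
  | base => simp
  | succ N h ih =>
    rw [Finset.sum_Ico_succ_top h, Finset.sum_Ico_succ_top h, ih]
    unfold rh
    ring

lemma anti_helper (f f' : ℝ → ℝ) (T : ℝ)
    (hf : ∀ t ∈ Icc 0 T, HasDerivWithinAt f (f' t) (Icc 0 T) t)
    (hf' : ∀ t ∈ Icc 0 T, f' t ≤ 0) : AntitoneOn f (Icc 0 T) :=
  antitoneOn_of_hasDerivWithinAt_nonpos (convex_Icc 0 T)
    (fun t ht => (hf t ht).continuousWithinAt)
    (fun t ht => (hf t (interior_subset ht)).mono interior_subset)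
    (fun t ht => hf' t (interior_subset ht))

def Gal (a d x : ℕ → ℝ) (N : ℕ) (T : ℝ) (X : ℕ → ℝ → ℝ) : Prop :=
  (∀ n, Continuous (X n)) ∧ (∀ t, X 0 t = 0) ∧ (∀ n, N < n → ∀ t, X n t = 0) ∧
  (∀ n, n < N → X (n+1) 0 = x (n+1)) ∧
  (∀ n, n < N → ∀ t ∈ Icc 0 T,
    HasDerivWithinAt (X (n+1)) (rh a d (fun m => X m t) n) (Icc 0 T) t)

/-- extension by zero -/
def ez (N : ℕ) (v : Fin N → ℝ) : ℕ → ℝ := fun n =>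
  if h : 1 ≤ n ∧ n ≤ N then v ⟨n - 1, by omega⟩ else 0

lemma ez_contDiff (N : ℕ) (n : ℕ) : ContDiff ℝ 1 (fun v : Fin N → ℝ => ez N v n) := by
  unfold ez
  by_cases h : 1 ≤ n ∧ n ≤ N
  · simp only [h, and_self, dite_true]; fun_prop
  · simp only [h, dite_false]; fun_prop

lemma ez_succ (N : ℕ) (v : Fin N → ℝ) (i : ℕ) (h : i < N) : ez N v (i+1) = v ⟨i, h⟩ := by
  unfold ez
  rw [dif_pos ⟨by omega, by omega⟩]; rfl

lemma gal_exists (a d x : ℕ → ℝ) (hd : ∀ n, 0 ≤ d (n+1)) (N : ℕ) (T : ℝ) (hT : 0 ≤ T) :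
    ∃ X, Gal a d x N T X := by
  set F : (Fin N → ℝ) → (Fin N → ℝ) := fun v i => rh a d (ez N v) i with hF
  have hFc : ContDiff ℝ 1 F := by
    rw [contDiff_pi]
    intro i
    simp only [hF, rh]
    have := ez_contDiff N
    have h0 := this i
    have h1 := this (i+1)
    have h2 := this (i+2)
    fun_prop
  set v0 : Fin N → ℝ := fun i => x (i+1) with hv0
  set R : ℝ := √(∑ i, v0 i ^ 2) with hR
  let χ : ContDiffBump (0 : Fin N → ℝ) := ⟨R + 1, R + 2, by positivity, by linarith⟩
  set f : (Fin N → ℝ) → (Fin N → ℝ) := fun v => χ v • F v with hf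
  have hfc : ContDiff ℝ 1 f := χ.contDiff.smul hFc
  have hfs : HasCompactSupport f := χ.hasCompactSupport.smul_right
  obtain ⟨K, hK⟩ := hfc.lipschitzWith_of_hasCompactSupport hfs (by simp)
  obtain ⟨C, hC⟩ := hfs.exists_bound_of_continuous hfc.continuous
  have hC0 : 0 ≤ C := (norm_nonneg _).trans (hC 0)
  have hpl : IsPicardLindelof (fun _ => f) (tmin := 0) (tmax := T) ⟨0, le_rfl, hT⟩ v0
      ⟨C * T, by positivity⟩ 0 ⟨C, hC0⟩ K := by
    apply IsPicardLindelof.of_time_independent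
    · intro v _; exact hC v
    · exact hK.lipschitzOnWith
    · simp [hT]; exact le_rfl
  obtain ⟨y, hy0, hy⟩ := hpl.exists_eq_forall_mem_Icc_hasDerivWithinAt₀
  simp only at hy0 hy
  have hyi : ∀ (i : Fin N), ∀ t ∈ Icc 0 T,
      HasDerivWithinAt (fun t => y t i) (χ (y t) * rh a d (ez N (y t)) i) (Icc 0 T) t := by
    intro i t ht
    have := (hasDerivWithinAt_pi.1 (hy t ht)) i
    simpa [hf, hF] using this
  -- energy
  have hen : AntitoneOn (fun t => ∑ i, y t i ^ 2) (Icc 0 T) := by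
    apply anti_helper _ (fun t => ∑ i, 2 * y t i * (χ (y t) * rh a d (ez N (y t)) i))
    · intro t ht
      apply HasDerivWithinAt.fun_sum
      intro i _
      have := (hyi i t ht).fun_pow 2
      simpa using this
    · intro t ht
      have h1 : ∑ i, 2 * y t i * (χ (y t) * rh a d (ez N (y t)) i)
          = 2 * χ (y t) * ∑ i ∈ Finset.Ico 0 N, ez N (y t) (i+1) * rh a d (ez N (y t)) i := by
        rw [Nat.Ico_zero_eq_range, Finset.sum_range, Finset.mul_sum]
        refine Finset.sum_congr rfl fun i _ => ?_
        rw [ez_succ N _ _ i.2]; ring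
      rw [h1, tele _ _ _ _ _ (Nat.zero_le _)]
      have h2 : ez N (y t) 0 = 0 := by simp [ez]
      have h3 : ez N (y t) (N+1) = 0 := by simp [ez]
      rw [h2, h3]
      have h4 : 0 ≤ ∑ i ∈ Finset.Ico 0 N, d (i+1) * ez N (y t) (i+1) ^ 2 :=
        Finset.sum_nonneg fun i _ => mul_nonneg (hd i) (sq_nonneg _)
      have h5 : 0 ≤ χ (y t) := χ.nonneg
      have := mul_nonneg h5 h4
      nlinarith
  have hone : ∀ t ∈ Icc 0 T, χ (y t) = 1 := by
    intro t ht
    apply χ.one_of_mem_closedBall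
    rw [mem_closedBall_zero_iff, pi_norm_le_iff_of_nonneg χ.rIn_pos.le]
    intro i
    have h1 := hen ⟨le_rfl, hT⟩ ht ht.1
    simp only [hy0] at h1
    have h2 : y t i ^ 2 ≤ ∑ i, y t i ^ 2 :=
      Finset.single_le_sum (f := fun i => y t i ^ 2) (fun i _ => sq_nonneg _) (Finset.mem_univ i)
    have h3 : |y t i| ≤ R := Real.abs_le_sqrt (h2.trans h1)
    rw [Real.norm_eq_abs]
    exact h3.trans (by simp [χ])
  have hyc : ContinuousOn y (Icc 0 T) := fun t ht => (hy t ht).continuousWithinAt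
  set z : ℝ → Fin N → ℝ := fun t => y (projIcc 0 T hT t) with hz
  have hzc : Continuous z := by
    have := hyc.domRestrict.comp (continuous_projIcc (h := hT))
    exact this
  have hzy : ∀ t ∈ Icc 0 T, z t = y t := by
    intro t ht
    simp only [hz]; rw [projIcc_of_mem hT ht]
  refine ⟨fun n t => ez N (z t) n, ?_, ?_, ?_, ?_, ?_⟩
  · intro n
    exact (ez_contDiff N n).continuous.comp hzc
  · intro t; simp [ez]
  · intro n hn t
    simp only [ez]
    rw [dif_neg]; omega
  · intro n hn
    simp only
    rw [ez_succ N _ n hn, hzy 0 ⟨le_rfl, hT⟩, hy0]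
  · intro n hn t ht
    have h1 := hyi ⟨n, hn⟩ t ht
    rw [hone t ht, one_mul] at h1
    simp only [hzy t ht]
    refine h1.congr ?_ ?_
    · intro s hs
      simp only [ez_succ N _ n hn, hzy s hs]
    · simp only [ez_succ N _ n hn, hzy t ht]
lemma seq_bound (G : ℕ → ℝ) (hG : ∀ n, 0 < G n) (γ : ℝ) (hγ : 0 < γ) (hγG : ∀ n, γ ≤ G n)
    (K : ℝ) (hK : 1 ≤ K) (n0 : ℕ) (hKG : ∀ n, n0 ≤ n → G (n+1) ≤ K * G n)
    (hdiv : ¬ Summable fun n => (G n)⁻¹) (A : ℝ) (hA : 0 < A) (H : ℝ) (hH : 0 ≤ H)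
    (l : ℝ) (hl0 : 0 < l) (hl1 : l < 1) (r : ℕ → ℝ) (B : ℝ) (hB : 0 ≤ B)
    (hrB : ∀ n, √(2 * r n) * G n ≤ B * l ^ n) :
    ∃ C, ∀ f J : ℕ → ℝ, (∀ n, 0 ≤ f n) → (∀ n, 0 ≤ J n) → J 0 ≤ H → (∀ n, f n ≤ H) →
      (∀ n, f (n+1) ≤ G n * (J n - J (n+1))) → (∀ n, J n ≤ A * f n ^ 2 + r n) →
      ∀ n, f n ≤ C * l ^ n := by
  obtain ⟨b, hb0, hb⟩ : ∃ b : ℝ, 0 < b ∧ b ^ 2 = 2 * A :=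
    ⟨√(2 * A), by positivity, Real.sq_sqrt (by positivity)⟩
  -- choice of δ
  obtain ⟨δ, hδ0, hδ⟩ : ∃ δ : ℝ, 0 < δ ∧ b * K * δ ≤ l := by
    refine ⟨l / (b * K), by positivity, le_of_eq ?_⟩
    field_simp
  obtain ⟨c, hc0, hc1, hc2⟩ : ∃ c : ℝ, 0 < c ∧ b * c ≤ 1/4 ∧ 2 * b * c ^ 2 * K ≤ δ := by
    refine ⟨min (1 / (4 * b)) (2 * δ / K), by positivity, ?_, ?_⟩
    · calc b * min (1 / (4 * b)) (2 * δ / K) ≤ b * (1 / (4*b)) := by gcongr; exact min_le_left _ _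
        _ = 1/4 := by field_simp
    · have h1 : min (1 / (4 * b)) (2 * δ / K) ≤ 1/(4*b) := min_le_left _ _
      have h2 : min (1 / (4 * b)) (2 * δ / K) ≤ 2 * δ / K := min_le_right _ _
      have h0 : 0 < min (1 / (4 * b)) (2 * δ / K) := by positivity
      set m := min (1 / (4 * b)) (2 * δ / K)
      calc 2 * b * m^2 * K = 2 * b * m * m * K := by ring
        _ ≤ 2 * b * (1/(4*b)) * (2 * δ / K) * K := by gcongr
        _ = δ := by field_simp; ring
  obtain ⟨n1, hn1⟩ : ∃ n1, ∀ n, n1 ≤ n → B * l ^ n < δ := by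
    have h : Tendsto (fun n : ℕ => B * l ^ n) atTop (𝓝 (B * 0)) :=
      (tendsto_pow_atTop_nhds_zero_of_lt_one hl0.le hl1).const_mul B
    rw [mul_zero] at h
    exact eventually_atTop.1 (h.eventually (gt_mem_nhds hδ0))
  set ns := max n0 n1 with hns
  obtain ⟨n2, hn2⟩ : ∃ n2, √H < c * ∑ i ∈ Finset.range n2, (G (ns + i))⁻¹ := by
    have hd : ¬ Summable fun i => (G (ns + i))⁻¹ := by
      intro h
      apply hdiv
      rw [← summable_nat_add_iff ns]
      simpa [add_comm] using h
    rw [not_summable_iff_tendsto_nat_atTop_of_nonneg (fun i => (inv_pos.2 (hG _)).le)] at hd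
    obtain ⟨n2, h2⟩ := (hd.eventually_gt_atTop (√H / c)).exists
    refine ⟨n2, ?_⟩
    rwa [div_lt_iff₀' hc0] at h2
  set N := ns + n2 with hN
  set L := max (δ / l ^ N) B with hL
  have hL0 : 0 ≤ L := le_max_of_le_right hB
  refine ⟨max (H / l ^ N) (δ / γ * L / l), ?_⟩
  intro f J hf hJ hJ0 hfH h1 h2
  have hanti : ∀ n, J (n+1) ≤ J n := by
    intro n
    have := (hf (n+1)).trans (h1 n)
    have := nonneg_of_mul_nonneg_right this (hG n)
    linarith
  have hanti' : Antitone J := antitone_nat_of_succ_le hanti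
  set h : ℕ → ℝ := fun n => √(J n) with hh
  have hh0 : ∀ n, 0 ≤ h n := fun n => Real.sqrt_nonneg _
  have hsq : ∀ n, h n ^ 2 = J n := fun n => Real.sq_sqrt (hJ n)
  have hhanti : ∀ n, h (n+1) ≤ h n := fun n => Real.sqrt_le_sqrt (hanti n)
  -- dichotomy
  have dich : ∀ n, h (n+1) * G (n+1) ≤ B * l ^ (n+1) ∨ h (n+1) ≤ b * G n * (h n ^ 2 - h (n+1) ^ 2) := by
    intro n
    rcases le_total (J (n+1)) (2 * r (n+1)) with hc | hc
    · left
      refine le_trans ?_ (hrB (n+1))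
      have := hG (n+1)
      gcongr
      exact Real.sqrt_le_sqrt hc
    · right
      have h3 := h2 (n+1)
      have h4 : h (n+1) ^ 2 ≤ (b * f (n+1)) ^ 2 := by
        rw [hsq, mul_pow, hb]; linarith
      have h5 : h (n+1) ≤ b * f (n+1) := by
        have := hf (n+1)
        exact le_of_sq_le_sq h4 (by positivity)
      rw [hsq, hsq, mul_assoc]
      refine h5.trans ?_
      gcongr
      exact h1 n
  -- phase 1
  have ph1 : ∃ n, ns ≤ n ∧ n ≤ N ∧ h n * G n < δ := by
    by_contra! hcon
    have hstep : ∀ i, i < n2 → c * (G (ns + i))⁻¹ ≤ h (ns + i) - h (ns + (i+1)) := by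
      intro i hi
      have hw := hcon (ns + (i+1)) (by omega) (by omega)
      set n := ns + i with hn
      have e : ns + (i+1) = n + 1 := by omega
      rw [e] at hw ⊢
      have hGn := hG n
      have hGn1 := hKG n (le_trans (le_max_left _ _) (Nat.le_add_right _ _))
      rcases dich n with hd | hd
      · have := hn1 (n+1) (by have : n1 ≤ ns := le_max_right _ _
                              omega)
        linarith
      · by_contra! hlt
        have hu : (h n - h (n+1)) * G n < c := by
          have := mul_lt_mul_of_pos_right hlt hGn
          rwa [mul_assoc, inv_mul_cancel₀ hGn.ne', mul_one] at this
        have hm := hhanti n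
        have hw' : δ ≤ h (n+1) * (K * G n) := hw.trans (by gcongr)
        set u := h n - h (n+1) with hu'
        have hun : h n = u + h (n+1) := by ring
        have hu0 : 0 ≤ u := by linarith
        have e2 : b * G n * (h n ^ 2 - h (n+1) ^ 2) = b * (u * G n) * (2 * h (n+1) + u) := by
          rw [hun]; ring
        rw [e2] at hd
        have h7 := hh0 (n+1)
        -- multiply by G n
        have h8 : h (n+1) * G n ≤ b * (u * G n) * (2 * (h (n+1) * G n) + u * G n) := by
          calc _ ≤ b * (u * G n) * (2 * h (n+1) + u) * G n := by gcongr
            _ = _ := by ring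
        set y := h (n+1) * G n with hy
        set v := u * G n with hv
        have hv0 : 0 ≤ v := by positivity
        have hy0 : 0 < y := by
          have : 0 < y * K := by
            have : h (n+1) * (K * G n) = y * K := by rw [hy]; ring
            rw [← this]; linarith
          exact pos_of_mul_pos_left this (by linarith)
        have h9 : b * v * (2 * y + v) < b * c * (2 * y + c) := by
          have : b * v < b * c := by gcongr
          calc b * v * (2 * y + v) ≤ b * v * (2 * y + c) := by gcongr
            _ < _ := by gcongr
        have h10 : y < 2 * b * c ^ 2 := by nlinarith
        have h11 : δ ≤ y * K := by
          have : h (n+1) * (K * G n) = y * K := by rw [hy]; ring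
          linarith
        have : y * K < 2 * b * c ^ 2 * K := by gcongr
        linarith
    have hsum := Finset.sum_le_sum (fun i (hi : i ∈ Finset.range n2) => hstep i (Finset.mem_range.1 hi))
    rw [← Finset.mul_sum, Finset.sum_range_sub' (fun i => h (ns + i))] at hsum
    have h3 : h (ns + 0) ≤ √H := Real.sqrt_le_sqrt ((hanti' (Nat.zero_le _)).trans hJ0)
    have := hh0 (ns + n2)
    linarith
  obtain ⟨m0, hm0, hm0N, hm0d⟩ := ph1
  have ph2 : ∀ m, m0 ≤ m → h m * G m < δ ∧ h m * G m ≤ L * l ^ m := by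
    intro m hm
    induction m, hm using Nat.le_induction with
    | base =>
      refine ⟨hm0d, hm0d.le.trans ?_⟩
      calc δ = δ / l ^ N * l ^ N := by field_simp
        _ ≤ δ / l ^ N * l ^ m0 := by
          gcongr ?_ * ?_
          exact pow_le_pow_of_le_one hl0.le hl1.le hm0N
        _ ≤ _ := by gcongr; exact le_max_left _ _
    | succ n hn ih =>
      obtain ⟨ih1, ih2⟩ := ih
      rcases dich n with hd | hd
      · refine ⟨hd.trans_lt (hn1 _ ?_), hd.trans ?_⟩
        · have : n1 ≤ ns := le_max_right _ _
          omega
        · gcongr; exact le_max_right _ _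
      · have hGn := hG n
        have hGn1 := hKG n (le_trans (le_max_left _ _) (hm0.trans hn))
        have hw0 : 0 ≤ h n * G n := mul_nonneg (hh0 _) hGn.le
        have h3 : h (n+1) * G (n+1) ≤ l * (h n * G n) := by
          calc h (n+1) * G (n+1) ≤ (b * G n * (h n ^ 2 - h (n+1) ^ 2)) * G (n+1) := by
                have := hG (n+1); gcongr
            _ ≤ (b * G n * (h n ^ 2)) * (K * G n) := by
                have := sq_nonneg (h (n+1))
                have := (hG (n+1)).le
                gcongr
                linarith
            _ = b * K * (h n * G n) * (h n * G n) := by ring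
            _ ≤ b * K * δ * (h n * G n) := by gcongr
            _ ≤ _ := by gcongr
        refine ⟨?_, ?_⟩
        · nlinarith
        · calc _ ≤ _ := h3
            _ ≤ l * (L * l ^ n) := by gcongr
            _ = _ := by ring
  intro m
  rcases le_or_gt m N with hm | hm
  · calc f m ≤ H := hfH m
      _ = H / l ^ N * l ^ N := by field_simp
      _ ≤ H / l ^ N * l ^ m := by
          gcongr ?_ * ?_
          exact pow_le_pow_of_le_one hl0.le hl1.le hm
      _ ≤ _ := by gcongr; exact le_max_left _ _
  · obtain ⟨n, rfl⟩ : ∃ n, m = n + 1 := ⟨m - 1, by omega⟩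
    obtain ⟨h3, h4⟩ := ph2 n (by omega)
    have hGn := hG n
    have hw0 : 0 ≤ h n * G n := mul_nonneg (hh0 _) hGn.le
    calc f (n+1) ≤ G n * (J n - J (n+1)) := h1 n
      _ ≤ G n * J n := by gcongr; linarith [hJ (n+1)]
      _ = (h n * G n) * (h n * G n) / G n := by rw [← hsq]; field_simp
      _ ≤ δ * (L * l ^ n) / γ := by gcongr; exact hγG n
      _ = (δ / γ * L / l) * l ^ (n+1) := by field_simp; ring
      _ ≤ _ := by gcongr; exact le_max_right _ _

lemma gal_fJ (a d x G r e : ℕ → ℝ) (N : ℕ) (T Φ : ℝ) (X : ℕ → ℝ → ℝ) (hX : Gal a d x N T X)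
    (hT : 0 ≤ T) (hΦ : 0 < Φ) (hd : ∀ n, 0 ≤ d (n+1)) (hG : ∀ n, 0 < G n)
    (ha : ∀ n, |a (n+1)| ≤ Φ * (d (n+1) * G n))
    (he : ∀ n, ∑ i ∈ Finset.Ico n N, x (i+1) ^ 2 ≤ e n)
    (hr : ∀ n, √(2 * e (n+1)) ≤ G n * (r n - r (n+1))) (hr0 : ∀ n, 0 ≤ r n) :
    ∃ f J : ℕ → ℝ, (∀ n, 0 ≤ f n) ∧ (∀ n, 0 ≤ J n) ∧ J 0 ≤ 2 * Φ * e 0 + r 0 ∧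
      (∀ n, f n ≤ √(e 0)) ∧ (∀ n, f (n+1) ≤ G n * (J n - J (n+1))) ∧
      (∀ n, J n ≤ 2 * Φ * f n ^ 2 + r n) ∧ ∀ n, ∀ t ∈ Icc 0 T, |X (n+1) t| ≤ f n := by
  obtain ⟨hXc, hX0, hXN, hXi, hXd⟩ := hX
  set P : ℕ → ℝ → ℝ := fun n t => ∫ s in (0:ℝ)..t, 2 * d n * X n s ^ 2 with hP
  have hPd : ∀ n t, HasDerivAt (P n) (2 * d n * X n t ^ 2) t := by
    intro n t
    have hc : Continuous (fun s => 2 * d n * X n s ^ 2) := by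
      have := hXc n; fun_prop
    exact intervalIntegral.integral_hasDerivAt_right (hc.intervalIntegrable _ _)
      (hc.stronglyMeasurableAtFilter _ _) hc.continuousAt
  have hP0 : ∀ n, P n 0 = 0 := by intro n; simp [hP]
  have hPn : ∀ n t, 0 ≤ t → 0 ≤ P (n+1) t := by
    intro n t ht
    apply intervalIntegral.integral_nonneg ht
    intro s _
    have := hd n
    positivity
  have hPm : ∀ n, ∀ t ∈ Icc 0 T, P (n+1) t ≤ P (n+1) T := by
    intro n t ht
    have := anti_helper (fun t => - P (n+1) t) (fun t => -(2 * d (n+1) * X (n+1) t ^ 2)) T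
      (fun t _ => (hPd (n+1) t).neg.hasDerivWithinAt)
      (fun t _ => by have := hd n; have := sq_nonneg (X (n+1) t); simp only [neg_nonpos]; positivity)
    have := this ht ⟨hT, le_rfl⟩ ht.2
    simpa using this
  set W : ℕ → ℝ → ℝ := fun n t => ∑ i ∈ Finset.Ico n N, (X (i+1) t ^ 2 + P (i+1) t) with hW
  have hWd : ∀ n, n ≤ N → ∀ t ∈ Icc 0 T,
      HasDerivWithinAt (W n) (2 * (a n * X n t ^ 2 * X (n+1) t)) (Icc 0 T) t := by
    intro n hn t ht
    have h1 : HasDerivWithinAt (W n) (∑ i ∈ Finset.Ico n N,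
        (2 * X (i+1) t * rh a d (fun m => X m t) i + 2 * d (i+1) * X (i+1) t ^ 2)) (Icc 0 T) t := by
      apply HasDerivWithinAt.fun_sum
      intro i hi
      have hi := (Finset.mem_Ico.1 hi).2
      have := ((hXd i hi t ht).fun_pow 2).fun_add (hPd (i+1) t).hasDerivWithinAt
      simpa using this
    convert h1 using 1
    have h2 := tele a d (fun m => X m t) n N hn
    simp only [hXN (N+1) (Nat.lt_succ_self N) t] at h2
    have h3 : ∑ i ∈ Finset.Ico n N,
        (2 * X (i+1) t * rh a d (fun m => X m t) i + 2 * d (i+1) * X (i+1) t ^ 2)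
        = 2 * ∑ i ∈ Finset.Ico n N, X (i+1) t * rh a d (fun m => X m t) i
          + 2 * ∑ i ∈ Finset.Ico n N, d (i+1) * X (i+1) t ^ 2 := by
      rw [Finset.mul_sum, Finset.mul_sum, ← Finset.sum_add_distrib]
      refine Finset.sum_congr rfl fun i _ => ?_
      ring
    rw [h3, h2]; ring
  have hWc : ∀ n, Continuous (W n) := by
    intro n
    apply continuous_finsetSum
    intro i _
    have h1 := hXc (i+1)
    have h2 : Continuous (P (i+1)) := continuous_iff_continuousAt.2 fun t => (hPd (i+1) t).continuousAt
    fun_prop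
  have hW0 : ∀ n, W n 0 ≤ e n := by
    intro n
    refine le_trans (le_of_eq ?_) (he n)
    refine Finset.sum_congr rfl fun i hi => ?_
    rw [hXi i (Finset.mem_Ico.1 hi).2, hP0, add_zero]
  have hterm : ∀ i t, 0 ≤ t → 0 ≤ X (i+1) t ^ 2 + P (i+1) t := fun i t ht =>
    add_nonneg (sq_nonneg _) (hPn i t ht)
  have hWn : ∀ n t, 0 ≤ t → 0 ≤ W n t := fun n t ht => Finset.sum_nonneg fun i _ => hterm i t ht
  have hWe : ∀ n, ∀ t ∈ Icc 0 T, W n t ≤ e 0 := by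
    intro n t ht
    have h1 : W n t ≤ W 0 t := by
      apply Finset.sum_le_sum_of_subset_of_nonneg
      · exact Finset.Ico_subset_Ico_left (Nat.zero_le _)
      · intro i _ _; exact hterm i t ht.1
    have h2 := anti_helper (W 0) _ T (hWd 0 (Nat.zero_le _)) (fun t _ => by simp [hX0])
    exact h1.trans ((h2 ⟨le_rfl, hT⟩ ht ht.1).trans (hW0 0))
  have hmax : ∀ n, ∃ s ∈ Icc 0 T, ∀ t ∈ Icc 0 T, W n t ≤ W n s := by
    intro n
    obtain ⟨s, hs, h⟩ := isCompact_Icc.exists_isMaxOn (nonempty_Icc.2 hT) (hWc n).continuousOn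
    exact ⟨s, hs, fun t ht => h ht⟩
  choose σ hσ hσm using hmax
  have hFn : ∀ n, 0 ≤ W n (σ n) := fun n => hWn n _ (hσ n).1
  set I : ℕ → ℝ := fun n => ∑ i ∈ Finset.Ico n N, P (i+1) T with hI
  have hIn : ∀ n, 0 ≤ I n := fun n => Finset.sum_nonneg fun i _ => hPn i T hT
  have hIW : ∀ n, I n ≤ W n T := by
    intro n
    apply Finset.sum_le_sum
    intro i _
    have := sq_nonneg (X (i+1) T)
    linarith
  have hIF : ∀ n, I n ≤ W n (σ n) := fun n => (hIW n).trans (hσm n T ⟨hT, le_rfl⟩)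
  set f : ℕ → ℝ := fun n => √(W n (σ n)) with hf
  have hf0 : ∀ n, 0 ≤ f n := fun n => Real.sqrt_nonneg _
  have hfsq : ∀ n, f n ^ 2 = W n (σ n) := fun n => Real.sq_sqrt (hFn n)
  have hXf : ∀ n, ∀ t ∈ Icc 0 T, |X (n+1) t| ≤ f n := by
    intro n t ht
    rcases lt_or_ge n N with hn | hn
    · apply Real.abs_le_sqrt
      refine le_trans ?_ (hσm n t ht)
      have h1 : X (n+1) t ^ 2 + P (n+1) t ≤ W n t :=
        Finset.single_le_sum (f := fun i => X (i+1) t ^ 2 + P (i+1) t)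
          (fun i _ => hterm i t ht.1) (Finset.mem_Ico.2 ⟨le_rfl, hn⟩)
      have := hPn n t ht.1
      linarith
    · rw [hXN (n+1) (by omega)]; simpa using hf0 n
  refine ⟨f, fun n => 2 * Φ * I n + r n, hf0, ?_, ?_, ?_, ?_, ?_, hXf⟩
  · intro n
    have := hIn n
    have := hr0 n
    positivity
  · have : I 0 ≤ e 0 := (hIW 0).trans (hWe 0 T ⟨hT, le_rfl⟩)
    simp only
    gcongr
  · intro n
    exact Real.sqrt_le_sqrt (hWe n _ (hσ n))
  · intro n
    simp only
    rcases lt_or_ge n N with hn | hn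
    · have hII : I n = P (n+1) T + I (n+1) := Finset.sum_eq_sum_Ico_succ_bot hn _
      set c := Φ * G n * P (n+1) T with hc
      have hc0 : 0 ≤ c := by
        have := hG n
        have := hPn n T hT
        positivity
      have key : W (n+1) (σ (n+1)) ≤ e (n+1) + c * f (n+1) := by
        have h2 := anti_helper (fun t => W (n+1) t - Φ * G n * f (n+1) * P (n+1) t) _ T
          (fun t ht => (hWd (n+1) hn t ht).fun_sub
            ((hPd (n+1) t).hasDerivWithinAt.const_mul (Φ * G n * f (n+1)))) ?_
        · have h3 := h2 ⟨le_rfl, hT⟩ (hσ (n+1)) (hσ (n+1)).1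
          simp only [hP0] at h3
          have h4 := hW0 (n+1)
          have h5 : Φ * G n * f (n+1) * P (n+1) (σ (n+1)) ≤ Φ * G n * f (n+1) * P (n+1) T := by
            have := hG n
            have := hf0 (n+1)
            gcongr
            exact hPm n _ (hσ (n+1))
          rw [hc]; nlinarith
        · intro t ht
          have h3 := hXf (n+1) t ht
          have h4 : a (n+1) * X (n+1) t ^ 2 * X (n+1+1) t ≤
              Φ * (d (n+1) * G n) * X (n+1) t ^ 2 * f (n+1) := by
            refine (le_abs_self _).trans ?_
            rw [abs_mul, abs_mul, abs_of_nonneg (sq_nonneg (X (n+1) t))]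
            have := (abs_nonneg _).trans (ha n)
            gcongr
            exact ha n
          nlinarith
      have h3 : f (n+1) ≤ √(2 * e (n+1)) + 2 * c := by
        by_contra! hcon
        have h4 := Real.sqrt_nonneg (2 * e (n+1))
        have h5 : 2 * e (n+1) < f (n+1) ^ 2 := by
          have : √(2 * e (n+1)) < f (n+1) := by linarith
          exact (Real.sqrt_lt' (by linarith)).1 this
        have h6 : 2 * c ≤ f (n+1) := by linarith
        rw [← hfsq] at key
        nlinarith
      have := hr n
      calc f (n+1) ≤ _ := h3
        _ ≤ G n * (r n - r (n+1)) + 2 * c := by linarith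
        _ = _ := by rw [hII, hc]; ring
    · have h1 : f (n+1) = 0 := by
        simp only [hf, hW]
        rw [Finset.Ico_eq_empty (by omega)]; simp
      have h2 : I n = 0 := by
        simp only [hI]
        rw [Finset.Ico_eq_empty (by omega)]; simp
      have h3 : I (n+1) = 0 := by
        simp only [hI]
        rw [Finset.Ico_eq_empty (by omega)]; simp
      rw [h1, h2, h3]
      have := (Real.sqrt_nonneg _).trans (hr n)
      linarith
  · intro n
    rw [hfsq]
    have := hIF n
    simp only
    gcongr

lemma gal_bound (a d x g : ℕ → ℝ) (κ Φ : ℝ) (hκ : 1 < κ) (hΦ : 0 < Φ)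
    (hg : ∀ n, 0 < g (n+1)) (hdg : ∀ n, d (n+1) = κ ^ (n+1) / g (n+1))
    (ha : ∀ n, |a n| ≤ Φ * κ ^ n) (γ : ℝ) (hγ : 0 < γ) (hγG : ∀ n, γ ≤ g (n+1))
    (n0 : ℕ) (hKG : ∀ n, n0 ≤ n → g (n+1+1) ≤ κ * g (n+1))
    (hdiv : ¬ Summable fun n => (g (n+1))⁻¹)
    (hx : ∀ l : ℝ, 0 < l → l < 1 → ∃ C : ℝ, 0 ≤ C ∧ ∀ n, |x (n+1)| ≤ C * l ^ n)
    (l : ℝ) (hl0 : 0 < l) (hl1 : l < 1) :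
    ∃ C : ℝ, 0 ≤ C ∧ ∀ N T X, 0 ≤ T → Gal a d x N T X → ∀ n, ∀ t ∈ Icc 0 T, |X n t| ≤ C * l ^ n := by
  set G : ℕ → ℝ := fun n => g (n+1) with hGdef
  have hκ0 : 0 < κ := by linarith
  set ν := l / κ with hν
  have hν0 : 0 < ν := by positivity
  have hν1 : ν < 1 := by rw [hν, div_lt_one hκ0]; linarith
  set μ := ν ^ 2 with hμ
  have hμ0 : 0 < μ := by positivity
  have hμ1 : μ < 1 := by rw [hμ]; nlinarith
  have hμ2 : μ ^ 2 < 1 := by nlinarith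
  obtain ⟨Cx, hCx0, hCx⟩ := hx μ hμ0 hμ1
  set S := √(2 * (Cx ^ 2 / (1 - μ ^ 2))) with hS
  have hS0 : 0 ≤ S := Real.sqrt_nonneg _
  set B0 := S / (γ * (1 - μ)) with hB0
  have h1μ : 0 < 1 - μ := by linarith
  have h1μ2 : 0 < 1 - μ ^ 2 := by linarith
  have hB00 : 0 ≤ B0 := by positivity
  set e : ℕ → ℝ := fun n => Cx ^ 2 / (1 - μ ^ 2) * (μ ^ n) ^ 2 with he
  set r : ℕ → ℝ := fun n => B0 * μ ^ n with hr
  obtain ⟨Cg, hCg0, hCg⟩ : ∃ Cg : ℝ, 0 ≤ Cg ∧ ∀ n, G n ≤ Cg * κ ^ n := by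
    refine ⟨∑ i ∈ Finset.range (n0+1), G i, Finset.sum_nonneg fun i _ => (hg i).le, ?_⟩
    have hs0 : 0 ≤ ∑ i ∈ Finset.range (n0+1), G i := Finset.sum_nonneg fun i _ => (hg i).le
    intro n
    rcases le_total n n0 with hn | hn
    · calc G n ≤ ∑ i ∈ Finset.range (n0+1), G i :=
          Finset.single_le_sum (f := G) (fun i _ => (hg i).le) (Finset.mem_range.2 (by omega))
        _ ≤ _ := le_mul_of_one_le_right hs0 (one_le_pow₀ hκ.le)
    · induction n, hn using Nat.le_induction with
      | base =>
        calc G n0 ≤ ∑ i ∈ Finset.range (n0+1), G i :=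
            Finset.single_le_sum (f := G) (fun i _ => (hg i).le) (Finset.mem_range.2 (by omega))
          _ ≤ _ := le_mul_of_one_le_right hs0 (one_le_pow₀ hκ.le)
      | succ n hn ih =>
        calc G (n+1) ≤ κ * G n := hKG n hn
          _ ≤ κ * ((∑ i ∈ Finset.range (n0+1), G i) * κ ^ n) := by gcongr
          _ = _ := by ring
  have he0 : 0 ≤ e 0 := by simp only [he]; positivity
  set H := max (2 * (Φ) * e 0 + r 0) (√(e 0)) with hH
  obtain ⟨C, hC⟩ := seq_bound G hg γ hγ hγG κ hκ.le n0 hKG hdiv (2 * Φ) (by positivity) H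
    (le_max_of_le_right (Real.sqrt_nonneg _)) l hl0 hl1 r (√(2 * B0) * Cg) (by positivity) (by
      intro n
      have h1 : √(2 * r n) = √(2 * B0) * ν ^ n := by
        have : 2 * r n = 2 * B0 * (ν ^ n) ^ 2 := by simp only [hr, hμ]; ring
        rw [this, Real.sqrt_mul (by positivity), Real.sqrt_sq (by positivity)]
      rw [h1]
      calc √(2 * B0) * ν ^ n * G n ≤ √(2 * B0) * ν ^ n * (Cg * κ ^ n) := by gcongr; exact hCg n
        _ = √(2 * B0) * Cg * (ν * κ) ^ n := by rw [mul_pow]; ring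
        _ = _ := by rw [hν, div_mul_cancel₀ _ hκ0.ne'])
  refine ⟨max C 0 / l, by positivity, ?_⟩
  intro N T X hT hX n t ht
  obtain ⟨f, J, hf0, hJ0, hJH, hfH, h1, h2, h3⟩ := gal_fJ a d x G r e N T Φ X hX hT hΦ
    (fun n => by rw [hdg]; have := hg n; positivity) hg
    (fun n => by
      rw [hdg, div_mul_cancel₀ _ (hg n).ne']; exact ha (n+1))
    (fun n => by
      calc ∑ i ∈ Finset.Ico n N, x (i+1) ^ 2 ≤ ∑ i ∈ Finset.Ico n N, Cx ^ 2 * (μ ^ 2) ^ i := by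
            apply Finset.sum_le_sum
            intro i _
            rw [← sq_abs]
            calc |x (i+1)| ^ 2 ≤ (Cx * μ ^ i) ^ 2 := by gcongr; exact hCx i
              _ = _ := by ring
        _ ≤ Cx ^ 2 * ((μ ^ 2) ^ n / (1 - μ ^ 2)) := by
            rw [← Finset.mul_sum]
            gcongr
            exact geom_sum_Ico_le_of_lt_one (by positivity) hμ2
        _ = e n := by simp only [he]; ring)
    (fun n => by
      have h1 : √(2 * e (n+1)) = S * μ ^ (n+1) := by
        have : 2 * e (n+1) = (2 * (Cx ^ 2 / (1 - μ ^ 2))) * (μ ^ (n+1)) ^ 2 := by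
          simp only [he]; ring
        rw [this, Real.sqrt_mul (by positivity), Real.sqrt_sq (by positivity)]
      rw [h1]
      calc S * μ ^ (n+1) ≤ S * μ ^ n := by
            exact mul_le_mul_of_nonneg_left (pow_le_pow_of_le_one hμ0.le hμ1.le (Nat.le_succ n)) hS0
        _ = γ * (r n - r (n+1)) := by
            simp only [hr, hB0]; field_simp; ring
        _ ≤ _ := by
            have : 0 ≤ r n - r (n+1) := by
              have : r n - r (n+1) = B0 * μ ^ n * (1 - μ) := by simp only [hr]; ring
              rw [this]; positivity
            gcongr
            exact hγG n)
    (fun n => by simp only [hr]; positivity)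
  have h4 := hC f J hf0 hJ0 (hJH.trans (le_max_left _ _)) (fun n => (hfH n).trans (le_max_right _ _)) h1 h2
  rcases n with _ | n
  · rw [hX.2.1]; simp only [abs_zero]; positivity
  · calc |X (n+1) t| ≤ f n := h3 n t ht
      _ ≤ C * l ^ n := h4 n
      _ ≤ max C 0 * l ^ n := by gcongr; exact le_max_left _ _
      _ = _ := by field_simp; ring

lemma cmp_alg (a d X Y : ℕ → ℝ) (hX : X 0 = 0) (hY : Y 0 = 0) (N : ℕ) :
    ∑ i ∈ Finset.range N, (X (i+1) - Y (i+1)) * (rh a d X i - rh a d Y i) =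
    ∑ i ∈ Finset.range N, (a i * X i * (X i - Y i) * (X (i+1) - Y (i+1))
      - a (i+1) * X (i+1+1) * (X (i+1) - Y (i+1)) ^ 2 - d (i+1) * (X (i+1) - Y (i+1)) ^ 2)
      - a N * Y N * (X N - Y N) * (X (N+1) - Y (N+1)) := by
  induction N with
  | zero => simp [hX, hY]
  | succ N ih =>
    rw [Finset.sum_range_succ, Finset.sum_range_succ, ih]
    unfold rh; ring

lemma dy_cmp (a d : ℕ → ℝ) (hd : ∀ n, 0 ≤ d (n+1)) (N : ℕ) (T : ℝ) (hT : 0 ≤ T) (X Y : ℕ → ℝ → ℝ)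
    (hX0 : ∀ t, X 0 t = 0) (hY0 : ∀ t, Y 0 t = 0)
    (hXd : ∀ n, n < N → ∀ t ∈ Icc 0 T,
      HasDerivWithinAt (X (n+1)) (rh a d (fun m => X m t) n) (Icc 0 T) t)
    (hYd : ∀ n, n < N → ∀ t ∈ Icc 0 T,
      HasDerivWithinAt (Y (n+1)) (rh a d (fun m => Y m t) n) (Icc 0 T) t)
    (hXY : ∀ n, n < N → X (n+1) 0 = Y (n+1) 0) (M : ℝ) (hM : 0 ≤ M)
    (hM1 : ∀ n, ∀ t ∈ Icc 0 T, |a n * X n t| ≤ M)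
    (hM2 : ∀ n, ∀ t ∈ Icc 0 T, |a n * X (n+1) t| ≤ M)
    (Q q : ℝ → ℝ) (hQ : ∀ t ∈ Icc 0 T, HasDerivWithinAt Q (q t) (Icc 0 T) t) (hQ0 : Q 0 = 0)
    (hq : ∀ t ∈ Icc 0 T,
      2 * |a N * Y N t * (X N t - Y N t) * (X (N+1) t - Y (N+1) t)| ≤ q t) :
    ∀ t ∈ Icc 0 T, ∑ i ∈ Finset.range N, (X (i+1) t - Y (i+1) t) ^ 2 ≤ Real.exp (4 * M * t) * Q t := by
  set E : ℝ → ℝ := fun t => ∑ i ∈ Finset.range N, (X (i+1) t - Y (i+1) t) ^ 2 with hE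
  set E' : ℝ → ℝ := fun t => 2 * ∑ i ∈ Finset.range N, (X (i+1) t - Y (i+1) t) *
    (rh a d (fun m => X m t) i - rh a d (fun m => Y m t) i) with hE'
  have hEd : ∀ t ∈ Icc 0 T, HasDerivWithinAt E (E' t) (Icc 0 T) t := by
    intro t ht
    simp only [hE', Finset.mul_sum]
    apply HasDerivWithinAt.fun_sum
    intro i hi
    have hi := Finset.mem_range.1 hi
    have := ((hXd i hi t ht).fun_sub (hYd i hi t ht)).fun_pow 2
    simpa [mul_assoc] using this
  have hEb : ∀ t ∈ Icc 0 T, E' t ≤ 4 * M * E t + q t := by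
    intro t ht
    have h1 := cmp_alg a d (fun m => X m t) (fun m => Y m t) (hX0 t) (hY0 t) N
    simp only [hE']
    rw [h1]
    have h2 := (neg_abs_le (a N * Y N t * (X N t - Y N t) * (X (N+1) t - Y (N+1) t)))
    have h3 := hq t ht
    have h4 : ∑ i ∈ Finset.range N, (a i * X i t * (X i t - Y i t) * (X (i+1) t - Y (i+1) t)
      - a (i+1) * X (i+1+1) t * (X (i+1) t - Y (i+1) t) ^ 2 - d (i+1) * (X (i+1) t - Y (i+1) t) ^ 2)
      ≤ ∑ i ∈ Finset.range N, (M / 2 * (X i t - Y i t) ^ 2 + 3 * M / 2 * (X (i+1) t - Y (i+1) t) ^ 2) := by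
      apply Finset.sum_le_sum
      intro i _
      have h5 := hM1 i t ht
      have h6 := hM2 (i+1) t ht
      have h7 := mul_nonneg (hd i) (sq_nonneg (X (i+1) t - Y (i+1) t))
      generalize X i t - Y i t = z at *
      generalize X (i+1) t - Y (i+1) t = w at *
      generalize a i * X i t = p at *
      generalize a (i+1) * X (i+1+1) t = p' at *
      have h8 : p * z * w ≤ M * (z ^ 2 + w ^ 2) / 2 := by
        calc p * z * w ≤ |p * (z * w)| := by rw [mul_assoc]; exact le_abs_self _
          _ = |p| * |z * w| := abs_mul _ _
          _ ≤ M * ((z ^ 2 + w ^ 2) / 2) := by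
            gcongr
            rw [abs_le]
            constructor <;> nlinarith [sq_nonneg (z+w), sq_nonneg (z-w)]
          _ = _ := by ring
      have h9 : - (p' * w ^ 2) ≤ M * w ^ 2 := by
        have := (abs_le.1 h6).1
        nlinarith [sq_nonneg w]
      linarith
    have h5 : ∑ i ∈ Finset.range N, (X i t - Y i t) ^ 2 ≤ E t := by
      have e1 := Finset.sum_range_succ (fun i => (X i t - Y i t) ^ 2) N
      have e2 := Finset.sum_range_succ' (fun i => (X i t - Y i t) ^ 2) N
      simp only [hX0, hY0] at e2
      have := sq_nonneg (X N t - Y N t)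
      simp only [hE]
      linarith
    rw [Finset.sum_add_distrib, ← Finset.mul_sum, ← Finset.mul_sum] at h4
    have h6 : M / 2 * ∑ i ∈ Finset.range N, (X i t - Y i t) ^ 2 ≤ M / 2 * E t := by gcongr
    have h7 : ∑ i ∈ Finset.range N, (X (i+1) t - Y (i+1) t) ^ 2 = E t := rfl
    rw [h7] at h4
    linarith
  have hanti := anti_helper (fun t => Real.exp (-(4 * M * t)) * E t - Q t)
    (fun t => (Real.exp (-(4 * M * t)) * (-(4 * M)) * E t + Real.exp (-(4 * M * t)) * E' t) - q t) T
    (fun t ht => by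
      have h1 : HasDerivAt (fun t => -(4 * M * t)) (-(4 * M)) t := by
        simpa using ((hasDerivAt_id t).const_mul (4 * M)).fun_neg
      exact (h1.exp.hasDerivWithinAt.fun_mul (hEd t ht)).fun_sub (hQ t ht))
    (fun t ht => by
      have h1 := hEb t ht
      have h2 : 0 ≤ q t := le_trans (by positivity) (hq t ht)
      have h3 : Real.exp (-(4 * M * t)) ≤ 1 := by
        rw [Real.exp_le_one_iff]
        have := mul_nonneg hM ht.1
        linarith
      have h4 := Real.exp_pos (-(4 * M * t))
      nlinarith)
  intro t ht
  have h1 := hanti ⟨le_rfl, hT⟩ ht ht.1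
  have h2 : E 0 = 0 := by
    apply Finset.sum_eq_zero
    intro i hi
    rw [hXY i (Finset.mem_range.1 hi)]; simp
  simp only [h2, hQ0, mul_zero, sub_zero] at h1
  have h3 : E t = Real.exp (4 * M * t) * (Real.exp (-(4 * M * t)) * E t) := by
    rw [← mul_assoc, ← Real.exp_add]; simp
  change E t ≤ _
  rw [h3]
  gcongr
  linarith

lemma rh_bound (a d y : ℕ → ℝ) (C : ℝ) (hC : 0 ≤ C) (hy : ∀ n, |y n| ≤ C) (n : ℕ) :
    |rh a d y n| ≤ |a n| * C ^ 2 + |a (n+1)| * C * C + |d (n+1)| * C := by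
  unfold rh
  have h1 : |a n * y n ^ 2| ≤ |a n| * C ^ 2 := by
    rw [abs_mul, abs_pow]; gcongr; exact hy n
  have h2 : |a (n+1) * y (n+1) * y (n+2)| ≤ |a (n+1)| * C * C := by
    rw [abs_mul, abs_mul]; gcongr
    · exact hy _
    · exact hy _
  have h3 : |d (n+1) * y (n+1)| ≤ |d (n+1)| * C := by
    rw [abs_mul]; gcongr; exact hy _
  have h4 := abs_sub (a n * y n ^ 2 - a (n+1) * y (n+1) * y (n+2)) (d (n+1) * y (n+1))
  have h5 := abs_sub (a n * y n ^ 2) (a (n+1) * y (n+1) * y (n+2))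
  linarith

lemma limit_exists (a d x : ℕ → ℝ) (κ Φ : ℝ) (hκ : 1 < κ) (hΦ : 0 < Φ)
    (ha : ∀ n, |a n| ≤ Φ * κ ^ n) (hd : ∀ n, 0 ≤ d (n+1))
    (hbd : ∀ l : ℝ, 0 < l → l < 1 → ∃ C : ℝ, 0 ≤ C ∧ ∀ N T X, 0 ≤ T → Gal a d x N T X →
      ∀ n, ∀ t ∈ Icc 0 T, |X n t| ≤ C * l ^ n) :
    ∃ X : ℕ → ℝ → ℝ, (∀ n, Continuous (X n)) ∧ (∀ t, X 0 t = 0) ∧ (∀ n, X (n+1) 0 = x (n+1)) ∧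
      (∀ n t, 0 ≤ t → HasDerivWithinAt (X (n+1)) (rh a d (fun m => X m t) n) (Ici 0) t) ∧
      (∀ l : ℝ, 0 < l → l < 1 → ∃ C : ℝ, 0 ≤ C ∧ ∀ n t, 0 ≤ t → |X n t| ≤ C * l ^ n) := by
  have hκ0 : 0 < κ := by linarith
  have hU : ∀ N : ℕ, ∃ X, Gal a d x N N X := fun N => gal_exists a d x hd N N (Nat.cast_nonneg N)
  choose U hU using hU
  set l0 := κ⁻¹ with hl0
  have hl00 : 0 < l0 := by positivity
  have hl01 : l0 < 1 := inv_lt_one_of_one_lt₀ hκ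
  obtain ⟨C0, hC00, hC0⟩ := hbd l0 hl00 hl01
  have hB : ∀ (N n : ℕ), ∀ t ∈ Icc 0 (N:ℝ), |U N n t| ≤ C0 * l0 ^ n := fun N n t ht =>
    hC0 N N (U N) (Nat.cast_nonneg N) (hU N) n t ht
  have hB1 : ∀ (N n : ℕ), ∀ t ∈ Icc 0 (N:ℝ), |U N n t| ≤ C0 := fun N n t ht =>
    (hB N n t ht).trans (mul_le_of_le_one_right hC00 (pow_le_one₀ hl00.le hl01.le))
  have hak : ∀ n, |a n| * l0 ^ n ≤ Φ := by
    intro n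
    calc |a n| * l0 ^ n ≤ Φ * κ ^ n * l0 ^ n := by gcongr; exact ha n
      _ = Φ := by rw [mul_assoc, ← mul_pow, hl0, mul_inv_cancel₀ hκ0.ne']; simp
  set M := Φ * C0 with hM
  have hM0 : 0 ≤ M := by positivity
  have hM1 : ∀ (N n : ℕ), ∀ t ∈ Icc 0 (N:ℝ), |a n * U N n t| ≤ M := by
    intro N n t ht
    rw [abs_mul]
    calc |a n| * |U N n t| ≤ |a n| * (C0 * l0 ^ n) := by gcongr; exact hB N n t ht
      _ = (|a n| * l0 ^ n) * C0 := by ring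
      _ ≤ _ := mul_le_mul_of_nonneg_right (hak n) hC00
  have hM2 : ∀ (N n : ℕ), ∀ t ∈ Icc 0 (N:ℝ), |a n * U N (n+1) t| ≤ M := by
    intro N n t ht
    rw [abs_mul]
    have h1 : |U N (n+1) t| ≤ C0 * l0 ^ n := (hB N (n+1) t ht).trans (by
      exact mul_le_mul_of_nonneg_left (pow_le_pow_of_le_one hl00.le hl01.le (Nat.le_succ n)) hC00)
    calc |a n| * |U N (n+1) t| ≤ |a n| * (C0 * l0 ^ n) := by gcongr
      _ = (|a n| * l0 ^ n) * C0 := by ring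
      _ ≤ _ := mul_le_mul_of_nonneg_right (hak n) hC00
  set δ : ℕ → ℝ := fun N => 8 * Φ * C0 ^ 3 * l0 ^ N with hδ
  have hclose : ∀ N N' : ℕ, N ≤ N' → ∀ n, n < N → ∀ t ∈ Icc 0 (N:ℝ),
      (U N (n+1) t - U N' (n+1) t) ^ 2 ≤ Real.exp (4 * M * t) * (δ N * t) := by
    intro N N' hNN n hn t ht
    have hsub : Icc 0 (N:ℝ) ⊆ Icc 0 (N':ℝ) := Icc_subset_Icc_right (by exact_mod_cast hNN)
    have h1 := dy_cmp a d hd N N (Nat.cast_nonneg N) (U N) (U N') (hU N).2.1 (hU N').2.1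
      (hU N).2.2.2.2
      (fun n hn t ht => ((hU N').2.2.2.2 n (by omega) t (hsub ht)).mono hsub)
      (fun n hn => by rw [(hU N).2.2.2.1 n hn, (hU N').2.2.2.1 n (by omega)])
      M hM0 (hM1 N) (hM2 N) (fun t => δ N * t) (fun _ => δ N)
      (fun t _ => by simpa using ((hasDerivAt_id t).const_mul (δ N)).hasDerivWithinAt)
      (by simp)
      (fun t ht => by
        rw [abs_mul, abs_mul, abs_mul]
        have e1 : |U N N t - U N' N t| ≤ 2 * C0 := by
          have := abs_sub (U N N t) (U N' N t)
          have := hB1 N N t ht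
          have := hB1 N' N t (hsub ht)
          linarith
        have e2 : |U N (N+1) t - U N' (N+1) t| ≤ 2 * (C0 * l0 ^ N) := by
          have := abs_sub (U N (N+1) t) (U N' (N+1) t)
          have := hB N (N+1) t ht
          have := hB N' (N+1) t (hsub ht)
          have : C0 * l0 ^ (N+1) ≤ C0 * l0 ^ N :=
            mul_le_mul_of_nonneg_left (pow_le_pow_of_le_one hl00.le hl01.le (Nat.le_succ N)) hC00
          linarith
        calc 2 * (|a N| * |U N' N t| * |U N N t - U N' N t| * |U N (N+1) t - U N' (N+1) t|)
            ≤ 2 * (|a N| * (C0 * l0 ^ N) * (2 * C0) * (2 * (C0 * l0 ^ N))) := by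
              gcongr
              exact hB N' N t (hsub ht)
          _ = (|a N| * l0 ^ N) * (8 * C0 ^ 3 * l0 ^ N) := by ring
          _ ≤ Φ * (8 * C0 ^ 3 * l0 ^ N) := by gcongr; exact hak N
          _ = δ N := by simp only [hδ]; ring)
      t ht
    exact (Finset.single_le_sum (f := fun i => (U N (i+1) t - U N' (i+1) t) ^ 2)
      (fun i _ => sq_nonneg _) (Finset.mem_range.2 hn)).trans h1
  have hlim : ∀ n t, 0 ≤ t → ∃ L, Tendsto (fun N => U N n t) atTop (𝓝 L) := by
    intro n t ht
    rcases n with _ | n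
    · exact ⟨0, by simp only [fun N => (hU N).2.1 t]; exact tendsto_const_nhds⟩
    apply cauchySeq_tendsto_of_complete
    rw [Metric.cauchySeq_iff']
    intro ε hε
    have hz : Tendsto (fun N => Real.exp (4 * M * t) * (δ N * t)) atTop (𝓝 0) := by
      have h1 := (tendsto_pow_atTop_nhds_zero_of_lt_one hl00.le hl01).const_mul
        (Real.exp (4 * M * t) * (8 * Φ * C0 ^ 3) * t)
      rw [mul_zero] at h1
      refine h1.congr fun N => ?_
      simp only [hδ]; ring
    obtain ⟨N, h1, h2, h3⟩ := ((hz.eventually (gt_mem_nhds (show 0 < ε ^ 2 by positivity))).and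
      ((eventually_gt_atTop n).and (eventually_ge_atTop ⌈t⌉₊))).exists
    refine ⟨N, fun N' hN' => ?_⟩
    have h4 := hclose N N' hN' n h2 t ⟨ht, Nat.ceil_le.1 h3⟩
    rw [dist_comm, Real.dist_eq]
    exact abs_lt_of_sq_lt_sq (h4.trans_lt h1) hε.le
  have hlim' : ∀ n t, ∃ L, Tendsto (fun N => U N n (max t 0)) atTop (𝓝 L) :=
    fun n t => hlim n _ (le_max_right _ _)
  choose X hX using hlim'
  have hXt : ∀ n t, 0 ≤ t → Tendsto (fun N => U N n t) atTop (𝓝 (X n t)) := by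
    intro n t ht
    have := hX n t
    rwa [max_eq_left ht] at this
  have hXmax : ∀ n t, X n t = X n (max t 0) := by
    intro n t
    exact tendsto_nhds_unique (hX n t) (hXt n _ (le_max_right _ _))
  set Lp : ℕ → ℝ := fun n => |a n| * C0 ^ 2 + |a (n+1)| * C0 * C0 + |d (n+1)| * C0 with hLp
  have hrb : ∀ (N n : ℕ), ∀ t ∈ Icc 0 (N:ℝ), |rh a d (fun m => U N m t) n| ≤ Lp n := fun N n t ht =>
    rh_bound a d _ C0 hC00 (fun m => hB1 N m t ht) n
  have hX0 : ∀ t, X 0 t = 0 := by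
    intro t
    refine tendsto_nhds_unique (hX 0 t) ?_
    simp only [fun N => (hU N).2.1]
    exact tendsto_const_nhds
  have hXc : ∀ n, Continuous (X n) := by
    intro n
    rcases n with _ | n
    · have : X 0 = fun _ => 0 := funext hX0
      rw [this]; exact continuous_const
    have hLip : ∀ s t, 0 ≤ s → 0 ≤ t → |X (n+1) t - X (n+1) s| ≤ Lp n * |t - s| := by
      intro s t hs ht
      refine le_of_tendsto (((hXt (n+1) t ht).sub (hXt (n+1) s hs)).abs) ?_
      filter_upwards [eventually_gt_atTop n, eventually_ge_atTop ⌈t⌉₊, eventually_ge_atTop ⌈s⌉₊]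
        with N h1 h2 h3
      exact Convex.norm_image_sub_le_of_norm_hasDerivWithin_le (𝕜 := ℝ)
        (fun r hr => (hU N).2.2.2.2 n h1 r hr) (fun r hr => hrb N n r hr) (convex_Icc _ _)
        ⟨hs, Nat.ceil_le.1 h3⟩ ⟨ht, Nat.ceil_le.1 h2⟩
    have hLp0 : 0 ≤ Lp n := by simp only [hLp]; positivity
    have : LipschitzWith ⟨Lp n, hLp0⟩ (X (n+1)) := by
      apply LipschitzWith.of_dist_le_mul
      intro t s
      rw [Real.dist_eq, Real.dist_eq, hXmax _ t, hXmax _ s]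
      refine (hLip _ _ (le_max_right _ _) (le_max_right _ _)).trans ?_
      change Lp n * _ ≤ Lp n * _
      exact mul_le_mul_of_nonneg_left (abs_max_sub_max_le_abs _ _ _) hLp0
    exact this.continuous
  have hrc : ∀ n, Continuous (fun s => rh a d (fun m => X m s) n) := by
    intro n
    unfold rh
    have h0 := hXc n
    have h1 := hXc (n+1)
    have h2 := hXc (n+2)
    fun_prop
  have hUrc : ∀ N n, Continuous (fun s => rh a d (fun m => U N m s) n) := by
    intro N n
    unfold rh
    have h0 := (hU N).1 n
    have h1 := (hU N).1 (n+1)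
    have h2 := (hU N).1 (n+2)
    fun_prop
  have hint : ∀ n t, 0 ≤ t → X (n+1) t = x (n+1) + ∫ s in (0:ℝ)..t, rh a d (fun m => X m s) n := by
    intro n t ht
    refine tendsto_nhds_unique (hXt (n+1) t ht) ?_
    have h1 : Tendsto (fun N => ∫ s in (0:ℝ)..t, rh a d (fun m => U N m s) n) atTop
        (𝓝 (∫ s in (0:ℝ)..t, rh a d (fun m => X m s) n)) := by
      apply intervalIntegral.tendsto_integral_filter_of_dominated_convergence (fun _ => Lp n)
      · exact Eventually.of_forall fun N => (hUrc N n).aestronglyMeasurable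
      · filter_upwards [eventually_ge_atTop ⌈t⌉₊] with N hN
        refine Eventually.of_forall fun s hs => ?_
        rw [uIoc_of_le ht] at hs
        exact hrb N n s ⟨hs.1.le, hs.2.trans (Nat.ceil_le.1 hN)⟩
      · exact intervalIntegrable_const
      · refine Eventually.of_forall fun s hs => ?_
        rw [uIoc_of_le ht] at hs
        have h0 := hXt n s hs.1.le
        have h1 := hXt (n+1) s hs.1.le
        have h2 := hXt (n+2) s hs.1.le
        unfold rh
        exact (((h0.pow 2).const_mul _).sub ((h1.const_mul _).mul h2)).sub (h1.const_mul _)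
    refine (h1.const_add (x (n+1))).congr' ?_
    filter_upwards [eventually_gt_atTop n, eventually_ge_atTop ⌈t⌉₊] with N h2 h3
    have htN : t ≤ N := Nat.ceil_le.1 h3
    rw [intervalIntegral.integral_eq_sub_of_hasDerivAt_of_le ht ((hU N).1 (n+1)).continuousOn
      (fun s hs => ((hU N).2.2.2.2 n h2 s ⟨hs.1.le, hs.2.le.trans htN⟩).hasDerivAt
        (Icc_mem_nhds hs.1 (hs.2.trans_le htN))) ((hUrc N n).intervalIntegrable _ _),
      (hU N).2.2.2.1 n h2]
    ring
  refine ⟨X, hXc, hX0, ?_, ?_, ?_⟩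
  · intro n
    rw [hint n 0 le_rfl]; simp
  · intro n t ht
    have h1 := (intervalIntegral.integral_hasDerivAt_right ((hrc n).intervalIntegrable 0 t)
      ((hrc n).stronglyMeasurableAtFilter _ _) (hrc n).continuousAt).const_add (x (n+1))
    exact h1.hasDerivWithinAt.congr (fun s hs => hint n s hs) (hint n t ht)
  · intro l hl0 hl1
    obtain ⟨C, hC, h⟩ := hbd l hl0 hl1
    refine ⟨C, hC, fun n t ht => ?_⟩
    refine le_of_tendsto ((hXt n t ht).abs) ?_
    filter_upwards [eventually_ge_atTop ⌈t⌉₊] with N hN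
    exact h N N (U N) (Nat.cast_nonneg N) (hU N) n t ⟨ht, Nat.ceil_le.1 hN⟩

lemma kk_pow (β : ℝ) (n : ℕ) : kk β n = ((2:ℝ) ^ β) ^ n := by
  unfold kk
  rw [Real.rpow_mul (by norm_num), Real.rpow_natCast]

lemma l3_tend (β : ℝ) (Z : ℕ → ℝ → ℝ) (hZ : ∀ n, Continuous (Z n)) (T : ℝ) (hT : 0 ≤ T)
    (h : MemL3W β Z T) :
    Tendsto (fun N => ∫ s in (0:ℝ)..T, kk β N * |Z N s| ^ 3) atTop (𝓝 0) := by
  rw [← tendsto_add_atTop_iff_nat 1]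
  have hk : ∀ n : ℕ, (2:ℝ) ^ (β * ((n:ℝ) + 1)) = kk β (n+1) := by
    intro n; unfold kk; push_cast; rfl
  unfold MemL3W at h
  simp only [hk] at h
  have hc : ∀ n, Continuous (fun s => kk β (n+1) * |Z (n+1) s| ^ 3) := by
    intro n
    have := hZ (n+1)
    fun_prop
  rw [lintegral_tsum (fun n => (hc n).measurable.ennreal_ofReal.aemeasurable)] at h
  have h1 := ENNReal.tendsto_atTop_zero_of_tsum_ne_top h.ne
  have h2 := (ENNReal.tendsto_toReal ENNReal.zero_ne_top).comp h1
  rw [ENNReal.toReal_zero] at h2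
  refine h2.congr fun n => ?_
  rw [intervalIntegral.integral_of_le hT, integral_eq_lintegral_of_nonneg_ae]
  · rfl
  · refine Eventually.of_forall fun s => ?_
    have : 0 ≤ kk β (n+1) := by unfold kk; positivity
    positivity
  · exact (hc n).aestronglyMeasurable

lemma cube_alg (x y u v : ℝ) (hx : 0 ≤ x) (hy : 0 ≤ y) (hu : 0 ≤ u) (hv : 0 ≤ v) :
    y * (x + y) * (u + v) ≤ 4 * (x ^ 3 + y ^ 3 + u ^ 3 + v ^ 3) := by
  have key : ∀ a b c : ℝ, 0 ≤ a → 0 ≤ b → 0 ≤ c → a * b * c ≤ a ^ 3 + b ^ 3 + c ^ 3 := by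
    intro a b c ha hb hc
    nlinarith [mul_nonneg (add_nonneg (add_nonneg ha hb) hc) (sq_nonneg (a-b)),
      mul_nonneg (add_nonneg (add_nonneg ha hb) hc) (sq_nonneg (a-c)),
      mul_nonneg (add_nonneg (add_nonneg ha hb) hc) (sq_nonneg (b-c)),
      mul_nonneg (mul_nonneg ha hb) hc, pow_nonneg ha 3, pow_nonneg hb 3, pow_nonneg hc 3]
  have key2 : ∀ a c : ℝ, 0 ≤ a → 0 ≤ c → a * a * c ≤ a ^ 3 + c ^ 3 := by
    intro a c ha hc
    nlinarith [mul_nonneg (add_nonneg ha hc) (sq_nonneg (a-c)), pow_nonneg ha 3, pow_nonneg hc 3,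
      mul_nonneg hc (sq_nonneg (a-c)), mul_nonneg ha (sq_nonneg (a-c)), mul_nonneg ha (sq_nonneg c),
      mul_nonneg hc (sq_nonneg a)]
  have h1 := key y x u hy hx hu
  have h2 := key y x v hy hx hv
  have h3 := key2 y u hy hu
  have h4 := key2 y v hy hv
  nlinarith [pow_nonneg hx 3, pow_nonneg hy 3, pow_nonneg hu 3, pow_nonneg hv 3]

lemma dy_unique (β : ℝ) (a d : ℕ → ℝ) (Φ : ℝ) (hβ : 0 < β) (hΦ : 0 < Φ)
    (ha : ∀ n, |a n| ≤ Φ * kk β n) (hd : ∀ n, 0 ≤ d (n+1)) (T : ℝ) (hT : 0 ≤ T)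
    (X Y : ℕ → ℝ → ℝ) (hXc : ∀ n, Continuous (X n)) (hYc : ∀ n, Continuous (Y n))
    (hX0 : ∀ t, X 0 t = 0) (hY0 : ∀ t, Y 0 t = 0) (hXY : ∀ n, X (n+1) 0 = Y (n+1) 0)
    (hXd : ∀ n, ∀ t ∈ Icc 0 T,
      HasDerivWithinAt (X (n+1)) (rh a d (fun m => X m t) n) (Icc 0 T) t)
    (hYd : ∀ n, ∀ t ∈ Icc 0 T,
      HasDerivWithinAt (Y (n+1)) (rh a d (fun m => Y m t) n) (Icc 0 T) t)
    (M : ℝ) (hM : 0 ≤ M) (hM1 : ∀ n, ∀ t ∈ Icc 0 T, |a n * X n t| ≤ M)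
    (hM2 : ∀ n, ∀ t ∈ Icc 0 T, |a n * X (n+1) t| ≤ M)
    (hX3 : MemL3W β X T) (hY3 : MemL3W β Y T) (n : ℕ) : Y (n+1) T = X (n+1) T := by
  set w : ℕ → ℝ → ℝ := fun N s => kk β N * |X N s| ^ 3 + kk β N * |Y N s| ^ 3 with hw
  have hwX : ∀ N, Continuous (fun s => kk β N * |X N s| ^ 3) := by
    intro N; have := hXc N; fun_prop
  have hwY : ∀ N, Continuous (fun s => kk β N * |Y N s| ^ 3) := by
    intro N; have := hYc N; fun_prop
  have hwc : ∀ N, Continuous (w N) := fun N => (hwX N).add (hwY N)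
  have hwt : Tendsto (fun N => ∫ s in (0:ℝ)..T, w N s) atTop (𝓝 0) := by
    have h1 := (l3_tend β X hXc T hT hX3).add (l3_tend β Y hYc T hT hY3)
    rw [add_zero] at h1
    refine h1.congr fun N => ?_
    rw [← intervalIntegral.integral_add ((hwX N).intervalIntegrable _ _)
      ((hwY N).intervalIntegrable _ _)]
  set q : ℕ → ℝ → ℝ := fun N s => 8 * Φ * (w N s + w (N+1) s) with hq
  have hqc : ∀ N, Continuous (q N) := by
    intro N
    have h1 := hwc N
    have h2 := hwc (N+1)
    simp only [hq]
    fun_prop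
  have hqt : Tendsto (fun N => ∫ s in (0:ℝ)..T, q N s) atTop (𝓝 0) := by
    have h1 := (hwt.add ((tendsto_add_atTop_iff_nat 1).2 hwt)).const_mul (8 * Φ)
    rw [add_zero, mul_zero] at h1
    refine h1.congr fun N => ?_
    simp only [hq]
    rw [intervalIntegral.integral_const_mul, ← intervalIntegral.integral_add
      ((hwc N).intervalIntegrable _ _) ((hwc (N+1)).intervalIntegrable _ _)]
  have hkm : ∀ N, kk β N ≤ kk β (N+1) := by
    intro N
    unfold kk
    apply Real.rpow_le_rpow_of_exponent_le (by norm_num)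
    push_cast
    nlinarith
  have hk0 : ∀ N, 0 ≤ kk β N := by intro N; unfold kk; positivity
  have hcmp : ∀ N, n < N → (X (n+1) T - Y (n+1) T) ^ 2 ≤
      Real.exp (4 * M * T) * ∫ s in (0:ℝ)..T, q N s := by
    intro N hn
    have h1 := dy_cmp a d hd N T hT X Y hX0 hY0 (fun n _ => hXd n) (fun n _ => hYd n)
      (fun n _ => hXY n) M hM hM1 hM2 (fun t => ∫ s in (0:ℝ)..t, q N s) (q N)
      (fun t _ => (intervalIntegral.integral_hasDerivAt_right ((hqc N).intervalIntegrable 0 t)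
        ((hqc N).stronglyMeasurableAtFilter _ _) (hqc N).continuousAt).hasDerivWithinAt)
      (by simp)
      (fun t ht => by
        rw [abs_mul, abs_mul, abs_mul]
        have e1 := abs_sub (X N t) (Y N t)
        have e2 := abs_sub (X (N+1) t) (Y (N+1) t)
        have e3 := cube_alg |X N t| |Y N t| |X (N+1) t| |Y (N+1) t| (abs_nonneg _) (abs_nonneg _)
          (abs_nonneg _) (abs_nonneg _)
        have e4 : kk β N * (|X (N+1) t| ^ 3 + |Y (N+1) t| ^ 3) ≤
            kk β (N+1) * (|X (N+1) t| ^ 3 + |Y (N+1) t| ^ 3) :=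
          mul_le_mul_of_nonneg_right (hkm N) (by positivity)
        have hkN := hk0 N
        calc 2 * (|a N| * |Y N t| * |X N t - Y N t| * |X (N+1) t - Y (N+1) t|)
            ≤ 2 * ((Φ * kk β N) * |Y N t| * (|X N t| + |Y N t|)
                * (|X (N+1) t| + |Y (N+1) t|)) := by
              gcongr
              exact ha N
          _ = 2 * (Φ * kk β N) * (|Y N t| * (|X N t| + |Y N t|)
                * (|X (N+1) t| + |Y (N+1) t|)) := by ring
          _ ≤ 2 * (Φ * kk β N) * (4 * (|X N t| ^ 3 + |Y N t| ^ 3 + |X (N+1) t| ^ 3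
                + |Y (N+1) t| ^ 3)) := by gcongr
          _ = 8 * Φ * (kk β N * (|X N t| ^ 3 + |Y N t| ^ 3)
                + kk β N * (|X (N+1) t| ^ 3 + |Y (N+1) t| ^ 3)) := by ring
          _ ≤ 8 * Φ * (kk β N * (|X N t| ^ 3 + |Y N t| ^ 3)
                + kk β (N+1) * (|X (N+1) t| ^ 3 + |Y (N+1) t| ^ 3)) := by gcongr
          _ = q N t := by simp only [hq, hw]; ring)
      T ⟨hT, le_rfl⟩
    exact (Finset.single_le_sum (f := fun i => (X (i+1) T - Y (i+1) T) ^ 2)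
      (fun i _ => sq_nonneg _) (Finset.mem_range.2 hn)).trans h1
  have hfin : (X (n+1) T - Y (n+1) T) ^ 2 ≤ 0 := by
    have h1 := hqt.const_mul (Real.exp (4 * M * T))
    rw [mul_zero] at h1
    refine ge_of_tendsto h1 ?_
    filter_upwards [eventually_gt_atTop n] with N hN
    exact hcmp N hN
  have := pow_eq_zero_iff (two_ne_zero) |>.1 (le_antisymm hfin (sq_nonneg _))
  linarith

lemma memL3W_of_bound (β : ℝ) (hβ : 0 < β) (X : ℕ → ℝ → ℝ) (C : ℝ) (hC : 0 ≤ C)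
    (h : ∀ n t, 0 ≤ t → |X n t| ≤ C * (((2:ℝ) ^ β)⁻¹) ^ n) (T : ℝ) : MemL3W β X T := by
  set κ := (2:ℝ) ^ β with hκ
  have hκ1 : 1 < κ := Real.one_lt_rpow (by norm_num) hβ
  have hκ0 : 0 < κ := by linarith
  have hl1 : κ⁻¹ < 1 := inv_lt_one_of_one_lt₀ hκ1
  have hl0 : 0 < κ⁻¹ := by positivity
  have hs : Summable (fun n : ℕ => C ^ 3 * κ⁻¹ ^ n) :=
    (summable_geometric_of_lt_one hl0.le hl1).mul_left _
  have hle : ∀ t ∈ Ioc (0:ℝ) T, (∑' n : ℕ,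
      ENNReal.ofReal ((2 : ℝ) ^ (β * ((n : ℝ) + 1)) * |X (n + 1) t| ^ 3)) ≤
      ENNReal.ofReal (∑' n : ℕ, C ^ 3 * κ⁻¹ ^ n) := by
    intro t ht
    rw [ENNReal.ofReal_tsum_of_nonneg (fun n => by positivity) hs]
    refine ENNReal.tsum_le_tsum fun n => ENNReal.ofReal_le_ofReal ?_
    have e1 : (2:ℝ) ^ (β * ((n:ℝ) + 1)) = κ ^ (n+1) := by
      rw [hκ, ← kk_pow]; unfold kk; push_cast; rfl
    rw [e1]
    calc κ ^ (n+1) * |X (n+1) t| ^ 3 ≤ κ ^ (n+1) * (C * κ⁻¹ ^ (n+1)) ^ 3 := by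
          gcongr; exact h (n+1) t ht.1.le
      _ = C ^ 3 * (κ * κ⁻¹) ^ (n+1) * κ⁻¹ ^ (2 * (n + 1)) := by rw [mul_pow κ]; ring
      _ = C ^ 3 * κ⁻¹ ^ (2 * (n + 1)) := by rw [mul_inv_cancel₀ hκ0.ne']; simp
      _ ≤ C ^ 3 * κ⁻¹ ^ n := by
        refine mul_le_mul_of_nonneg_left ?_ (by positivity)
        exact pow_le_pow_of_le_one hl0.le hl1.le (by omega)
  unfold MemL3W
  calc _ ≤ ∫⁻ t in Set.Ioc (0 : ℝ) T, ENNReal.ofReal (∑' n : ℕ, C ^ 3 * κ⁻¹ ^ n) :=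
        setLIntegral_mono' measurableSet_Ioc hle
    _ < ⊤ := by
      rw [setLIntegral_const]
      exact ENNReal.mul_lt_top ENNReal.ofReal_lt_top (by simp)

lemma memLinfty_of_bound (X : ℕ → ℝ → ℝ)
    (h : ∀ l : ℝ, 0 < l → l < 1 → ∃ C : ℝ, 0 ≤ C ∧ ∀ n t, 0 ≤ t → |X n t| ≤ C * l ^ n)
    (s : ℝ) (hs : 0 < s) : MemLinftyHs s X (Set.Ici 0) := by
  set l : ℝ := (2:ℝ) ^ (-(s+1)) with hl
  have hl0 : 0 < l := by positivity
  have hl1 : l < 1 := Real.rpow_lt_one_of_one_lt_of_neg (by norm_num) (by linarith)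
  obtain ⟨C, hC, hX⟩ := h l hl0 hl1
  have hsum : Summable (fun n : ℕ => C ^ 2 * (1/4:ℝ) ^ (n+1)) := by
    have := (summable_geometric_of_lt_one (show (0:ℝ) ≤ 1/4 by norm_num) (by norm_num))
    exact ((summable_nat_add_iff 1).2 this).mul_left _
  have hle : ∀ t ∈ Set.Ici (0:ℝ), ∀ n : ℕ,
      (2 : ℝ) ^ (2 * s * ((n : ℝ) + 1)) * (X (n + 1) t) ^ 2 ≤ C ^ 2 * (1/4:ℝ) ^ (n+1) := by
    intro t ht n
    have e1 : (2:ℝ) ^ (2 * s * ((n:ℝ)+1)) * l ^ (2 * (n+1)) = (1/4) ^ (n+1) := by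
      have : (1/4:ℝ) = (2:ℝ) ^ (-2:ℝ) := by
        rw [Real.rpow_neg (by norm_num)]; norm_num
      rw [this, hl, ← Real.rpow_natCast, ← Real.rpow_natCast, ← Real.rpow_mul (by norm_num),
        ← Real.rpow_mul (by norm_num), ← Real.rpow_add (by norm_num)]
      congr 1
      push_cast
      ring
    calc (2 : ℝ) ^ (2 * s * ((n : ℝ) + 1)) * (X (n + 1) t) ^ 2
        = (2 : ℝ) ^ (2 * s * ((n : ℝ) + 1)) * |X (n + 1) t| ^ 2 := by rw [sq_abs]
      _ ≤ (2 : ℝ) ^ (2 * s * ((n : ℝ) + 1)) * (C * l ^ (n+1)) ^ 2 := by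
        gcongr; exact hX (n+1) t ht
      _ = C ^ 2 * ((2:ℝ) ^ (2 * s * ((n:ℝ)+1)) * l ^ (2 * (n+1))) := by ring
      _ = _ := by rw [e1]
  refine ⟨∑' n : ℕ, C ^ 2 * (1/4:ℝ) ^ (n+1), fun t ht => ?_⟩
  have h1 : Summable (fun n : ℕ => (2 : ℝ) ^ (2 * s * ((n : ℝ) + 1)) * (X (n + 1) t) ^ 2) :=
    Summable.of_nonneg_of_le (fun n => by positivity) (hle t ht) hsum
  exact ⟨h1, h1.tsum_le_tsum (hle t ht) hsum⟩

lemma decay_of_memHs (x : ℕ → ℝ) (hx : ∀ s : ℝ, 0 < s → MemHs s x) (l : ℝ) (hl0 : 0 < l)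
    (hl1 : l < 1) : ∃ C : ℝ, 0 ≤ C ∧ ∀ n, |x (n+1)| ≤ C * l ^ n := by
  set s := -Real.logb 2 l with hs
  have hs0 : 0 < s := by
    have := Real.logb_neg (b := 2) (by norm_num) hl0 hl1
    linarith
  have hl : (2:ℝ) ^ (-s) = l := by
    rw [hs, neg_neg, Real.rpow_logb (by norm_num) (by norm_num) hl0]
  have h := hx s hs0
  unfold MemHs at h
  set S := ∑' n : ℕ, (2 : ℝ) ^ (2 * s * ((n : ℝ) + 1)) * (x (n + 1)) ^ 2 with hS
  have hS0 : 0 ≤ S := tsum_nonneg fun n => by positivity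
  refine ⟨Real.sqrt S, Real.sqrt_nonneg _, fun n => ?_⟩
  have h1 : (2 : ℝ) ^ (2 * s * ((n : ℝ) + 1)) * (x (n + 1)) ^ 2 ≤ S :=
    h.le_tsum n (fun m _ => by positivity)
  have e1 : (2:ℝ) ^ (2 * s * ((n:ℝ)+1)) * l ^ (2 * (n+1)) = 1 := by
    rw [← hl, ← Real.rpow_natCast, ← Real.rpow_mul (by norm_num), ← Real.rpow_add (by norm_num)]
    rw [← Real.rpow_zero 2]
    congr 1
    push_cast
    ring
  have h2 : (x (n+1)) ^ 2 ≤ S * l ^ (2 * (n+1)) := by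
    calc (x (n+1)) ^ 2 = ((2:ℝ) ^ (2 * s * ((n:ℝ)+1)) * l ^ (2 * (n+1))) * (x (n+1)) ^ 2 := by
          rw [e1, one_mul]
      _ = ((2:ℝ) ^ (2 * s * ((n:ℝ)+1)) * (x (n+1)) ^ 2) * l ^ (2 * (n+1)) := by ring
      _ ≤ _ := by gcongr
  have h3 : |x (n+1)| ≤ Real.sqrt S * l ^ (n+1) := by
    apply abs_le_of_sq_le_sq _ (by positivity)
    rw [mul_pow, Real.sq_sqrt hS0, ← pow_mul, mul_comm (n+1) 2]
    exact h2
  refine h3.trans ?_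
  exact mul_le_mul_of_nonneg_left (pow_le_pow_of_le_one hl0.le hl1.le (Nat.le_succ n))
    (Real.sqrt_nonneg _)

/-- Theorem 3.1 (main): under monotone `g`, eventually monotone `k/g` and `∑ 1/gₙ = ∞`,
for smooth data there is a global smooth solution, unique in `L³_loc([0,∞); W^{β/3,3})`. -/
theorem dyadic_global_regularity
    (β : ℝ) (hβ : 0 < β) (φ g : ℕ → ℝ)
    (hφ : ∃ Φ : ℝ, ∀ n : ℕ, |φ n| ≤ Φ)
    (hgpos : ∀ n : ℕ, 1 ≤ n → 0 < g n)
    (hgmono : ∀ n m : ℕ, 1 ≤ n → n ≤ m → g n ≤ g m)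
    (hkg : ∃ N : ℕ, ∀ n m : ℕ, N ≤ n → n ≤ m → kk β n / g n ≤ kk β m / g m)
    (hgdiv : ¬ Summable fun n : ℕ => (g (n + 1))⁻¹)
    (x : ℕ → ℝ) (hx : ∀ s : ℝ, 0 < s → MemHs s x) :
    ∃ X : ℕ → ℝ → ℝ, IsDyadicSolution β φ g x X ∧
      (∀ s : ℝ, 0 < s → MemLinftyHs s X (Set.Ici 0)) ∧
      (∀ T : ℝ, 0 < T → MemL3W β X T) ∧
      (∀ Y : ℕ → ℝ → ℝ, IsDyadicSolution β φ g x Y →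
        (∀ T : ℝ, 0 < T → MemL3W β Y T) →
        ∀ n : ℕ, 1 ≤ n → ∀ t : ℝ, 0 ≤ t → Y n t = X n t) := by
  obtain ⟨Φ₀, hΦ₀⟩ := hφ
  obtain ⟨n0, hn0⟩ := hkg
  have hκ1 : 1 < (2:ℝ) ^ β := Real.one_lt_rpow (by norm_num) hβ
  have hκ0 : 0 < (2:ℝ) ^ β := by linarith
  have hk0 : ∀ n, 0 < kk β n := by intro n; unfold kk; positivity
  have hkn : ∀ n, kk β n = ((2:ℝ) ^ β) ^ n := kk_pow β
  obtain ⟨Φ, hΦpos, hΦ⟩ : ∃ Φ : ℝ, 0 < Φ ∧ ∀ n, |φ n| ≤ Φ :=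
    ⟨max Φ₀ 1, by positivity, fun n => (hΦ₀ n).trans (le_max_left _ _)⟩
  obtain ⟨a, ha⟩ : ∃ a : ℕ → ℝ, a = fun n => φ n * kk β n := ⟨_, rfl⟩
  obtain ⟨d, hd⟩ : ∃ d : ℕ → ℝ, d = fun n => kk β n / g n := ⟨_, rfl⟩
  have hab : ∀ n, |a n| ≤ Φ * kk β n := by
    intro n
    rw [ha]
    simp only
    rw [abs_mul, abs_of_pos (hk0 n)]
    exact mul_le_mul_of_nonneg_right (hΦ n) (hk0 n).le
  have hab' : ∀ n, |a n| ≤ Φ * ((2:ℝ) ^ β) ^ n := by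
    intro n; rw [← hkn]; exact hab n
  have hg : ∀ n, 0 < g (n+1) := fun n => hgpos _ (by omega)
  have hd0 : ∀ n, 0 ≤ d (n+1) := by
    intro n; rw [hd]; exact (div_pos (hk0 _) (hg n)).le
  have hKG : ∀ n, n0 ≤ n → g (n+1+1) ≤ (2:ℝ) ^ β * g (n+1) := by
    intro n hn
    have h1 := hn0 (n+1) (n+1+1) (by omega) (by omega)
    rw [div_le_div_iff₀ (hg n) (hg (n+1)), hkn, hkn, pow_succ _ (n+1), mul_assoc] at h1
    exact le_of_mul_le_mul_left h1 (by positivity)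
  obtain ⟨X, hXc, hX0, hXi, hXd, hXb⟩ := limit_exists a d x ((2:ℝ) ^ β) Φ hκ1 hΦpos hab' hd0
    (fun l hl0 hl1 => gal_bound a d x g ((2:ℝ) ^ β) Φ hκ1 hΦpos hg
      (fun n => by rw [hd, ← hkn]) hab' (g 1) (hgpos 1 le_rfl)
      (fun n => hgmono 1 (n+1) le_rfl (by omega)) n0 hKG hgdiv (decay_of_memHs x hx) l hl0 hl1)
  obtain ⟨C, hC, hCb⟩ := hXb (((2:ℝ) ^ β)⁻¹) (by positivity) (inv_lt_one_of_one_lt₀ hκ1)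
  have hX3 : ∀ T : ℝ, MemL3W β X T := memL3W_of_bound β hβ X C hC hCb
  have hrh : ∀ (y : ℕ → ℝ) (n : ℕ), φ (n + 1 - 1) * kk β (n + 1 - 1) * (y (n + 1 - 1)) ^ 2
        - φ (n+1) * kk β (n+1) * y (n+1) * y (n + 1 + 1)
        - kk β (n+1) / g (n+1) * y (n+1) = rh a d y n := by
    intro y n
    rw [ha, hd]
    rfl
  refine ⟨X, ⟨hX0, ?_, ?_⟩, memLinfty_of_bound X hXb, fun T _ => hX3 T, ?_⟩
  · intro n hn
    obtain ⟨m, rfl⟩ := Nat.exists_eq_add_of_le' hn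
    exact hXi m
  · intro n hn t ht
    obtain ⟨m, rfl⟩ := Nat.exists_eq_add_of_le' hn
    have h1 := hXd m t ht
    rw [← hrh] at h1
    exact h1
  intro Y hY hY3 n hn t ht
  obtain ⟨m, rfl⟩ := Nat.exists_eq_add_of_le' hn
  obtain ⟨hY0, hYi, hYd⟩ := hY
  have hYd' : ∀ n s, 0 ≤ s → HasDerivWithinAt (Y (n+1)) (rh a d (fun m => Y m s) n) (Ici 0) s := by
    intro n s hs
    have h1 := hYd (n+1) (by omega) s hs
    rw [← hrh]
    exact h1
  rcases ht.eq_or_lt with rfl | htpos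
  · rw [hYi (m+1) hn, hXi]
  obtain ⟨Z, hZ⟩ : ∃ Z : ℕ → ℝ → ℝ, Z = fun m s => Y m (max s 0) := ⟨_, rfl⟩
  have hZY : ∀ n s, 0 ≤ s → Z n s = Y n s := by
    intro n s hs; rw [hZ]; simp only; rw [max_eq_left hs]
  have hZc : ∀ n, Continuous (Z n) := by
    intro n
    rcases n with _ | n
    · have : Z 0 = fun _ => 0 := by rw [hZ]; funext s; exact hY0 _
      rw [this]; exact continuous_const
    · have h1 : ContinuousOn (Y (n+1)) (Ici 0) :=
        fun s hs => (hYd' n s hs).continuousWithinAt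
      rw [hZ]
      exact h1.comp_continuous (continuous_id.max continuous_const)
        (fun s => mem_Ici.2 (le_max_right _ _))
  have hZ3 : MemL3W β Z t := by
    have h1 := hY3 t htpos
    unfold MemL3W at h1 ⊢
    refine lt_of_eq_of_lt (setLIntegral_congr_fun measurableSet_Ioc fun s hs => ?_) h1
    simp only [hZY _ s hs.1.le]
  have hsub : Icc 0 t ⊆ Ici (0:ℝ) := Icc_subset_Ici_self
  have hMk : ∀ (n : ℕ) (s : ℝ), 0 ≤ s → ∀ y : ℝ, |y| ≤ C * (((2:ℝ) ^ β)⁻¹) ^ n → |a n * y| ≤ Φ * C := by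
    intro n s hs y hy
    rw [abs_mul]
    calc |a n| * |y| ≤ (Φ * ((2:ℝ) ^ β) ^ n) * (C * (((2:ℝ) ^ β)⁻¹) ^ n) :=
          mul_le_mul (hab' n) hy (abs_nonneg _) (by positivity)
      _ = Φ * C * ((2:ℝ) ^ β * ((2:ℝ) ^ β)⁻¹) ^ n := by rw [mul_pow]; ring
      _ = Φ * C := by rw [mul_inv_cancel₀ hκ0.ne']; simp
  have hfin := dy_unique β a d Φ hβ hΦpos hab hd0 t ht X Z hXc hZc hX0
    (fun s => by rw [hZ]; exact hY0 _)
    (fun n => by rw [hXi, hZY _ 0 le_rfl, hYi (n+1) (by omega)])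
    (fun n s hs => (hXd n s hs.1).mono hsub)
    (fun n s hs => by
      have e : (fun m => Z m s) = fun m => Y m s := funext fun m => hZY m s hs.1
      rw [e]
      exact ((hYd' n s hs.1).mono hsub).congr (fun r hr => hZY _ r hr.1) (hZY _ s hs.1))
    (Φ * C) (by positivity)
    (fun n s hs => hMk n s hs.1 _ (hCb n s hs.1))
    (fun n s hs => hMk n s hs.1 _ ((hCb (n+1) s hs.1).trans
      (mul_le_mul_of_nonneg_left (pow_le_pow_of_le_one (by positivity)
        (inv_lt_one_of_one_lt₀ hκ1).le (Nat.le_succ n)) hC)))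
    (hX3 t) hZ3 m
  rw [← hfin, hZY _ t ht]
end

section
/- Let x ∈ H^s for some s > β/3. Suppose that g ∈ H^{-s}, that g_n is non-decreasing, that g_n 2^{-sn} is eventually non-increasing, and that ∑_{n≥1} g_n^{-1} = ∞. Then there exists a weak solution of the dyadic model with initial condition x in the class L^∞([0,∞); H^s), and this solution is unique in the class L³_loc([0,∞); W^{β/3,3}). -/
open scoped BigOperators ENNReal
open MeasureTheory Filter Set Topology

lemma dy_tail_summable (s : ℝ) (hs : 0 < s) (x : ℕ → ℝ)
    (hx : Summable (fun n : ℕ => ((2 : ℝ) ^ (s * n)) ^ 2 * (x n) ^ 2)) :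
    (∀ n, Summable fun m => (x (n + m)) ^ 2) ∧
    Summable (fun n : ℕ => ((2 : ℝ) ^ (s * n)) ^ 2 * ∑' m, (x (n + m)) ^ 2) := by
  have hp1 : ∀ n : ℕ, (1 : ℝ) ≤ (2 : ℝ) ^ (s * n) := fun n =>
    Real.one_le_rpow (by norm_num) (by positivity)
  have hx2 : Summable (fun n => x n ^ 2) := by
    refine Summable.of_nonneg_of_le (fun n => sq_nonneg _) (fun n => ?_) hx
    have := hp1 n
    nlinarith [sq_nonneg (x n), one_le_pow₀ (n := 2) this]
  have hsh : ∀ n, Summable fun m => (x (n + m)) ^ 2 := fun n => by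
    have := (summable_nat_add_iff n).2 hx2
    simpa [add_comm] using this
  refine ⟨hsh, ?_⟩
  set p : ℕ → ℝ := fun n => (2 : ℝ) ^ (s * n) with hp
  have hpmono : ∀ n m : ℕ, n ≤ m → p n ≤ p m := fun n m h => by
    apply Real.rpow_le_rpow_of_exponent_le (by norm_num)
    have : (n : ℝ) ≤ m := by exact_mod_cast h
    nlinarith
  have hpos : ∀ n, 0 < p n := fun n => by positivity
  set y : ℕ → ℝ := fun n => (p n) ^ 2 * (x n) ^ 2 with hy
  set Y := ∑' n, y n
  set a : ℕ → ℝ := fun n => ∑' m, (x (n + m)) ^ 2 with ha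
  have ha0 : ∀ n, 0 ≤ a n := fun n => tsum_nonneg fun m => sq_nonneg _
  have hrec : ∀ n, a n = x n ^ 2 + a (n + 1) := fun n => by
    have := (hsh n).tsum_eq_zero_add
    simp only [ha, this, add_zero]
    congr 2
    ext m
    congr 2
    omega
  set c : ℝ := (2 : ℝ) ^ s with hc
  have hc1 : 1 < c := Real.one_lt_rpow (by norm_num) hs
  have hps : ∀ n, p (n + 1) = c * p n := fun n => by
    simp only [hp, hc]
    rw [← Real.rpow_add (by norm_num)]
    congr 1
    push_cast; ring
  have hA : ∀ n, (p n) ^ 2 * a n ≤ Y := fun n => by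
    rw [ha, ← tsum_mul_left]
    have h1 : Summable fun m => y (n + m) := by
      have := (summable_nat_add_iff n).2 hx
      simpa [add_comm] using this
    calc ∑' m, (p n) ^ 2 * (x (n + m)) ^ 2 ≤ ∑' m, y (n + m) := by
          refine Summable.tsum_le_tsum (fun m => ?_) ((hsh n).mul_left _) h1
          simp only [hy]
          have := hpmono n (n + m) (by omega)
          have h0 := hpos n
          gcongr
      _ ≤ Y := by
          have := hx.sum_add_tsum_nat_add n
          have h3 : 0 ≤ ∑ i ∈ Finset.range n, y i :=
            Finset.sum_nonneg fun i _ => by positivity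
          have h4 : ∑' m, y (n + m) = ∑' m, y (m + n) := by simp only [add_comm]
          rw [h4]
          linarith
  have hY0 : 0 ≤ Y := tsum_nonneg fun n => by positivity
  refine summable_of_sum_range_le (c := 2 * Y * c ^ 2 / (c ^ 2 - 1)) (fun n => by
    have := ha0 n; positivity) (fun m => ?_)
  have key : ∀ m, (c ^ 2 - 1) * ∑ n ∈ Finset.range m, (p n) ^ 2 * a n
      ≤ c ^ 2 * ∑ n ∈ Finset.range m, y n + (p m) ^ 2 * a m := by
    intro m
    induction m with
    | zero => simpa using mul_nonneg (sq_nonneg (p 0)) (ha0 0)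
    | succ m ih =>
      rw [Finset.sum_range_succ, Finset.sum_range_succ, hps m]
      have := hrec m
      have h2 : a (m + 1) = a m - x m ^ 2 := by linarith
      rw [h2]
      simp only [hy] at ih ⊢
      nlinarith
  have hc2 : 0 < c ^ 2 - 1 := by nlinarith
  rw [le_div_iff₀ hc2]
  have h1 := key m
  have h2 := hx.sum_le_tsum (Finset.range m) (fun i _ => by positivity)
  have h3 := hA m
  have h4 : ∑ n ∈ Finset.range m, y n ≤ Y := h2
  nlinarith [mul_le_mul_of_nonneg_left h4 (sq_nonneg c)]

lemma dy_rec_summable (b : ℕ → ℝ) (hb : Summable fun n => b n ^ 2) (Q : ℝ) (hQ : 0 ≤ Q) (r : ℕ → ℝ)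
    (h0 : r 0 = Q) (hr : ∀ k, r (k + 1) = 2 * b (k + 1) ^ 2 + r k / 2) :
    Summable r ∧ ∀ k, 0 ≤ r k := by
  have hr0 : ∀ k, 0 ≤ r k := by
    intro k
    induction k with
    | zero => rw [h0]; exact hQ
    | succ k ih => rw [hr]; positivity
  refine ⟨?_, hr0⟩
  have hb1 := (summable_nat_add_iff 1).2 hb
  refine summable_of_sum_range_le (c := 2 * Q + 4 * ∑' k, b (k + 1) ^ 2) hr0 (fun m => ?_)
  have key : ∀ m, ∑ k ∈ Finset.range m, r k + 2 * r m
      = 2 * Q + 4 * ∑ k ∈ Finset.range m, b (k + 1) ^ 2 := by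
    intro m
    induction m with
    | zero => simp [h0]
    | succ m ih =>
      rw [Finset.sum_range_succ, Finset.sum_range_succ, hr]
      linarith
  have h1 := key m
  have h2 := hb1.sum_le_tsum (Finset.range m) (fun i _ => by positivity)
  have := hr0 m
  linarith

lemma dy_step (ε Φ c G G' D D' A : ℝ) (hεpos : 0 < ε) (hΦ : 0 < Φ) (hc1 : 1 < c)
    (hε2 : Φ * c * ε = 1 / 2) (hgn : 0 < G) (hgn1 : 0 < G') (h1 : ε < G * D) (h2 : ε < G' * D')
    (h3 : G' * A ≤ ε / 2) (h4 : D' ^ 2 ≤ A ^ 2 + Φ * G * D' * (D ^ 2 - D' ^ 2)) (h5 : D' ≤ D)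
    (hd1 : 0 ≤ D) (hd2 : 0 ≤ D') (ha1 : 0 ≤ A) : ε / 2 * G⁻¹ ≤ D - D' := by
  have hA : A ≤ D' / 2 := by
    by_contra! hh
    have := mul_lt_mul_of_pos_left hh hgn1
    nlinarith
  have hD' : 0 < D' := by
    by_contra! hh
    have : D' = 0 := le_antisymm hh hd2
    rw [this] at h2
    linarith
  have hA2 : A ^ 2 ≤ D' ^ 2 / 4 := by nlinarith
  have h6 : 3 / 4 * D' ≤ Φ * G * (D ^ 2 - D' ^ 2) := by
    have : D' * (3 / 4 * D') ≤ D' * (Φ * G * (D ^ 2 - D' ^ 2)) := by nlinarith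
    exact le_of_mul_le_mul_left this hD'
  rw [← div_eq_mul_inv, div_le_iff₀ hgn]
  rcases le_total (D / 2) D' with hc' | hc'
  · have h7 : 3 / 4 * D' ≤ (Φ * G * (D - D')) * (3 * D') := by
      have : 0 ≤ Φ * G * (D - D') := by
        have : 0 ≤ D - D' := by linarith
        positivity
      nlinarith
    have h8 : 1 / 4 ≤ Φ * G * (D - D') := by
      by_contra! hh
      nlinarith
    have h9 : Φ * ε ≤ 1 / 2 := by nlinarith [mul_pos hΦ hεpos]
    have h10 : Φ * (ε / 2) ≤ Φ * ((D - D') * G) := by nlinarith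
    exact le_of_mul_le_mul_left h10 hΦ
  · nlinarith

lemma dy_seq (g : ℕ → ℝ) (s : ℝ) (hs : 0 < s) (hgpos : ∀ n : ℕ, 1 ≤ n → 0 < g n)
    (hgs : ∃ N : ℕ, ∀ n : ℕ, N ≤ n → g (n + 1) ≤ (2 : ℝ) ^ s * g n)
    (hgdiv : ¬ Summable fun n : ℕ => (g (n + 1))⁻¹)
    (hg0 : Tendsto (fun n : ℕ => g n * (2 : ℝ) ^ (-s * (n : ℝ))) atTop (𝓝 0))
    (a : ℕ → ℝ) (ha0 : ∀ n, 0 ≤ a n)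
    (hab : Summable fun n : ℕ => ((2 : ℝ) ^ (s * n) * a n) ^ 2)
    (Φ : ℝ) (hΦ : 0 < Φ) (R : ℝ) :
    ∃ q : ℕ → ℝ, Summable q ∧ ∀ d : ℕ → ℝ, (∀ n, 0 ≤ d n) →
      (∀ n, 1 ≤ n → d (n + 1) ≤ d n) → d 1 ≤ R →
      (∀ n, 1 ≤ n → d (n + 1) ^ 2 ≤ a (n + 1) ^ 2
        + Φ * g n * d (n + 1) * (d n ^ 2 - d (n + 1) ^ 2)) →
      ∀ n : ℕ, 1 ≤ n → ((2 : ℝ) ^ (s * n) * d n) ^ 2 ≤ q n := by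
  set p : ℕ → ℝ := fun n => (2 : ℝ) ^ (s * n) with hp
  have hpos : ∀ n, 0 < p n := fun n => by positivity
  have hpmono : ∀ n m : ℕ, n ≤ m → p n ≤ p m := fun n m h => by
    apply Real.rpow_le_rpow_of_exponent_le (by norm_num)
    have : (n : ℝ) ≤ m := by exact_mod_cast h
    nlinarith
  set c : ℝ := (2 : ℝ) ^ s with hc
  have hc1 : 1 < c := Real.one_lt_rpow (by norm_num) hs
  have hps : ∀ n, p (n + 1) = c * p n := fun n => by
    simp only [hp, hc]
    rw [← Real.rpow_add (by norm_num)]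
    congr 1
    push_cast; ring
  have hinv : ∀ n : ℕ, (2 : ℝ) ^ (-s * (n : ℝ)) * p n = 1 := fun n => by
    simp only [hp]
    rw [← Real.rpow_add (by norm_num)]
    simp
  obtain ⟨ε, hε⟩ : ∃ ε : ℝ, ε = 1 / (2 * Φ * c) := ⟨_, rfl⟩
  have hεpos : 0 < ε := by rw [hε]; positivity
  have hε2 : Φ * c * ε = 1 / 2 := by rw [hε]; field_simp
  have hpa : Tendsto (fun n => p n * a n) atTop (𝓝 0) := by
    have h1 := hab.tendsto_atTop_zero
    have h2 := (Real.continuous_sqrt.tendsto 0).comp h1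
    simp only [Real.sqrt_zero] at h2
    refine h2.congr fun n => ?_
    exact Real.sqrt_sq (mul_nonneg (hpos n).le (ha0 n))
  have hga : Tendsto (fun n => g n * a n) atTop (𝓝 0) := by
    have := hg0.mul hpa
    rw [mul_zero] at this
    refine this.congr fun n => ?_
    have h := hinv n
    calc _ = g n * a n * ((2 : ℝ) ^ (-s * (n : ℝ)) * p n) := by ring
      _ = _ := by rw [h, mul_one]
  obtain ⟨N0, hN0⟩ := hgs
  obtain ⟨N2, hN2⟩ := eventually_atTop.1 (hga.eventually_le_const (u := ε / 2) (by positivity))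
  set N1 := max (max N0 N2) 1 with hN1
  have hN1a : N0 ≤ N1 := by omega
  have hN1b : N2 ≤ N1 := by omega
  have hN1c : 1 ≤ N1 := by omega
  obtain ⟨L, hL⟩ : ∃ L, R < ε / 2 * ∑ k ∈ Finset.range L, (g (N1 + k))⁻¹ := by
    by_contra! hcon
    apply hgdiv
    have : Summable fun k => (g (N1 + k))⁻¹ := by
      refine summable_of_sum_range_le (c := R / (ε / 2)) (fun k => ?_) (fun L => ?_)
      · exact (inv_pos.2 (hgpos _ (by omega))).le
      · rw [le_div_iff₀ (by positivity)]
        linarith [hcon L]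
    have h2 : Summable fun k => (g k)⁻¹ := by
      rw [← summable_nat_add_iff N1]
      simpa [add_comm] using this
    exact (summable_nat_add_iff 1).2 h2
  set M := N1 + L with hM
  set Q := (p M * R) ^ 2
  obtain ⟨r, hr0, hr⟩ : ∃ r : ℕ → ℝ, r 0 = Q ∧
      ∀ k, r (k + 1) = 2 * (p (M + (k + 1)) * a (M + (k + 1))) ^ 2 + r k / 2 :=
    ⟨fun n => Nat.rec Q (fun k rk => 2 * (p (M + (k + 1)) * a (M + (k + 1))) ^ 2 + rk / 2) n,
      rfl, fun k => rfl⟩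
  have hrs := dy_rec_summable (fun k => p (M + k) * a (M + k)) (by
    have := (summable_nat_add_iff M).2 hab
    simpa only [add_comm M] using this) Q (by positivity) r hr0 hr
  refine ⟨fun n => r (n - M), ?_, ?_⟩
  · rw [← summable_nat_add_iff M]
    simpa using hrs.1
  intro d hd0 hanti hdR hd
  have hanti' : ∀ n m, 1 ≤ n → n ≤ m → d m ≤ d n := by
    intro n m hn hnm
    induction m, hnm using Nat.le_induction with
    | base => exact le_rfl
    | succ m hm ih => exact (hanti m (by omega)).trans ih
  obtain ⟨n0, hn0, hn0M, hsm⟩ : ∃ n0, N1 ≤ n0 ∧ n0 ≤ M ∧ g n0 * d n0 ≤ ε := by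
    by_contra! hcon
    have hstep : ∀ k, k ≤ L → ε / 2 * ∑ j ∈ Finset.range k, (g (N1 + j))⁻¹
        ≤ d N1 - d (N1 + k) := by
      intro k
      induction k with
      | zero => simp
      | succ k ih =>
        intro hk
        have ih := ih (by omega)
        rw [Finset.sum_range_succ, mul_add]
        have hgn := hgpos (N1 + k) (by omega)
        have hgn1 := hgpos (N1 + (k + 1)) (by omega)
        have h1 := hcon (N1 + k) (by omega) (by omega)
        have h2 := hcon (N1 + (k + 1)) (by omega) (by omega)
        have h3 := hN2 (N1 + (k + 1)) (by omega)
        have h4 := hd (N1 + k) (by omega)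
        have h5 := hanti (N1 + k) (by omega)
        rw [add_assoc] at h4 h5
        have hd1 := hd0 (N1 + k)
        have hd2 := hd0 (N1 + (k + 1))
        have ha1 := ha0 (N1 + (k + 1))
        have := dy_step ε Φ c _ _ _ _ _ hεpos hΦ hc1 hε2 hgn hgn1 h1 h2 h3 h4 h5 hd1 hd2 ha1
        linarith
    have h1 := hstep L le_rfl
    have h2 := hd0 (N1 + L)
    have h3 := hanti' 1 N1 le_rfl hN1c
    linarith
  have hlin : ∀ n, 1 ≤ n → d (n + 1) ≤ a (n + 1) + Φ * g n * d n ^ 2 := by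
    intro n hn
    have h1 := hd n hn
    have h2 := hd0 (n + 1)
    have h3 := ha0 (n + 1)
    have h4 := hgpos n hn
    by_contra! hh
    have h5 : 0 ≤ Φ * g n * d n ^ 2 := by positivity
    have h6 : 0 ≤ Φ * g n * d (n + 1) * d (n + 1) ^ 2 := by positivity
    nlinarith
  have hinduct : ∀ n, n0 ≤ n → g n * d n ≤ ε := by
    intro n hn
    induction n, hn using Nat.le_induction with
    | base => exact hsm
    | succ n hn ih =>
      have h1 := hlin n (by omega)
      have h2 := hN2 (n + 1) (by omega)
      have h3 := hN0 n (by omega)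
      have h4 := hgpos n (by omega)
      have h5 := hgpos (n + 1) (by omega)
      have h6 := hd0 n
      calc g (n + 1) * d (n + 1) ≤ g (n + 1) * (a (n + 1) + Φ * g n * d n ^ 2) := by gcongr
        _ = g (n + 1) * a (n + 1) + g (n + 1) * (Φ * g n * d n ^ 2) := by ring
        _ ≤ ε / 2 + (c * g n) * (Φ * g n * d n ^ 2) := by gcongr
        _ = ε / 2 + Φ * c * ((g n * d n) * (g n * d n)) := by ring
        _ ≤ ε / 2 + Φ * c * (ε * ε) := by gcongr
        _ = ε / 2 + (Φ * c * ε) * ε := by ring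
        _ = ε := by rw [hε2]; ring
  intro n hn
  have hsmall : ∀ n, 1 ≤ n → n ≤ M → (p n * d n) ^ 2 ≤ Q := by
    intro n hn hnM
    have h1 := hanti' 1 n le_rfl hn
    have h2 := hd0 n
    have h3 := hpmono n M hnM
    have h4 := hpos n
    have h5 := hpos M
    have : d n ≤ R := by linarith
    apply pow_le_pow_left₀ (by positivity)
    gcongr
  have hlarge : ∀ k, (p (M + k) * d (M + k)) ^ 2 ≤ r k := by
    intro k
    induction k with
    | zero => rw [hr0]; exact hsmall M (by omega) le_rfl
    | succ k ih =>
      rw [hr]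
      have h1 := hlin (M + k) (by omega)
      have h2 := hinduct (M + k) (by omega)
      have h3 := hps (M + k)
      rw [add_assoc] at h1 h3
      have hd1 := hd0 (M + k)
      have hd2 := hd0 (M + (k + 1))
      have hp1 := hpos (M + k)
      have hp2 := hpos (M + (k + 1))
      have h4 : p (M + (k + 1)) * d (M + (k + 1)) ≤
          p (M + (k + 1)) * a (M + (k + 1)) + (p (M + k) * d (M + k)) / 2 := by
        calc _ ≤ p (M + (k + 1)) * (a (M + (k + 1)) + Φ * g (M + k) * d (M + k) ^ 2) := by gcongr
          _ = p (M + (k + 1)) * a (M + (k + 1))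
              + Φ * c * (g (M + k) * d (M + k)) * (p (M + k) * d (M + k)) := by rw [h3]; ring
          _ ≤ p (M + (k + 1)) * a (M + (k + 1))
              + Φ * c * ε * (p (M + k) * d (M + k)) := by gcongr
          _ = _ := by rw [hε2]; ring
      have h5 : 0 ≤ p (M + (k + 1)) * d (M + (k + 1)) := by positivity
      have h6 := pow_le_pow_left₀ h5 h4 2
      nlinarith [sq_nonneg (p (M + (k + 1)) * a (M + (k + 1)) - (p (M + k) * d (M + k)) / 2)]
  rcases le_total n M with h | h
  · simp only [Nat.sub_eq_zero_of_le h, hr0]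
    exact hsmall n hn h
  · obtain ⟨k, rfl⟩ := Nat.exists_eq_add_of_le h
    simp only [Nat.add_sub_cancel_left]
    exact hlarge k

lemma dy_mono (T : ℝ) (f f' : ℝ → ℝ)
    (hf : ∀ t ∈ Icc (0 : ℝ) T, HasDerivWithinAt f (f' t) (Icc 0 T) t)
    (hle : ∀ t ∈ Icc (0 : ℝ) T, f' t ≤ 0) : ∀ t ∈ Icc (0 : ℝ) T, f t ≤ f 0 := by
  have hanti : AntitoneOn f (Icc 0 T) := by
    refine antitoneOn_of_hasDerivWithinAt_nonpos (f' := f') (convex_Icc 0 T)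
      (fun t ht => (hf t ht).continuousWithinAt) (fun t ht => ?_) (fun t ht => ?_)
    · exact (hf t (interior_subset ht)).mono interior_subset
    · exact hle t (interior_subset ht)
  intro t ht
  exact hanti ⟨le_rfl, ht.1.trans ht.2⟩ ht ht.1

lemma dy_ode (N : ℕ) (F : (Fin N → ℝ) → (Fin N → ℝ)) (hF : ContDiff ℝ 1 F)
    (hF0 : ∀ X, ∑ i, X i * F X i ≤ 0) (x0 : Fin N → ℝ) (T : ℝ) (hT : 0 ≤ T) :
    ∃ α : ℝ → Fin N → ℝ, α 0 = x0 ∧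
      ∀ t ∈ Icc (0 : ℝ) T, HasDerivWithinAt α (F (α t)) (Icc 0 T) t := by
  set R := Real.sqrt (∑ i, x0 i ^ 2) + 1 with hR
  have hRpos : 0 < R := by positivity
  let χ : ContDiffBump (0 : Fin N → ℝ) := ⟨R, R + 1, hRpos, by linarith⟩
  set Ft : (Fin N → ℝ) → (Fin N → ℝ) := fun X => χ X • F X with hFt
  have hFtc : ContDiff ℝ 1 Ft := χ.contDiff.smul hF
  have hsupp : HasCompactSupport Ft := χ.hasCompactSupport.smul_right
  obtain ⟨K, hK⟩ := hFtc.lipschitzWith_of_hasCompactSupport hsupp (by simp)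
  obtain ⟨C, hC⟩ := hsupp.exists_bound_of_continuous hFtc.continuous
  have hC0 : 0 ≤ C := (norm_nonneg _).trans (hC 0)
  have hPL : IsPicardLindelof (fun _ => Ft) (tmin := 0) (tmax := T) ⟨0, le_rfl, hT⟩ x0
      (⟨C * T, by positivity⟩) 0 ⟨C, hC0⟩ K := by
    refine ⟨fun t _ => hK.lipschitzOnWith, fun x _ => continuousOn_const, fun t _ x _ => hC x, ?_⟩
    simp [hT]
    exact le_rfl
  obtain ⟨α, hα0, hα⟩ := hPL.exists_eq_forall_mem_Icc_hasDerivWithinAt₀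
  refine ⟨α, hα0, fun t ht => ?_⟩
  have hcoord : ∀ t ∈ Icc (0 : ℝ) T, ∀ i,
      HasDerivWithinAt (fun t => α t i) (Ft (α t) i) (Icc 0 T) t := fun t ht =>
    hasDerivWithinAt_pi.1 (hα t ht)
  have hen := dy_mono T (fun t => ∑ i, α t i ^ 2) (fun t => ∑ i, 2 * α t i * Ft (α t) i)
    (fun t ht => by
      refine HasDerivWithinAt.fun_sum fun i _ => ?_
      simpa using (hcoord t ht i).fun_pow 2) (fun t ht => by
      have h1 := hF0 (α t)
      have h2 : ∑ i, 2 * α t i * Ft (α t) i = 2 * χ (α t) * ∑ i, α t i * F (α t) i := by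
        rw [Finset.mul_sum]
        refine Finset.sum_congr rfl fun i _ => ?_
        simp only [hFt, Pi.smul_apply, smul_eq_mul]
        ring
      rw [h2]
      exact mul_nonpos_of_nonneg_of_nonpos (mul_nonneg zero_le_two χ.nonneg) h1) t ht
  have hone : χ (α t) = 1 := by
    apply χ.one_of_mem_closedBall
    rw [mem_closedBall_zero_iff]
    rw [pi_norm_le_iff_of_nonneg hRpos.le]
    intro i
    rw [show α 0 = x0 from hα0] at hen
    have h1 : α t i ^ 2 ≤ ∑ i, α t i ^ 2 :=
      Finset.single_le_sum (f := fun i => α t i ^ 2) (fun i _ => sq_nonneg _) (Finset.mem_univ i)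
    have h2 := Real.abs_le_sqrt (h1.trans hen)
    rw [Real.norm_eq_abs]
    linarith
  have := hα t ht
  simp only [hFt, hone, one_smul] at this
  exact this

noncomputable def dyRhs (β : ℝ) (φ g : ℕ → ℝ) (X : ℕ → ℝ) (n : ℕ) : ℝ :=
  φ (n - 1) * kk β (n - 1) * (X (n - 1)) ^ 2 - φ n * kk β n * X n * X (n + 1) - kk β n / g n * X n

noncomputable def dyExt (N : ℕ) (X : Fin N → ℝ) (n : ℕ) : ℝ :=
  if h : 1 ≤ n ∧ n ≤ N then X ⟨n - 1, by omega⟩ else 0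

lemma kk_pos (β : ℝ) (n : ℕ) : 0 < kk β n := by unfold kk; positivity

lemma dy_galerkin (β : ℝ) (φ g : ℕ → ℝ) (hgpos : ∀ n : ℕ, 1 ≤ n → 0 < g n) (x : ℕ → ℝ)
    (N : ℕ) (T : ℝ) (hT : 0 ≤ T) :
    ∃ X : ℕ → ℝ → ℝ, (∀ n, Continuous (X n)) ∧ (∀ t, X 0 t = 0) ∧ (∀ n, N < n → ∀ t, X n t = 0) ∧
      (∀ n, 1 ≤ n → n ≤ N → X n 0 = x n) ∧
      ∀ n, 1 ≤ n → n ≤ N → ∀ t ∈ Icc (0 : ℝ) T,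
        HasDerivWithinAt (X n) (dyRhs β φ g (fun m => X m t) n) (Icc 0 T) t := by
  have hext : ∀ n, ContDiff ℝ 1 (fun X : Fin N → ℝ => dyExt N X n) := by
    intro n
    unfold dyExt
    split_ifs with h
    · fun_prop
    · fun_prop
  set F : (Fin N → ℝ) → (Fin N → ℝ) := fun X i => dyRhs β φ g (dyExt N X) (i + 1) with hFdef
  have hF : ContDiff ℝ 1 F := by
    rw [contDiff_pi]
    intro i
    simp only [hFdef, dyRhs]
    have h1 := hext (i + 1 - 1)
    have h2 := hext (i + 1)
    have h3 := hext (i + 1 + 1)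
    fun_prop
  have hF0 : ∀ X, ∑ i, X i * F X i ≤ 0 := by
    intro X
    set Z := dyExt N X with hZ
    have hZ0 : Z 0 = 0 := by simp [hZ, dyExt]
    have hZN : Z (N + 1) = 0 := by simp [hZ, dyExt]
    have hZi : ∀ i : Fin N, X i = Z (i + 1) := fun i => by
      have : 1 ≤ (i : ℕ) + 1 ∧ (i : ℕ) + 1 ≤ N := ⟨by omega, by omega⟩
      simp [hZ, dyExt, this]
    have h1 : ∑ i, X i * F X i = ∑ i ∈ Finset.range N, Z (i + 1) * dyRhs β φ g Z (i + 1) := by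
      rw [← Fin.sum_univ_eq_sum_range (fun i => Z (i + 1) * dyRhs β φ g Z (i + 1))]
      refine Finset.sum_congr rfl fun i _ => ?_
      rw [hZi]
    have h2 : ∑ i ∈ Finset.range N, (φ i * kk β i * Z i ^ 2 * Z (i + 1)
        - φ (i + 1) * kk β (i + 1) * Z (i + 1) ^ 2 * Z (i + 1 + 1)) = 0 := by
      rw [Finset.sum_range_sub' (fun i => φ i * kk β i * Z i ^ 2 * Z (i + 1))]
      rw [hZ0, hZN]; ring
    rw [h1, ← h2]
    refine Finset.sum_le_sum fun i _ => ?_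
    have h3 : 0 ≤ kk β (i + 1) / g (i + 1) * Z (i + 1) ^ 2 := by
      have := kk_pos β (i + 1)
      have := hgpos (i + 1) (by omega)
      positivity
    simp only [dyRhs, Nat.add_sub_cancel]
    nlinarith
  obtain ⟨α, hα0, hα⟩ := dy_ode N F hF hF0 (fun i => x (i + 1)) T hT
  have hαc : ContinuousOn α (Icc 0 T) := fun t ht => (hα t ht).continuousWithinAt
  have hγ : Continuous (fun t => α (projIcc 0 T hT t)) := by
    have := hαc.domRestrict
    exact this.comp continuous_projIcc
  have hmem : ∀ t ∈ Icc (0 : ℝ) T, α (projIcc 0 T hT t) = α t := fun t ht => by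
    rw [projIcc_of_mem hT ht]
  refine ⟨fun n t => dyExt N (α (projIcc 0 T hT t)) n, fun n => (hext n).continuous.comp hγ,
    fun t => by simp [dyExt], fun n hn t => ?_, fun n h1 h2 => ?_, fun n h1 h2 t ht => ?_⟩
  · have : ¬ (1 ≤ n ∧ n ≤ N) := by omega
    simp [dyExt, this]
  · simp only
    rw [hmem 0 ⟨le_rfl, hT⟩, hα0]
    simp only [dyExt, h1, h2, and_self, dite_true]
    congr 1; omega
  · have h3 := hasDerivWithinAt_pi.1 (hα t ht) ⟨n - 1, by omega⟩
    simp only [hFdef, Nat.sub_add_cancel h1] at h3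
    simp only [hmem t ht]
    refine h3.congr_of_mem (fun u hu => ?_) ht
    simp only [hmem u hu]
    simp [dyExt, h1, h2]

lemma dy_energy (β : ℝ) (φ g : ℕ → ℝ) (hgpos : ∀ n : ℕ, 1 ≤ n → 0 < g n) (x : ℕ → ℝ)
    (Φ : ℝ) (hΦ : ∀ n, |φ n| ≤ Φ) (a : ℕ → ℝ) (ha0 : ∀ n, 0 ≤ a n)
    (hxs : ∀ n, Summable fun m => (x (n + m)) ^ 2)
    (ha : ∀ n, a n ^ 2 = ∑' m, (x (n + m)) ^ 2)
    (N : ℕ) (T : ℝ) (hT : 0 ≤ T) (X : ℕ → ℝ → ℝ) (hXc : ∀ n, Continuous (X n))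
    (hX0 : ∀ t, X 0 t = 0) (hXN : ∀ n, N < n → ∀ t, X n t = 0)
    (hXi : ∀ n, 1 ≤ n → n ≤ N → X n 0 = x n)
    (hX : ∀ n, 1 ≤ n → n ≤ N → ∀ t ∈ Icc (0 : ℝ) T,
        HasDerivWithinAt (X n) (dyRhs β φ g (fun m => X m t) n) (Icc 0 T) t) :
    ∃ d : ℕ → ℝ, (∀ n, 0 ≤ d n) ∧ (∀ n, 1 ≤ n → d (n + 1) ≤ d n) ∧ d 1 ≤ a 1 ∧
      (∀ n, 1 ≤ n → d (n + 1) ^ 2 ≤ a (n + 1) ^ 2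
        + Φ * g n * d (n + 1) * (d n ^ 2 - d (n + 1) ^ 2)) ∧
      ∀ n, 1 ≤ n → ∀ t ∈ Icc (0 : ℝ) T, |X n t| ≤ d n := by
  have hkg : ∀ n, 1 ≤ n → 0 < kk β n / g n := fun n hn => div_pos (kk_pos β n) (hgpos n hn)
  set I : ℕ → ℝ → ℝ := fun m t => ∫ u in (0 : ℝ)..t, kk β m / g m * X m u ^ 2 with hI
  have hId : ∀ m t, HasDerivAt (I m) (kk β m / g m * X m t ^ 2) t := by
    intro m t
    have hc : Continuous fun u => kk β m / g m * X m u ^ 2 := by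
      have := hXc m
      fun_prop
    exact (hc.integral_hasStrictDerivAt 0 t).hasDerivAt
  have hIc : ∀ m, Continuous (I m) := fun m =>
    continuous_iff_continuousAt.2 fun t => (hId m t).continuousAt
  have hI0 : ∀ m, I m 0 = 0 := fun m => by simp [hI]
  have hIn : ∀ m, 1 ≤ m → ∀ t, 0 ≤ t → 0 ≤ I m t := fun m hm t ht =>
    intervalIntegral.integral_nonneg ht fun u _ => by
      have := hkg m hm
      positivity
  set E : ℕ → ℝ → ℝ := fun n t => ∑ m ∈ Finset.Ico n (N + 1), (X m t ^ 2 + 2 * I m t) with hE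
  have hEc : ∀ n, Continuous (E n) := fun n => by
    refine continuous_finsetSum _ fun m _ => ?_
    have := hXc m
    have := hIc m
    fun_prop
  have hEn : ∀ n, 1 ≤ n → ∀ t, 0 ≤ t → 0 ≤ E n t := fun n hn t ht => by
    refine Finset.sum_nonneg fun m hm => ?_
    have := hIn m (by simp at hm; omega) t ht
    positivity
  have hEbig : ∀ n, N < n → ∀ t, E n t = 0 := fun n hn t => by
    simp only [hE]
    rw [Finset.Ico_eq_empty (by omega), Finset.sum_empty]
  have hErec : ∀ n, n ≤ N → ∀ t, E n t = X n t ^ 2 + 2 * I n t + E (n + 1) t := fun n hn t => by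
    simp only [hE]
    rw [Finset.sum_eq_sum_Ico_succ_bot (by omega)]
  have hEd : ∀ n, 1 ≤ n → n ≤ N → ∀ t ∈ Icc (0 : ℝ) T, HasDerivWithinAt (E n)
      (2 * (φ (n - 1) * kk β (n - 1) * X (n - 1) t ^ 2 * X n t)) (Icc 0 T) t := by
    intro n hn hnN t ht
    have h1 : HasDerivWithinAt (E n) (∑ m ∈ Finset.Ico n (N + 1),
        (2 * X m t * dyRhs β φ g (fun m => X m t) m + 2 * (kk β m / g m * X m t ^ 2)))
        (Icc 0 T) t := by
      refine HasDerivWithinAt.fun_sum fun m hm => ?_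
      simp only [Finset.mem_Ico] at hm
      have h2 := (hX m (by omega) (by omega) t ht).fun_pow 2
      have h3 := ((hId m t).hasDerivWithinAt (s := Icc 0 T)).const_mul 2
      simpa using h2.fun_add h3
    convert h1 using 1
    set h : ℕ → ℝ := fun m => φ (m - 1) * kk β (m - 1) * X (m - 1) t ^ 2 * X m t with hh
    have h4 : ∑ m ∈ Finset.Ico n (N + 1),
        (2 * X m t * dyRhs β φ g (fun m => X m t) m + 2 * (kk β m / g m * X m t ^ 2))
        = ∑ m ∈ Finset.Ico n (N + 1), (-2) * (h (m + 1) - h m) := by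
      refine Finset.sum_congr rfl fun m hm => ?_
      simp only [hh, dyRhs, Nat.add_sub_cancel]
      ring
    rw [h4, ← Finset.mul_sum, Finset.sum_Ico_sub _ (by omega)]
    have h5 : h (N + 1) = 0 := by simp [hh, hXN (N + 1) (by omega) t]
    rw [h5]; ring
  have hEi : ∀ n, 1 ≤ n → E n 0 ≤ a n ^ 2 := by
    intro n hn
    have h1 : E n 0 = ∑ m ∈ Finset.Ico n (N + 1), x m ^ 2 := by
      refine Finset.sum_congr rfl fun m hm => ?_
      simp only [Finset.mem_Ico] at hm
      rw [hI0, hXi m (by omega) (by omega)]; ring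
    rw [h1, ha, Finset.sum_Ico_eq_sum_range]
    exact (hxs n).sum_le_tsum _ fun i _ => sq_nonneg _
  have hmax : ∀ n, ∃ τ ∈ Icc (0 : ℝ) T, ∀ t ∈ Icc (0 : ℝ) T, E n t ≤ E n τ := fun n => by
    obtain ⟨τ, hτ, hm⟩ := isCompact_Icc.exists_isMaxOn (nonempty_Icc.2 hT) (hEc n).continuousOn
    exact ⟨τ, hτ, fun t ht => hm ht⟩
  choose τ hτ hτm using hmax
  set d : ℕ → ℝ := fun n => Real.sqrt (E n (τ n)) with hd
  have hd2 : ∀ n, 1 ≤ n → d n ^ 2 = E n (τ n) := fun n hn => Real.sq_sqrt (hEn n hn _ (hτ n).1)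
  have hd0 : ∀ n, 0 ≤ d n := fun n => Real.sqrt_nonneg _
  have hXd : ∀ n, 1 ≤ n → ∀ t ∈ Icc (0 : ℝ) T, |X n t| ≤ d n := by
    intro n hn t ht
    rcases le_or_gt n N with h | h
    · apply Real.abs_le_sqrt
      refine le_trans ?_ (hτm n t ht)
      have h1 := hErec n h t
      have h2 := hIn n hn t ht.1
      have h3 := hEn (n + 1) (by omega) t ht.1
      linarith
    · rw [hXN n h, abs_zero]; exact hd0 n
  refine ⟨d, hd0, fun n hn => ?_, ?_, fun n hn => ?_, hXd⟩
  · apply Real.sqrt_le_sqrt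
    rcases le_or_gt n N with h | h
    · have h1 := hErec n h (τ (n + 1))
      have h2 := hIn n hn _ (hτ (n + 1)).1
      have h3 := hτm n _ (hτ (n + 1))
      nlinarith [sq_nonneg (X n (τ (n + 1)))]
    · rw [hEbig n h, hEbig (n + 1) (by omega)]
  · apply Real.sqrt_le_iff.2 ⟨ha0 1, ?_⟩
    refine le_trans ?_ (hEi 1 le_rfl)
    rcases le_or_gt 1 N with h | h
    · refine dy_mono T (E 1) _ (hEd 1 le_rfl h) (fun t ht => ?_) _ (hτ 1)
      simp [hX0]
    · rw [hEbig 1 h, hEbig 1 h]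
  · rcases le_or_gt (n + 1) N with h | h
    · have h1 := dy_mono T (fun t => E (n + 1) t - 2 * Φ * g n * d (n + 1) * I n t) _
        (fun t ht => (hEd (n + 1) (by omega) h t ht).sub
          (((hId n t).hasDerivWithinAt (s := Icc 0 T)).const_mul (2 * Φ * g n * d (n + 1))))
        (fun t ht => by
          simp only [Nat.add_sub_cancel]
          have h2 := hXd (n + 1) (by omega) t ht
          have h3 := kk_pos β n
          have h4 := hgpos n hn
          have h5 : 2 * Φ * g n * d (n + 1) * (kk β n / g n * X n t ^ 2)
              = 2 * (kk β n * X n t ^ 2) * (Φ * d (n + 1)) := by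
            field_simp
          have h6 : φ n * X (n + 1) t ≤ Φ * d (n + 1) := by
            calc _ ≤ |φ n * X (n + 1) t| := le_abs_self _
              _ = |φ n| * |X (n + 1) t| := abs_mul _ _
              _ ≤ Φ * d (n + 1) := by
                have := hΦ n
                gcongr
                exact (abs_nonneg _).trans this
          rw [h5]
          have h7 : 0 ≤ kk β n * X n t ^ 2 := by positivity
          nlinarith [mul_le_mul_of_nonneg_left h6 h7]) _ (hτ (n + 1))
      simp only [hI0, mul_zero, sub_zero] at h1
      have h2 := hEi (n + 1) (by omega)
      have h3 := hErec n (by omega) (τ (n + 1))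
      have h4 := hτm n _ (hτ (n + 1))
      have h5 : 2 * I n (τ (n + 1)) ≤ d n ^ 2 - d (n + 1) ^ 2 := by
        rw [hd2 n hn, hd2 (n + 1) (by omega)]
        nlinarith [sq_nonneg (X n (τ (n + 1)))]
      have h6 : 0 ≤ Φ * g n * d (n + 1) := by
        have := hgpos n hn
        have := hd0 (n + 1)
        have : 0 ≤ Φ := (abs_nonneg _).trans (hΦ 0)
        positivity
      have h7 := mul_le_mul_of_nonneg_left h5 h6
      rw [← hd2 (n + 1) (by omega)] at h1
      linarith
    · have h1 : d (n + 1) = 0 := by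
        simp only [hd, hEbig (n + 1) h, Real.sqrt_zero]
      rw [h1]
      have := sq_nonneg (a (n + 1))
      simpa using this

lemma dy_alg (β : ℝ) (φ g : ℕ → ℝ) (X Y : ℕ → ℝ) (hX0 : X 0 = 0) (hY0 : Y 0 = 0) (N : ℕ) :
    ∑ n ∈ Finset.range N, (Y (n + 1) - X (n + 1)) *
      (dyRhs β φ g Y (n + 1) - dyRhs β φ g X (n + 1)) =
    ∑ n ∈ Finset.range N, (φ (n + 1) * kk β (n + 1) *
        (X (n + 1) * (Y (n + 1) - X (n + 1)) * (Y (n + 1 + 1) - X (n + 1 + 1))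
          - X (n + 1 + 1) * (Y (n + 1) - X (n + 1)) ^ 2)
        - kk β (n + 1) / g (n + 1) * (Y (n + 1) - X (n + 1)) ^ 2)
      - 2 * φ N * kk β N * X N * (Y N - X N) * (Y (N + 1) - X (N + 1))
      - φ N * kk β N * (Y N - X N) ^ 2 * (Y (N + 1) - X (N + 1)) := by
  induction N with
  | zero => simp [hX0, hY0]
  | succ N ih =>
    rw [Finset.sum_range_succ, Finset.sum_range_succ, ih]
    simp only [dyRhs, Nat.add_sub_cancel]
    ring

lemma dy_bdry (p q r u f Φ : ℝ) (hf : |f| ≤ Φ) :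
    f * (-(p * (r - p) * (u - q)) - q * (r - p) ^ 2 - (r - p) ^ 2 * (u - q))
      ≤ 16 * Φ * (|p| ^ 3 + |q| ^ 3 + |r| ^ 3 + |u| ^ 3) := by
  obtain ⟨S, hp, hq, hr, hu, hS⟩ : ∃ S, |p| ≤ S ∧ |q| ≤ S ∧ |r| ≤ S ∧ |u| ≤ S ∧
      S ^ 3 ≤ |p| ^ 3 + |q| ^ 3 + |r| ^ 3 + |u| ^ 3 := by
    have h1 : 0 ≤ |p| ^ 3 := by positivity
    have h2 : 0 ≤ |q| ^ 3 := by positivity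
    have h3 : 0 ≤ |r| ^ 3 := by positivity
    have h4 : 0 ≤ |u| ^ 3 := by positivity
    refine ⟨max (max |p| |q|) (max |r| |u|), by simp, by simp, by simp, by simp, ?_⟩
    rcases max_choice (max |p| |q|) (max |r| |u|) with h | h <;> rw [h]
    · rcases max_choice |p| |q| with h | h <;> rw [h] <;> linarith
    · rcases max_choice |r| |u| with h | h <;> rw [h] <;> linarith
  have hS0 : 0 ≤ S := (abs_nonneg _).trans hp
  have hΦ0 : 0 ≤ Φ := (abs_nonneg _).trans hf
  have hd : |r - p| ≤ 2 * S := (abs_sub _ _).trans (by linarith)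
  have he : |u - q| ≤ 2 * S := (abs_sub _ _).trans (by linarith)
  have h1 : |p * (r - p) * (u - q)| ≤ S * (2 * S) * (2 * S) := by
    rw [abs_mul, abs_mul]; gcongr
  have h2 : |q * (r - p) ^ 2| ≤ S * (2 * S) ^ 2 := by
    rw [abs_mul, abs_pow]; gcongr
  have h3 : |(r - p) ^ 2 * (u - q)| ≤ (2 * S) ^ 2 * (2 * S) := by
    rw [abs_mul, abs_pow]; gcongr
  have h4 : |-(p * (r - p) * (u - q)) - q * (r - p) ^ 2 - (r - p) ^ 2 * (u - q)| ≤ 16 * S ^ 3 := by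
    rw [abs_le] at *
    constructor <;> nlinarith
  calc _ ≤ |f * (-(p * (r - p) * (u - q)) - q * (r - p) ^ 2 - (r - p) ^ 2 * (u - q))| :=
        le_abs_self _
    _ ≤ Φ * (16 * S ^ 3) := by rw [abs_mul]; gcongr
    _ = 16 * Φ * S ^ 3 := by ring
    _ ≤ _ := by gcongr

lemma dy_term (f X1 X2 D1 D2 c1 c2 Φ : ℝ) (hf : |f| ≤ Φ) (h1 : |X1| ≤ c1) (h2 : |X2| ≤ c2) :
    f * (X1 * D1 * D2 - X2 * D1 ^ 2) ≤ Φ * (c1 / 2 + c2) * D1 ^ 2 + Φ * (c1 / 2) * D2 ^ 2 := by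
  have hc1 : 0 ≤ c1 := (abs_nonneg _).trans h1
  have hc2 : 0 ≤ c2 := (abs_nonneg _).trans h2
  have hΦ0 : 0 ≤ Φ := (abs_nonneg _).trans hf
  have h3 : |X1 * D1 * D2| ≤ c1 * ((D1 ^ 2 + D2 ^ 2) / 2) := by
    rw [mul_assoc, abs_mul]
    have : |D1 * D2| ≤ (D1 ^ 2 + D2 ^ 2) / 2 := by
      rw [abs_le]; constructor <;> nlinarith [sq_nonneg (D1 - D2), sq_nonneg (D1 + D2)]
    gcongr
  have h4 : |X2 * D1 ^ 2| ≤ c2 * D1 ^ 2 := by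
    rw [abs_mul, abs_of_nonneg (sq_nonneg D1)]; gcongr
  have h5 : |X1 * D1 * D2 - X2 * D1 ^ 2| ≤ c1 * ((D1 ^ 2 + D2 ^ 2) / 2) + c2 * D1 ^ 2 :=
    (abs_sub _ _).trans (add_le_add h3 h4)
  calc _ ≤ |f * (X1 * D1 * D2 - X2 * D1 ^ 2)| := le_abs_self _
    _ ≤ Φ * (c1 * ((D1 ^ 2 + D2 ^ 2) / 2) + c2 * D1 ^ 2) := by rw [abs_mul]; gcongr
    _ = _ := by ring

lemma dy_ineq (β : ℝ) (φ g : ℕ → ℝ) (hgpos : ∀ n : ℕ, 1 ≤ n → 0 < g n)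
    (Φ : ℝ) (hΦ : ∀ n, |φ n| ≤ Φ) (c : ℕ → ℝ) (K : ℝ) (hK : 0 ≤ K)
    (H1 : ∀ n, 1 ≤ n → Φ * kk β n * (c n / 2 + c (n + 1)) ≤ kk β n / g n / 2 + K)
    (H2 : ∀ n, 1 ≤ n → Φ * kk β n * (c n / 2) ≤ kk β (n + 1) / g (n + 1) / 2 + K)
    (X Y : ℕ → ℝ) (hX0 : X 0 = 0) (hY0 : Y 0 = 0) (hXc : ∀ n, 1 ≤ n → |X n| ≤ c n) (P : ℕ) :
    ∑ n ∈ Finset.range (P + 1), (Y (n + 1) - X (n + 1)) *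
      (dyRhs β φ g Y (n + 1) - dyRhs β φ g X (n + 1)) ≤
    2 * K * ∑ n ∈ Finset.range (P + 1), (Y (n + 1) - X (n + 1)) ^ 2 +
      16 * Φ * (kk β (P + 1) * (|X (P + 1)| ^ 3 + |X (P + 1 + 1)| ^ 3
        + |Y (P + 1)| ^ 3 + |Y (P + 1 + 1)| ^ 3)) := by
  rw [dy_alg β φ g X Y hX0 hY0 (P + 1), Finset.sum_sub_distrib, Finset.sum_range_succ]
  set D : ℕ → ℝ := fun n => Y n - X n with hD
  have hb := dy_bdry (X (P + 1)) (X (P + 1 + 1)) (Y (P + 1)) (Y (P + 1 + 1)) (φ (P + 1)) Φ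
    (hΦ (P + 1))
  have hkp := kk_pos β (P + 1)
  have hb' := mul_le_mul_of_nonneg_left hb hkp.le
  set q : ℕ → ℝ := fun n => (kk β (n + 1) / g (n + 1) / 2 + K) * D (n + 1) ^ 2 with hq
  have hq0 : ∀ n, 0 ≤ q n := fun n => by
    have := kk_pos β (n + 1)
    have := hgpos (n + 1) (by omega)
    positivity
  have hsum : ∑ n ∈ Finset.range P, φ (n + 1) * kk β (n + 1) *
        (X (n + 1) * (Y (n + 1) - X (n + 1)) * (Y (n + 1 + 1) - X (n + 1 + 1))
          - X (n + 1 + 1) * (Y (n + 1) - X (n + 1)) ^ 2) ≤ ∑ n ∈ Finset.range P, (q n + q (n + 1)) := by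
    refine Finset.sum_le_sum fun n _ => ?_
    have hk := kk_pos β (n + 1)
    have h1 := dy_term (φ (n + 1)) (X (n + 1)) (X (n + 1 + 1)) (D (n + 1)) (D (n + 1 + 1)) _ _ Φ
      (hΦ (n + 1)) (hXc (n + 1) (by omega)) (hXc (n + 1 + 1) (by omega))
    have h2 := mul_le_mul_of_nonneg_left h1 hk.le
    have h3 := mul_le_mul_of_nonneg_right (H1 (n + 1) (by omega)) (sq_nonneg (D (n + 1)))
    have h4 := mul_le_mul_of_nonneg_right (H2 (n + 1) (by omega)) (sq_nonneg (D (n + 1 + 1)))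
    simp only [hq]
    simp only [hD] at h2 h3 h4 ⊢
    linarith
  have hsum2 : ∑ n ∈ Finset.range P, (q n + q (n + 1)) ≤ 2 * ∑ n ∈ Finset.range (P + 1), q n := by
    rw [Finset.sum_add_distrib]
    have h1 := Finset.sum_range_succ q P
    have h2 := Finset.sum_range_succ' q P
    have := hq0 0
    have := hq0 P
    linarith
  have hsum3 : 2 * ∑ n ∈ Finset.range (P + 1), q n =
      ∑ n ∈ Finset.range (P + 1), kk β (n + 1) / g (n + 1) * (Y (n + 1) - X (n + 1)) ^ 2
      + 2 * K * ∑ n ∈ Finset.range (P + 1), (Y (n + 1) - X (n + 1)) ^ 2 := by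
    rw [Finset.mul_sum, Finset.mul_sum, ← Finset.sum_add_distrib]
    refine Finset.sum_congr rfl fun n _ => ?_
    simp only [hq, hD]; ring
  linarith

lemma dy_diff (β : ℝ) (φ g : ℕ → ℝ) (hgpos : ∀ n : ℕ, 1 ≤ n → 0 < g n)
    (Φ : ℝ) (hΦ : ∀ n, |φ n| ≤ Φ) (c : ℕ → ℝ) (K : ℝ) (hK : 0 ≤ K)
    (H1 : ∀ n, 1 ≤ n → Φ * kk β n * (c n / 2 + c (n + 1)) ≤ kk β n / g n / 2 + K)
    (H2 : ∀ n, 1 ≤ n → Φ * kk β n * (c n / 2) ≤ kk β (n + 1) / g (n + 1) / 2 + K)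
    (X Y : ℕ → ℝ → ℝ) (T : ℝ) (P : ℕ) (hXcont : ∀ n, Continuous (X n))
    (hYcont : ∀ n, Continuous (Y n)) (hX0 : ∀ t, X 0 t = 0) (hY0 : ∀ t, Y 0 t = 0)
    (hXc : ∀ n, 1 ≤ n → ∀ t ∈ Icc (0 : ℝ) T, |X n t| ≤ c n)
    (hi : ∀ n, 1 ≤ n → n ≤ P + 1 → X n 0 = Y n 0)
    (hX : ∀ n, 1 ≤ n → n ≤ P + 1 → ∀ t ∈ Icc (0 : ℝ) T,
        HasDerivWithinAt (X n) (dyRhs β φ g (fun m => X m t) n) (Icc 0 T) t)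
    (hY : ∀ n, 1 ≤ n → n ≤ P + 1 → ∀ t ∈ Icc (0 : ℝ) T,
        HasDerivWithinAt (Y n) (dyRhs β φ g (fun m => Y m t) n) (Icc 0 T) t) :
    ∀ t ∈ Icc (0 : ℝ) T, ∑ n ∈ Finset.range (P + 1), (Y (n + 1) t - X (n + 1) t) ^ 2 ≤
      Real.exp (4 * K * T) * (32 * Φ * ∫ u in (0 : ℝ)..T, kk β (P + 1) * (|X (P + 1) u| ^ 3
        + |X (P + 1 + 1) u| ^ 3 + |Y (P + 1) u| ^ 3 + |Y (P + 1 + 1) u| ^ 3)) := by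
  have hΦ0 : 0 ≤ Φ := (abs_nonneg _).trans (hΦ 0)
  set B : ℝ → ℝ := fun u => kk β (P + 1) * (|X (P + 1) u| ^ 3
        + |X (P + 1 + 1) u| ^ 3 + |Y (P + 1) u| ^ 3 + |Y (P + 1 + 1) u| ^ 3) with hB
  have hBc : Continuous B := by
    have h1 := hXcont (P + 1)
    have h2 := hXcont (P + 1 + 1)
    have h3 := hYcont (P + 1)
    have h4 := hYcont (P + 1 + 1)
    fun_prop
  have hB0 : ∀ u, 0 ≤ B u := fun u => by
    have := kk_pos β (P + 1)
    positivity
  set J : ℝ → ℝ := fun t => ∫ u in (0 : ℝ)..t, B u with hJ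
  have hJd : ∀ t, HasDerivAt J (B t) t := fun t => (hBc.integral_hasStrictDerivAt 0 t).hasDerivAt
  set S : ℝ → ℝ := fun t => ∑ n ∈ Finset.range (P + 1), (Y (n + 1) t - X (n + 1) t) ^ 2 with hS
  set S' : ℝ → ℝ := fun t => 2 * ∑ n ∈ Finset.range (P + 1), (Y (n + 1) t - X (n + 1) t) *
    (dyRhs β φ g (fun m => Y m t) (n + 1) - dyRhs β φ g (fun m => X m t) (n + 1)) with hS'
  have hSd : ∀ t ∈ Icc (0 : ℝ) T, HasDerivWithinAt S (S' t) (Icc 0 T) t := by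
    intro t ht
    simp only [hS', Finset.mul_sum]
    refine HasDerivWithinAt.fun_sum fun n hn => ?_
    simp only [Finset.mem_range] at hn
    have := ((hY (n + 1) (by omega) (by omega) t ht).fun_sub
      (hX (n + 1) (by omega) (by omega) t ht)).fun_pow 2
    refine this.congr_deriv ?_
    simp; ring
  have hexp : ∀ t, HasDerivAt (fun t => Real.exp (-(4 * K * t)))
      (Real.exp (-(4 * K * t)) * (-(4 * K))) t := fun t => by
    have := (((hasDerivAt_id t).const_mul (4 * K)).neg).exp
    simpa using this
  have hm := dy_mono T (fun t => Real.exp (-(4 * K * t)) * S t - 32 * Φ * J t) _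
    (fun t ht => (((hexp t).hasDerivWithinAt (s := Icc 0 T)).fun_mul (hSd t ht)).fun_sub
      (((hJd t).hasDerivWithinAt (s := Icc 0 T)).const_mul (32 * Φ))) (fun t ht => by
      have h1 := dy_ineq β φ g hgpos Φ hΦ c K hK H1 H2 (fun m => X m t) (fun m => Y m t)
        (hX0 t) (hY0 t) (fun n hn => hXc n hn t ht) P
      have h2 : S' t ≤ 4 * K * S t + 32 * Φ * B t := by
        simp only [hS', hS, hB]
        linarith
      have h3 : Real.exp (-(4 * K * t)) ≤ 1 := by
        rw [Real.exp_le_one_iff]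
        have := ht.1
        have : 0 ≤ 4 * K * t := by positivity
        linarith
      have h4 := Real.exp_pos (-(4 * K * t))
      have h5 : 0 ≤ 32 * Φ * B t := by have := hB0 t; positivity
      have h6 := mul_le_mul_of_nonneg_left h2 h4.le
      have h7 := mul_le_mul_of_nonneg_right h3 h5
      linarith)
  intro t ht
  have h1 := hm t ht
  have h2 : S 0 = 0 := by
    refine Finset.sum_eq_zero fun n hn => ?_
    simp only [Finset.mem_range] at hn
    rw [hi (n + 1) (by omega) (by omega)]; ring
  have h3 : J 0 = 0 := by simp [hJ]
  simp only [h2, h3, mul_zero, sub_zero] at h1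
  have h4 : J t ≤ J T := by
    refine intervalIntegral.integral_mono_interval le_rfl ht.1 ht.2 ?_
      (hBc.intervalIntegrable _ _)
    exact Eventually.of_forall hB0
  have hJ0 : 0 ≤ J T := intervalIntegral.integral_nonneg (ht.1.trans ht.2) fun u _ => hB0 u
  calc S t = Real.exp (4 * K * t) * (Real.exp (-(4 * K * t)) * S t) := by
        rw [← mul_assoc, ← Real.exp_add]; simp
    _ ≤ Real.exp (4 * K * T) * (32 * Φ * J T) := by
        have h5 : Real.exp (-(4 * K * t)) * S t ≤ 32 * Φ * J T := by
          have : 32 * Φ * J t ≤ 32 * Φ * J T := by gcongr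
          linarith
        have h6 := ht.2
        have h7 : 0 ≤ 32 * Φ * J T := by positivity
        calc _ ≤ Real.exp (4 * K * t) * (32 * Φ * J T) := by gcongr
          _ ≤ _ := by gcongr

lemma dy_evK (u v : ℕ → ℝ) (h : ∀ᶠ n in atTop, u n ≤ v n) : ∃ K : ℝ, 0 ≤ K ∧ ∀ n, u n ≤ v n + K := by
  obtain ⟨N, hN⟩ := eventually_atTop.1 h
  refine ⟨∑ i ∈ Finset.range N, |u i - v i|, Finset.sum_nonneg fun i _ => abs_nonneg _, fun n => ?_⟩
  rcases lt_or_ge n N with hn | hn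
  · have h1 := Finset.single_le_sum (f := fun i => |u i - v i|) (fun i _ => abs_nonneg _)
      (Finset.mem_range.2 hn)
    have h2 := le_abs_self (u n - v n)
    linarith
  · have h1 := hN n hn
    have h2 : 0 ≤ ∑ i ∈ Finset.range N, |u i - v i| := Finset.sum_nonneg fun i _ => abs_nonneg _
    linarith

lemma kk_mono (β : ℝ) (hβ : 0 < β) (n : ℕ) : kk β n ≤ kk β (n + 1) := by
  unfold kk
  apply Real.rpow_le_rpow_of_exponent_le (by norm_num)
  push_cast
  nlinarith

lemma dy_const (β : ℝ) (hβ : 0 < β) (g : ℕ → ℝ) (s : ℝ) (hs : 0 < s)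
    (hgpos : ∀ n : ℕ, 1 ≤ n → 0 < g n)
    (hg0 : Tendsto (fun n : ℕ => g n * (2 : ℝ) ^ (-s * (n : ℝ))) atTop (𝓝 0))
    (Φ W : ℝ) (hΦ : 0 ≤ Φ) (hW : 0 ≤ W) (c : ℕ → ℝ)
    (hc : ∀ n : ℕ, c n = W * (2 : ℝ) ^ (-s * (n : ℝ))) :
    ∃ K : ℝ, 0 ≤ K ∧
      (∀ n, 1 ≤ n → Φ * kk β n * (c n / 2 + c (n + 1)) ≤ kk β n / g n / 2 + K) ∧
      (∀ n, 1 ≤ n → Φ * kk β n * (c n / 2) ≤ kk β (n + 1) / g (n + 1) / 2 + K) := by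
  have hcs : ∀ n, c n = (2 : ℝ) ^ s * c (n + 1) := fun n => by
    rw [hc, hc]
    have : (2 : ℝ) ^ (-s * (n : ℝ)) = (2 : ℝ) ^ s * (2 : ℝ) ^ (-s * ((n + 1 : ℕ) : ℝ)) := by
      rw [← Real.rpow_add (by norm_num)]
      congr 1
      push_cast; ring
    rw [this]; ring
  have h2s : 1 < (2 : ℝ) ^ s := Real.one_lt_rpow (by norm_num) hs
  have hc0 : ∀ n, 0 ≤ c n := fun n => by rw [hc]; positivity
  have hgc : Tendsto (fun n => g n * c n) atTop (𝓝 0) := by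
    have := hg0.const_mul W
    rw [mul_zero] at this
    refine this.congr fun n => ?_
    rw [hc]; ring
  have h1 : Tendsto (fun n => Φ * 3 * (g n * c n)) atTop (𝓝 0) := by
    simpa using hgc.const_mul (Φ * 3)
  have h2 : Tendsto (fun n => Φ * (2 : ℝ) ^ s * (g (n + 1) * c (n + 1))) atTop (𝓝 0) := by
    simpa using ((tendsto_add_atTop_iff_nat 1).2 hgc).const_mul (Φ * (2 : ℝ) ^ s)
  obtain ⟨K1, hK1, H1⟩ := dy_evK (fun n => Φ * kk β n * (c n / 2 + c (n + 1)))
    (fun n => kk β n / g n / 2) (by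
      filter_upwards [h1.eventually_le_const zero_lt_one, eventually_ge_atTop 1] with n hn hn1
      have hg := hgpos n hn1
      have hk := kk_pos β n
      rw [div_div, le_div_iff₀ (by positivity)]
      have h3 : c (n + 1) ≤ c n := by
        rw [hcs n]; nlinarith [hc0 (n + 1)]
      have h4 : Φ * kk β n * (c n / 2 + c (n + 1)) * (g n * 2)
          ≤ Φ * kk β n * (c n / 2 + c n) * (g n * 2) := by gcongr
      have h5 : Φ * kk β n * (c n / 2 + c n) * (g n * 2) = kk β n * (Φ * 3 * (g n * c n)) := by ring
      nlinarith)
  obtain ⟨K2, hK2, H2⟩ := dy_evK (fun n => Φ * kk β n * (c n / 2))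
    (fun n => kk β (n + 1) / g (n + 1) / 2) (by
      filter_upwards [h2.eventually_le_const zero_lt_one] with n hn
      have hg := hgpos (n + 1) (by omega)
      have hk := kk_pos β n
      have hk1 := kk_mono β hβ n
      rw [div_div, le_div_iff₀ (by positivity)]
      rw [hcs n]
      have h5 : Φ * kk β n * ((2 : ℝ) ^ s * c (n + 1) / 2) * (g (n + 1) * 2)
        = kk β n * (Φ * (2 : ℝ) ^ s * (g (n + 1) * c (n + 1))) := by ring
      rw [h5]
      nlinarith)
  refine ⟨K1 + K2, by positivity, fun n _ => ?_, fun n _ => ?_⟩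
  · have := H1 n
    linarith
  · have := H2 n
    linarith

lemma dy_limit (u δ : ℕ → ℝ) (hδ : Tendsto δ atTop (𝓝 0)) (N0 : ℕ)
    (h : ∀ N M, N0 ≤ N → N ≤ M → (u N - u M) ^ 2 ≤ δ N) : ∃ l, Tendsto u atTop (𝓝 l) := by
  apply cauchySeq_tendsto_of_complete
  rw [Metric.cauchySeq_iff']
  intro ε hε
  obtain ⟨N, hN⟩ := eventually_atTop.1 (hδ.eventually_lt_const (u := ε ^ 2) (by positivity))
  refine ⟨max N N0, fun n hn => ?_⟩
  have h1 := h (max N N0) n (le_max_right _ _) hn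
  have h2 := hN (max N N0) (le_max_left _ _)
  rw [dist_comm, Real.dist_eq]
  exact abs_lt_of_sq_lt_sq (by linarith) hε.le

lemma dy_L3_tendsto (β : ℝ) (Z : ℕ → ℝ → ℝ) (hZ : ∀ n, Continuous (Z n)) (T : ℝ) (hT : 0 ≤ T)
    (h : MemL3W β Z T) :
    Tendsto (fun n => ∫ u in (0 : ℝ)..T, kk β n * |Z n u| ^ 3) atTop (𝓝 0) := by
  rw [← tendsto_add_atTop_iff_nat 1]
  have hkk : ∀ n : ℕ, (2 : ℝ) ^ (β * ((n : ℝ) + 1)) = kk β (n + 1) := fun n => by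
    simp [kk]
  unfold MemL3W at h
  simp only [hkk] at h
  have hc : ∀ n, Continuous fun u => kk β (n + 1) * |Z (n + 1) u| ^ 3 := fun n => by
    have := hZ (n + 1)
    fun_prop
  rw [lintegral_tsum (fun n => (hc n).measurable.ennreal_ofReal.aemeasurable)] at h
  have h1 := ENNReal.tendsto_atTop_zero_of_tsum_ne_top h.ne
  have h2 := (ENNReal.tendsto_toReal ENNReal.zero_ne_top).comp h1
  simp only [ENNReal.toReal_zero] at h2
  refine h2.congr fun n => ?_
  rw [intervalIntegral.integral_of_le hT, integral_eq_lintegral_of_nonneg_ae]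
  · rfl
  · exact Eventually.of_forall fun u => by
      have := kk_pos β (n + 1)
      simp only [Pi.zero_apply]
      positivity
  · exact (hc n).aestronglyMeasurable

lemma dy_unique_s1 (β : ℝ) (hβ : 0 < β) (φ g : ℕ → ℝ) (hgpos : ∀ n : ℕ, 1 ≤ n → 0 < g n)
    (Φ : ℝ) (hΦ : ∀ n, |φ n| ≤ Φ) (c : ℕ → ℝ) (K : ℝ) (hK : 0 ≤ K)
    (H1 : ∀ n, 1 ≤ n → Φ * kk β n * (c n / 2 + c (n + 1)) ≤ kk β n / g n / 2 + K)
    (H2 : ∀ n, 1 ≤ n → Φ * kk β n * (c n / 2) ≤ kk β (n + 1) / g (n + 1) / 2 + K)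
    (x : ℕ → ℝ) (X Y : ℕ → ℝ → ℝ) (hXcont : ∀ n, Continuous (X n))
    (hX : IsDyadicSolution β φ g x X) (hY : IsDyadicSolution β φ g x Y)
    (hXL : ∀ T : ℝ, 0 < T → MemL3W β X T) (hYL : ∀ T : ℝ, 0 < T → MemL3W β Y T)
    (hXc : ∀ n t, |X n t| ≤ c n) :
    ∀ n : ℕ, 1 ≤ n → ∀ t : ℝ, 0 ≤ t → Y n t = X n t := by
  intro n hn t ht
  obtain ⟨hX0, hXi, hXd⟩ := hX
  obtain ⟨hY0, hYi, hYd⟩ := hY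
  set Z : ℕ → ℝ → ℝ := fun n t => Y n (max t 0) with hZ
  have hZY : ∀ n t, 0 ≤ t → Z n t = Y n t := fun n t ht => by simp [hZ, max_eq_left ht]
  have hZcont : ∀ n, Continuous (Z n) := by
    intro n
    rcases Nat.eq_zero_or_pos n with h | h
    · subst h
      simp only [hZ, hY0]
      exact continuous_const
    · have h1 : ContinuousOn (Y n) (Ici 0) := fun t ht => (hYd n h t ht).continuousWithinAt
      exact h1.comp_continuous (by fun_prop) (fun t => mem_Ici.2 (le_max_right _ _))
  set T := t + 1 with hT
  have hTpos : 0 < T := by linarith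
  have hZL : MemL3W β Z T := by
    have := hYL T hTpos
    unfold MemL3W at this ⊢
    refine lt_of_eq_of_lt ?_ this
    refine setLIntegral_congr_fun measurableSet_Ioc fun u hu => ?_
    simp only [hZY _ u hu.1.le]
  have hXt := dy_L3_tendsto β X hXcont T hTpos.le (hXL T hTpos)
  have hZt := dy_L3_tendsto β Z hZcont T hTpos.le hZL
  set GX : ℕ → ℝ := fun n => ∫ u in (0 : ℝ)..T, kk β n * |X n u| ^ 3
  set GZ : ℕ → ℝ := fun n => ∫ u in (0 : ℝ)..T, kk β n * |Z n u| ^ 3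
  have hΦ0 : 0 ≤ Φ := (abs_nonneg _).trans (hΦ 0)
  have hsub : Icc 0 T ⊆ Ici (0 : ℝ) := fun u hu => hu.1
  have hmain : ∀ P, n ≤ P + 1 → (Z n t - X n t) ^ 2 ≤
      Real.exp (4 * K * T) * (32 * Φ * (GX (P + 1) + GX (P + 1 + 1) + GZ (P + 1) + GZ (P + 1 + 1))) := by
    intro P hP
    have h1 := dy_diff β φ g hgpos Φ hΦ c K hK H1 H2 X Z T P hXcont hZcont hX0
      (fun t => by simp [hZ, hY0]) (fun n _ t _ => hXc n t)
      (fun n h1 h2 => by rw [hZY n 0 le_rfl, hXi n h1, hYi n h1])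
      (fun n h1 h2 t ht => (hXd n h1 t ht.1).mono hsub)
      (fun n h1 h2 t ht => by
        have h3 := (hYd n h1 t ht.1).mono hsub
        have h4 : dyRhs β φ g (fun m => Z m t) n = dyRhs β φ g (fun m => Y m t) n := by
          simp only [dyRhs, hZY _ t ht.1]
        rw [h4]
        exact h3.congr_of_mem (fun u hu => hZY n u hu.1) ht) t ⟨ht, by linarith⟩
    have h2 : (Z n t - X n t) ^ 2 ≤
        ∑ n ∈ Finset.range (P + 1), (Z (n + 1) t - X (n + 1) t) ^ 2 := by
      have := Finset.single_le_sum (f := fun n => (Z (n + 1) t - X (n + 1) t) ^ 2)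
        (fun i _ => sq_nonneg _) (Finset.mem_range.2 (show n - 1 < P + 1 by omega))
      simp only [Nat.sub_add_cancel hn] at this
      exact this
    refine h2.trans (h1.trans ?_)
    have hk := kk_mono β hβ (P + 1)
    have hkp := kk_pos β (P + 1)
    have hcX : ∀ n, Continuous fun u => kk β n * |X n u| ^ 3 := fun n => by
      have := hXcont n
      fun_prop
    have hcZ : ∀ n, Continuous fun u => kk β n * |Z n u| ^ 3 := fun n => by
      have := hZcont n
      fun_prop
    have iX := fun n => (hcX n).intervalIntegrable (μ := volume) 0 T
    have iZ := fun n => (hcZ n).intervalIntegrable (μ := volume) 0 T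
    have h3 : (∫ u in (0 : ℝ)..T, kk β (P + 1) * (|X (P + 1) u| ^ 3
        + |X (P + 1 + 1) u| ^ 3 + |Z (P + 1) u| ^ 3 + |Z (P + 1 + 1) u| ^ 3))
        ≤ GX (P + 1) + GX (P + 1 + 1) + GZ (P + 1) + GZ (P + 1 + 1) := by
      rw [← intervalIntegral.integral_add (iX _) (iX _),
        ← intervalIntegral.integral_add ((iX _).add (iX _)) (iZ _),
        ← intervalIntegral.integral_add (((iX _).add (iX _)).add (iZ _)) (iZ _)]
      refine intervalIntegral.integral_mono_on hTpos.le ?_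
        ((((iX _).add (iX _)).add (iZ _)).add (iZ _)) fun u hu => ?_
      · apply Continuous.intervalIntegrable
        have h1 := hXcont (P + 1)
        have h2 := hXcont (P + 1 + 1)
        have h3 := hZcont (P + 1)
        have h4 := hZcont (P + 1 + 1)
        fun_prop
      · have e1 : 0 ≤ |X (P + 1 + 1) u| ^ 3 := by positivity
        have e2 : 0 ≤ |Z (P + 1 + 1) u| ^ 3 := by positivity
        have e3 := mul_le_mul_of_nonneg_right hk e1
        have e4 := mul_le_mul_of_nonneg_right hk e2
        linarith
    gcongr
  have hlim : Tendsto (fun P => Real.exp (4 * K * T) *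
      (32 * Φ * (GX (P + 1) + GX (P + 1 + 1) + GZ (P + 1) + GZ (P + 1 + 1)))) atTop (𝓝 0) := by
    have a1 := (tendsto_add_atTop_iff_nat 1).2 hXt
    have a2 := (tendsto_add_atTop_iff_nat 2).2 hXt
    have a3 := (tendsto_add_atTop_iff_nat 1).2 hZt
    have a4 := (tendsto_add_atTop_iff_nat 2).2 hZt
    have := ((((a1.add a2).add a3).add a4).const_mul (32 * Φ)).const_mul (Real.exp (4 * K * T))
    simpa using this
  have h5 : (Z n t - X n t) ^ 2 ≤ 0 :=
    ge_of_tendsto hlim (eventually_atTop.2 ⟨n, fun P hP => hmain P (by omega)⟩)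
  have h6 : Z n t - X n t = 0 := by
    have := sq_nonneg (Z n t - X n t)
    exact pow_eq_zero_iff (two_ne_zero) |>.1 (le_antisymm h5 this)
  rw [← hZY n t ht]
  linarith

lemma dy_exists (β : ℝ) (hβ : 0 < β) (φ g : ℕ → ℝ) (hgpos : ∀ n : ℕ, 1 ≤ n → 0 < g n)
    (Φ : ℝ) (hΦ : ∀ n, |φ n| ≤ Φ) (c : ℕ → ℝ) (hc0 : ∀ n, 0 ≤ c n) (hcm : ∀ n, c (n + 1) ≤ c n)
    (hkc : Tendsto (fun n => kk β n * c n ^ 3) atTop (𝓝 0)) (K : ℝ) (hK : 0 ≤ K)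
    (H1 : ∀ n, 1 ≤ n → Φ * kk β n * (c n / 2 + c (n + 1)) ≤ kk β n / g n / 2 + K)
    (H2 : ∀ n, 1 ≤ n → Φ * kk β n * (c n / 2) ≤ kk β (n + 1) / g (n + 1) / 2 + K)
    (x : ℕ → ℝ) (G : ℕ → ℕ → ℝ → ℝ) (hGc : ∀ N n, Continuous (G N n))
    (hG0 : ∀ N t, G N 0 t = 0) (hGi : ∀ N n, 1 ≤ n → n ≤ N → G N n 0 = x n)
    (hGd : ∀ N n : ℕ, 1 ≤ n → n ≤ N → ∀ t ∈ Icc (0 : ℝ) N,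
        HasDerivWithinAt (G N n) (dyRhs β φ g (fun m => G N m t) n) (Icc 0 N) t)
    (hGb : ∀ N n : ℕ, 1 ≤ n → ∀ t ∈ Icc (0 : ℝ) N, |G N n t| ≤ c n) :
    ∃ X : ℕ → ℝ → ℝ, (∀ n, Continuous (X n)) ∧ IsDyadicSolution β φ g x X ∧
      ∀ n t, Tendsto (fun N => G N n (max t 0)) atTop (𝓝 (X n t)) := by
  have hΦ0 : 0 ≤ Φ := (abs_nonneg _).trans (hΦ 0)
  have hGb' : ∀ N n : ℕ, ∀ t ∈ Icc (0 : ℝ) N, |G N n t| ≤ c n := by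
    intro N n t ht
    rcases Nat.eq_zero_or_pos n with h | h
    · subst h
      rw [hG0, abs_zero]; exact hc0 0
    · exact hGb N n h t ht
  set δ : ℝ → ℕ → ℝ := fun T N =>
    Real.exp (4 * K * T) * (32 * Φ * (kk β N * (4 * c N ^ 3) * T)) with hδ
  have hδ0 : ∀ T, Tendsto (δ T) atTop (𝓝 0) := fun T => by
    have := hkc.const_mul (Real.exp (4 * K * T) * (32 * Φ * 4 * T))
    rw [mul_zero] at this
    refine this.congr fun N => ?_
    simp only [hδ]; ring
  have hcau : ∀ (T : ℝ) (n N M : ℕ) (t : ℝ), 1 ≤ N → N ≤ M → T ≤ N → n ≤ N → t ∈ Icc (0 : ℝ) T →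
      (G N n t - G M n t) ^ 2 ≤ δ T N := by
    intro T n N M t hN hNM hTN hnN ht
    have hT0 : 0 ≤ T := ht.1.trans ht.2
    have hTM : T ≤ M := hTN.trans (by exact_mod_cast hNM)
    have hsubN : Icc 0 T ⊆ Icc (0 : ℝ) N := Icc_subset_Icc_right hTN
    have hsubM : Icc 0 T ⊆ Icc (0 : ℝ) M := Icc_subset_Icc_right hTM
    rcases Nat.eq_zero_or_pos n with h | h
    · subst h
      rw [hG0, hG0]
      have := kk_pos β N
      have := hc0 N
      rw [sub_self, zero_pow two_ne_zero]
      simp only [hδ]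
      positivity
    · obtain ⟨P, rfl⟩ : ∃ P, N = P + 1 := ⟨N - 1, by omega⟩
      have h1 := dy_diff β φ g hgpos Φ hΦ c K hK H1 H2 (G M) (G (P + 1)) T P (hGc M) (hGc _)
        (hG0 _) (hG0 _) (fun n _ t ht => hGb' M n t (hsubM ht))
        (fun n h1 h2 => by rw [hGi _ n h1 h2, hGi _ n h1 (by omega)])
        (fun n h1 h2 t ht => (hGd M n h1 (by omega) t (hsubM ht)).mono hsubM)
        (fun n h1 h2 t ht => (hGd _ n h1 h2 t (hsubN ht)).mono hsubN) t ht
      have h2 : (G (P + 1) n t - G M n t) ^ 2 ≤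
          ∑ n ∈ Finset.range (P + 1), (G (P + 1) (n + 1) t - G M (n + 1) t) ^ 2 := by
        have := Finset.single_le_sum (f := fun n => (G (P + 1) (n + 1) t - G M (n + 1) t) ^ 2)
          (fun i _ => sq_nonneg _) (Finset.mem_range.2 (show n - 1 < P + 1 by omega))
        simp only [Nat.sub_add_cancel h] at this
        exact this
      refine h2.trans (h1.trans ?_)
      simp only [hδ]
      have hkp := kk_pos β (P + 1)
      have h3 : (∫ u in (0 : ℝ)..T, kk β (P + 1) * (|G M (P + 1) u| ^ 3
        + |G M (P + 1 + 1) u| ^ 3 + |G (P + 1) (P + 1) u| ^ 3 + |G (P + 1) (P + 1 + 1) u| ^ 3))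
          ≤ ∫ u in (0 : ℝ)..T, kk β (P + 1) * (4 * c (P + 1) ^ 3) := by
        refine intervalIntegral.integral_mono_on hT0 ?_ (by simp) fun u hu => ?_
        · apply Continuous.intervalIntegrable
          have h1 := hGc M (P + 1)
          have h2 := hGc M (P + 1 + 1)
          have h3 := hGc (P + 1) (P + 1)
          have h4 := hGc (P + 1) (P + 1 + 1)
          fun_prop
        · have e1 := pow_le_pow_left₀ (abs_nonneg _) (hGb' M (P + 1) u (hsubM hu)) 3
          have e2 := pow_le_pow_left₀ (abs_nonneg _)
            ((hGb' M (P + 1 + 1) u (hsubM hu)).trans (hcm _)) 3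
          have e3 := pow_le_pow_left₀ (abs_nonneg _) (hGb' (P + 1) (P + 1) u (hsubN hu)) 3
          have e4 := pow_le_pow_left₀ (abs_nonneg _)
            ((hGb' (P + 1) (P + 1 + 1) u (hsubN hu)).trans (hcm _)) 3
          gcongr
          linarith
      rw [intervalIntegral.integral_const, smul_eq_mul, sub_zero, mul_comm T] at h3
      gcongr
  have hlimex : ∀ n t, ∃ l, Tendsto (fun N => G N n (max t 0)) atTop (𝓝 l) := by
    intro n t
    obtain ⟨N0, hN0⟩ := exists_nat_ge (max t 0)
    refine dy_limit _ (δ (max t 0)) (hδ0 _) (max (max N0 n) 1) fun N M h1 h2 => ?_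
    refine hcau (max t 0) n N M _ (by omega) h2 (hN0.trans ?_) (by omega) ⟨le_max_right _ _, le_rfl⟩
    have : N0 ≤ N := by omega
    exact_mod_cast this
  choose X hX using hlimex
  have hXn : ∀ n t, 0 ≤ t → Tendsto (fun N => G N n t) atTop (𝓝 (X n t)) := fun n t ht => by
    have := hX n t
    rwa [max_eq_left ht] at this
  have hunif : ∀ n T, 0 ≤ T → TendstoUniformlyOn (fun N t => G N n (max t 0)) (X n) atTop (Iic T) := by
    intro n T hT
    rw [Metric.tendstoUniformlyOn_iff]
    intro ε hε
    obtain ⟨N0, hN0⟩ := exists_nat_ge T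
    filter_upwards [(hδ0 T).eventually_lt_const (u := ε ^ 2) (by positivity),
      eventually_ge_atTop (max (max N0 n) 1)] with N hN hN1 t ht
    have hTN : T ≤ N := hN0.trans (by
      have : N0 ≤ N := by omega
      exact_mod_cast this)
    have h1 : (G N n (max t 0) - X n t) ^ 2 ≤ δ T N := by
      have h2 : Tendsto (fun M => (G N n (max t 0) - G M n (max t 0)) ^ 2) atTop
          (𝓝 ((G N n (max t 0) - X n t) ^ 2)) := ((hX n t).const_sub _).pow 2
      refine le_of_tendsto h2 (eventually_atTop.2 ⟨N, fun M hM => ?_⟩)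
      exact hcau T n N M _ (by omega) hM hTN (by omega) ⟨le_max_right _ _, max_le ht hT⟩
    rw [dist_comm, Real.dist_eq]
    exact abs_lt_of_sq_lt_sq (by linarith) hε.le
  have hXcont : ∀ n, Continuous (X n) := by
    intro n
    rw [continuous_iff_continuousAt]
    intro t
    have h1 : ContinuousOn (X n) (Iic (|t| + 1)) := by
      refine (hunif n (|t| + 1) (by positivity)).continuousOn (Frequently.of_forall fun N => ?_)
      exact ((hGc N n).comp (by fun_prop)).continuousOn
    exact h1.continuousAt (Iic_mem_nhds (by linarith [le_abs_self t]))
  refine ⟨X, hXcont, ⟨fun t => ?_, fun n hn => ?_, fun n hn t ht => ?_⟩, hX⟩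
  · refine tendsto_nhds_unique (hX 0 t) ?_
    simp only [hG0]
    exact tendsto_const_nhds
  · refine tendsto_nhds_unique (hXn n 0 le_rfl) ?_
    refine tendsto_const_nhds.congr' ?_
    filter_upwards [eventually_ge_atTop n] with N hN
    rw [hGi N n hn hN]
  · have hrc : Continuous fun u => dyRhs β φ g (fun m => X m u) n := by
      unfold dyRhs
      have h1 := hXcont (n - 1)
      have h2 := hXcont n
      have h3 := hXcont (n + 1)
      fun_prop
    have hint : ∀ t, 0 ≤ t → X n t = x n + ∫ u in (0 : ℝ)..t, dyRhs β φ g (fun m => X m u) n := by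
      intro t ht
      obtain ⟨N0, hN0⟩ := exists_nat_ge t
      have hGrc : ∀ N, Continuous fun u => dyRhs β φ g (fun m => G N m u) n := fun N => by
        unfold dyRhs
        have h1 := hGc N (n - 1)
        have h2 := hGc N n
        have h3 := hGc N (n + 1)
        fun_prop
      have h1 : Tendsto (fun N => x n + ∫ u in (0 : ℝ)..t, dyRhs β φ g (fun m => G N m u) n) atTop
          (𝓝 (x n + ∫ u in (0 : ℝ)..t, dyRhs β φ g (fun m => X m u) n)) := by
        refine Tendsto.const_add _ ?_
        refine intervalIntegral.tendsto_integral_filter_of_dominated_convergence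
          (fun _ => |φ (n - 1) * kk β (n - 1)| * c (n - 1) ^ 2 + |φ n * kk β n| * c n * c (n + 1)
            + |kk β n / g n| * c n) ?_ ?_ ?_ ?_
        · exact Eventually.of_forall fun N => (hGrc N).aestronglyMeasurable
        · filter_upwards [eventually_ge_atTop N0] with N hN
          refine Eventually.of_forall fun u hu => ?_
          rw [uIoc_of_le ht] at hu
          have hu' : u ∈ Icc (0 : ℝ) N := ⟨hu.1.le, hu.2.trans (hN0.trans (by exact_mod_cast hN))⟩
          have b1 := hGb' N (n - 1) u hu'
          have b2 := hGb' N n u hu'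
          have b3 := hGb' N (n + 1) u hu'
          have hcn := hc0 n
          rw [Real.norm_eq_abs]
          simp only [dyRhs]
          refine (abs_sub _ _).trans (add_le_add ((abs_sub _ _).trans (add_le_add ?_ ?_)) ?_)
          · rw [abs_mul, abs_pow]; gcongr
          · rw [abs_mul, abs_mul]; gcongr
          · rw [abs_mul]; gcongr
        · simp
        · refine Eventually.of_forall fun u hu => ?_
          rw [uIoc_of_le ht] at hu
          have t1 := hXn (n - 1) u hu.1.le
          have t2 := hXn n u hu.1.le
          have t3 := hXn (n + 1) u hu.1.le
          simp only [dyRhs]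
          exact (((t1.pow 2).const_mul _).sub ((t2.const_mul _).mul t3)).sub (t2.const_mul _)
      refine tendsto_nhds_unique (hXn n t ht) (h1.congr' ?_)
      filter_upwards [eventually_ge_atTop (max N0 n)] with N hN
      have hN0N : t ≤ N := hN0.trans (by
        have : N0 ≤ N := by omega
        exact_mod_cast this)
      rw [intervalIntegral.integral_eq_sub_of_hasDerivAt_of_le ht (hGc N n).continuousOn
        (fun u hu => ?_) ((hGrc N).intervalIntegrable _ _), hGi N n hn (by omega)]
      · ring
      · have hu' : u ∈ Ioo (0 : ℝ) N := ⟨hu.1, hu.2.trans_le hN0N⟩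
        exact (hGd N n hn (by omega) u (Ioo_subset_Icc_self hu')).hasDerivAt
          (Icc_mem_nhds hu'.1 hu'.2)
    have hd : HasDerivWithinAt (fun t => x n + ∫ u in (0 : ℝ)..t, dyRhs β φ g (fun m => X m u) n)
        (dyRhs β φ g (fun m => X m t) n) (Ici 0) t :=
      ((hrc.integral_hasStrictDerivAt 0 t).hasDerivAt.const_add (x n)).hasDerivWithinAt
    exact hd.congr_of_mem (fun u hu => hint u hu) ht

/-- Theorem 3.8 (main, general form): for `x ∈ Hˢ` with `s > β/3`, `g ∈ H⁻ˢ` non-decreasing,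
`gₙ 2^{-sn}` eventually non-increasing and `∑ 1/gₙ = ∞`, there is a solution in
`L^∞([0,∞); Hˢ)`, unique in `L³_loc([0,∞); W^{β/3,3})`. -/
theorem dyadic_global_existence_Hs
    (β : ℝ) (hβ : 0 < β) (φ g : ℕ → ℝ)
    (hφ : ∃ Φ : ℝ, ∀ n : ℕ, |φ n| ≤ Φ)
    (hgpos : ∀ n : ℕ, 1 ≤ n → 0 < g n)
    (s : ℝ) (hs : β / 3 < s)
    (x : ℕ → ℝ) (hx : MemHs s x)
    (hgHs : Summable fun n : ℕ => (2 : ℝ) ^ (-(2 * s) * ((n : ℝ) + 1)) * (g (n + 1)) ^ 2)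
    (hgmono : ∀ n m : ℕ, 1 ≤ n → n ≤ m → g n ≤ g m)
    (hgs : ∃ N : ℕ, ∀ n m : ℕ, N ≤ n → n ≤ m →
      g m * (2 : ℝ) ^ (-s * (m : ℝ)) ≤ g n * (2 : ℝ) ^ (-s * (n : ℝ)))
    (hgdiv : ¬ Summable fun n : ℕ => (g (n + 1))⁻¹) :
    ∃ X : ℕ → ℝ → ℝ, IsDyadicSolution β φ g x X ∧
      MemLinftyHs s X (Set.Ici 0) ∧
      (∀ T : ℝ, 0 < T → MemL3W β X T) ∧
      (∀ Y : ℕ → ℝ → ℝ, IsDyadicSolution β φ g x Y →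
        (∀ T : ℝ, 0 < T → MemL3W β Y T) →
        ∀ n : ℕ, 1 ≤ n → ∀ t : ℝ, 0 ≤ t → Y n t = X n t) := by
  obtain ⟨Φ₀, hΦ₀⟩ := hφ
  have hs0 : 0 < s := by linarith
  set Φ := |Φ₀| + 1 with hΦdef
  have hΦpos : 0 < Φ := by positivity
  have hΦ : ∀ n, |φ n| ≤ Φ := fun n => (hΦ₀ n).trans (by linarith [le_abs_self Φ₀])
  set p : ℕ → ℝ := fun n => (2 : ℝ) ^ (s * n) with hp
  have hpos : ∀ n, 0 < p n := fun n => by positivity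
  have hinv : ∀ n : ℕ, (2 : ℝ) ^ (-s * (n : ℝ)) * p n = 1 := fun n => by
    simp only [hp]
    rw [← Real.rpow_add (by norm_num)]
    simp
  have hp2 : ∀ n : ℕ, (2 : ℝ) ^ (2 * s * ((n : ℝ) + 1)) = p (n + 1) ^ 2 := fun n => by
    simp only [hp]
    rw [← Real.rpow_natCast, ← Real.rpow_mul (by norm_num)]
    congr 1
    push_cast; ring
  have hg0 : Tendsto (fun n : ℕ => g n * (2 : ℝ) ^ (-s * (n : ℝ))) atTop (𝓝 0) := by
    rw [← tendsto_add_atTop_iff_nat 1]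
    have h2 := (Real.continuous_sqrt.tendsto 0).comp hgHs.tendsto_atTop_zero
    simp only [Real.sqrt_zero] at h2
    refine h2.congr fun n => ?_
    have h3 := hgpos (n + 1) (by omega)
    have h4 : (2 : ℝ) ^ (-(2 * s) * ((n : ℝ) + 1)) * g (n + 1) ^ 2
        = (g (n + 1) * (2 : ℝ) ^ (-s * ((n + 1 : ℕ) : ℝ))) ^ 2 := by
      rw [mul_pow, ← Real.rpow_natCast ((2 : ℝ) ^ _), ← Real.rpow_mul (by norm_num), mul_comm]
      congr 2
      push_cast; ring
    simp only [Function.comp]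
    rw [h4]
    exact Real.sqrt_sq (by positivity)
  have hgs' : ∃ N : ℕ, ∀ n : ℕ, N ≤ n → g (n + 1) ≤ (2 : ℝ) ^ s * g n := by
    obtain ⟨N, hN⟩ := hgs
    refine ⟨N, fun n hn => ?_⟩
    have h1 := hN n (n + 1) hn (by omega)
    have h2 : (2 : ℝ) ^ (-s * (n : ℝ)) = (2 : ℝ) ^ s * (2 : ℝ) ^ (-s * ((n + 1 : ℕ) : ℝ)) := by
      rw [← Real.rpow_add (by norm_num)]
      congr 1
      push_cast; ring
    rw [h2] at h1
    have h3 : (0 : ℝ) < (2 : ℝ) ^ (-s * ((n + 1 : ℕ) : ℝ)) := by positivity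
    refine le_of_mul_le_mul_right (h1.trans_eq ?_) h3
    ring
  have hxp : Summable (fun n : ℕ => ((2 : ℝ) ^ (s * n)) ^ 2 * (x n) ^ 2) := by
    rw [← summable_nat_add_iff 1]
    unfold MemHs at hx
    simpa only [hp2, hp] using hx
  obtain ⟨hxs, hxt⟩ := dy_tail_summable s hs0 x hxp
  set a : ℕ → ℝ := fun n => Real.sqrt (∑' m, (x (n + m)) ^ 2) with ha
  have ha0 : ∀ n, 0 ≤ a n := fun n => Real.sqrt_nonneg _
  have ha2 : ∀ n, a n ^ 2 = ∑' m, (x (n + m)) ^ 2 := fun n =>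
    Real.sq_sqrt (tsum_nonneg fun m => sq_nonneg _)
  obtain ⟨q, hqs, hq⟩ := dy_seq g s hs0 hgpos hgs' hgdiv hg0 a ha0 (by
    refine hxt.congr fun n => ?_
    rw [mul_pow, ha2]) Φ hΦpos (a 1)
  obtain ⟨W, hW0, hW⟩ : ∃ W : ℝ, 0 ≤ W ∧ ∀ n, q n ≤ W ^ 2 := by
    obtain ⟨b, hb⟩ := hqs.tendsto_atTop_zero.bddAbove_range
    refine ⟨Real.sqrt (max b 0), Real.sqrt_nonneg _, fun n => ?_⟩
    rw [Real.sq_sqrt (le_max_right _ _)]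
    exact (hb ⟨n, rfl⟩).trans (le_max_left _ _)
  obtain ⟨c, hc⟩ : ∃ c : ℕ → ℝ, ∀ n : ℕ, c n = W * (2 : ℝ) ^ (-s * (n : ℝ)) := ⟨_, fun n => rfl⟩
  have hc0 : ∀ n, 0 ≤ c n := fun n => by rw [hc]; positivity
  have hcp : ∀ n, c n * p n = W := fun n => by rw [hc, mul_assoc, hinv, mul_one]
  have hcm : ∀ n, c (n + 1) ≤ c n := fun n => by
    rw [hc, hc]
    refine mul_le_mul_of_nonneg_left (Real.rpow_le_rpow_of_exponent_le (by norm_num) ?_) hW0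
    push_cast; nlinarith
  have hkc : Tendsto (fun n => kk β n * c n ^ 3) atTop (𝓝 0) := by
    have h1 : (2 : ℝ) ^ (β - 3 * s) < 1 := Real.rpow_lt_one_of_one_lt_of_neg (by norm_num) (by linarith)
    have h2 := (tendsto_pow_atTop_nhds_zero_of_lt_one (by positivity) h1).const_mul (W ^ 3)
    rw [mul_zero] at h2
    refine h2.congr fun n => ?_
    have h : ((2 : ℝ) ^ (β - 3 * s)) ^ n = (2 : ℝ) ^ (β * n) * ((2 : ℝ) ^ (-s * (n : ℝ))) ^ 3 := by
      rw [← Real.rpow_natCast ((2 : ℝ) ^ (β - 3 * s)), ← Real.rpow_natCast ((2 : ℝ) ^ (-s * (n : ℝ))),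
        ← Real.rpow_mul (by norm_num), ← Real.rpow_mul (by norm_num), ← Real.rpow_add (by norm_num)]
      congr 1
      push_cast; ring
    rw [hc, mul_pow, kk, h]; ring
  obtain ⟨K, hK, H1, H2⟩ := dy_const β hβ g s hs0 hgpos hg0 Φ W hΦpos.le hW0 c hc
  have hgal := fun N : ℕ => dy_galerkin β φ g hgpos x N (N : ℝ) (Nat.cast_nonneg N)
  choose G hGc hG0 hGN hGi hGd using hgal
  have hGq : ∀ N n : ℕ, 1 ≤ n → ∀ t ∈ Icc (0 : ℝ) N, (p n * G N n t) ^ 2 ≤ q n := by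
    intro N n hn t ht
    obtain ⟨d, hd0, hdm, hd1, hdr, hdX⟩ := dy_energy β φ g hgpos x Φ hΦ a ha0 hxs ha2 N (N : ℝ)
      (Nat.cast_nonneg N) (G N) (hGc N) (hG0 N) (hGN N) (hGi N) (hGd N)
    refine le_trans ?_ (hq d hd0 hdm hd1 hdr n hn)
    rw [mul_pow, mul_pow]
    have h1 := hdX n hn t ht
    have h2 : G N n t ^ 2 ≤ d n ^ 2 := by
      rw [← sq_abs (G N n t)]
      exact pow_le_pow_left₀ (abs_nonneg _) h1 2
    exact mul_le_mul_of_nonneg_left h2 (sq_nonneg _)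
  have hqc : ∀ n y, (p n * y) ^ 2 ≤ q n → |y| ≤ c n := by
    intro n y h
    have h2 : |p n * y| ≤ W := abs_le_of_sq_le_sq (h.trans (hW n)) hW0
    rw [abs_mul, abs_of_pos (hpos n), ← hcp n, mul_comm] at h2
    exact le_of_mul_le_mul_right h2 (hpos n)
  obtain ⟨X, hXcont, hXsol, hXlim⟩ := dy_exists β hβ φ g hgpos Φ hΦ c hc0 hcm hkc K hK H1 H2 x G
    hGc hG0 hGi hGd (fun N n hn t ht => hqc n _ (hGq N n hn t ht))
  have hXq : ∀ n, 1 ≤ n → ∀ t, (p n * X n t) ^ 2 ≤ q n := by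
    intro n hn t
    refine le_of_tendsto (((hXlim n t).const_mul (p n)).pow 2) ?_
    obtain ⟨N0, hN0⟩ := exists_nat_ge (max t 0)
    filter_upwards [eventually_ge_atTop N0] with N hN
    exact hGq N n hn _ ⟨le_max_right _ _, hN0.trans (by exact_mod_cast hN)⟩
  have hXc : ∀ n t, |X n t| ≤ c n := by
    intro n t
    rcases Nat.eq_zero_or_pos n with h | h
    · subst h
      rw [hXsol.1, abs_zero]; exact hc0 0
    · exact hqc n _ (hXq n h t)
  have hq1 : Summable fun n => q (n + 1) := (summable_nat_add_iff 1).2 hqs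
  have hXL : ∀ T : ℝ, 0 < T → MemL3W β X T := by
    intro T hT
    unfold MemL3W
    have hb : ∀ t, (∑' n : ℕ, ENNReal.ofReal ((2 : ℝ) ^ (β * ((n : ℝ) + 1)) * |X (n + 1) t| ^ 3))
        ≤ ∑' n : ℕ, ENNReal.ofReal (W * q (n + 1)) := by
      intro t
      refine ENNReal.tsum_le_tsum fun n => ENNReal.ofReal_le_ofReal ?_
      have h1 : (2 : ℝ) ^ (β * ((n : ℝ) + 1)) ≤ p (n + 1) ^ 3 := by
        simp only [hp]
        rw [← Real.rpow_natCast, ← Real.rpow_mul (by norm_num)]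
        apply Real.rpow_le_rpow_of_exponent_le (by norm_num)
        push_cast
        have : (0 : ℝ) ≤ n := Nat.cast_nonneg n
        nlinarith
      have h2 := hXq (n + 1) (by omega) t
      have h3 := hXc (n + 1) t
      have h4 := hpos (n + 1)
      calc _ ≤ p (n + 1) ^ 3 * |X (n + 1) t| ^ 3 := by gcongr
        _ = (|X (n + 1) t| * p (n + 1)) * (p (n + 1) * |X (n + 1) t|) ^ 2 := by ring
        _ = (|X (n + 1) t| * p (n + 1)) * (p (n + 1) * X (n + 1) t) ^ 2 := by
          rw [mul_pow, sq_abs, mul_pow]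
        _ ≤ (c (n + 1) * p (n + 1)) * q (n + 1) := by
          have := hc0 (n + 1)
          gcongr
        _ = _ := by rw [hcp]
    refine lt_of_le_of_lt (lintegral_mono hb) ?_
    rw [lintegral_const]
    refine ENNReal.mul_lt_top ?_ (by simp)
    exact lt_top_iff_ne_top.2 (hq1.mul_left W).tsum_ofReal_ne_top
  refine ⟨X, hXsol, ⟨∑' n, q (n + 1), fun t ht => ?_⟩, hXL, fun Y hY hYL => ?_⟩
  · have h1 : ∀ n : ℕ, (2 : ℝ) ^ (2 * s * ((n : ℝ) + 1)) * X (n + 1) t ^ 2 ≤ q (n + 1) := fun n => by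
      rw [hp2, ← mul_pow]
      exact hXq (n + 1) (by omega) t
    have h2 : Summable (fun n : ℕ => (2 : ℝ) ^ (2 * s * ((n : ℝ) + 1)) * (X (n + 1) t) ^ 2) :=
      Summable.of_nonneg_of_le (fun n => by positivity) h1 hq1
    exact ⟨h2, h2.tsum_le_tsum h1 hq1⟩
  · exact dy_unique_s1 β hβ φ g hgpos Φ hΦ c K hK H1 H2 x X Y hXcont hXsol hY hXL hYL hXc
end

section
/- Let T>0 and let X be a weak solution of the dyadic model with initial condition x ∈ H. If X ∈ L³([0,T]; W^{β/3,3}), i.e. ∫_0^T ∑_{n≥1} 2^{βn} |X_n(t)|³ dt < ∞, then X satisfies the energy equality on [0,T]: for every t ∈ [0,T], ∑_{n≥1} X_n(t)² + ∫_0^t ∑_{n≥1} (2k_n/g_n) X_n(s)² ds = ∑_{n≥1} x_n². -/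
open scoped BigOperators ENNReal
open MeasureTheory Filter Set Topology

/-- Proposition 2.3: a weak solution of class `L³([0,T]; W^{β/3,3})` satisfies the
energy equality on `[0,T]`. -/
theorem dyadic_energy_equality
    (β : ℝ) (hβ : 0 < β) (φ g : ℕ → ℝ)
    (hφ : ∃ Φ : ℝ, ∀ n : ℕ, |φ n| ≤ Φ)
    (hgpos : ∀ n : ℕ, 1 ≤ n → 0 < g n)
    (T : ℝ) (hT : 0 < T)
    (x : ℕ → ℝ) (hxH : Summable fun n : ℕ => (x (n + 1)) ^ 2)
    (X : ℕ → ℝ → ℝ) (hsol : IsDyadicSolution β φ g x X)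
    (hL3 : MemL3W β X T) :
    ∀ t ∈ Set.Icc (0 : ℝ) T,
      (∑' n : ℕ, ENNReal.ofReal ((X (n + 1) t) ^ 2))
          + (∫⁻ s in Set.Ioc (0 : ℝ) t,
              ∑' n : ℕ, ENNReal.ofReal (2 * kk β (n + 1) / g (n + 1) * (X (n + 1) s) ^ 2))
        = ∑' n : ℕ, ENNReal.ofReal ((x (n + 1)) ^ 2) := by
  obtain ⟨Φ, hΦ⟩ := hφ
  obtain ⟨h0, hinit, hode⟩ := hsol
  intro t ht
  have hkpos : ∀ n, 0 < kk β n := fun n => by unfold kk; positivity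
  have hΦ0 : 0 ≤ Φ := (abs_nonneg _).trans (hΦ 0)
  have hcont : ∀ n, ContinuousOn (X n) (Ici 0) := by
    intro n
    rcases Nat.eq_zero_or_pos n with rfl | hn
    · have : X 0 = fun _ => 0 := funext h0
      rw [this]; exact continuousOn_const
    · exact fun s hs => (hode n hn s hs).continuousWithinAt
  have hsubs : ∀ r, 0 ≤ r → uIcc 0 r ⊆ Ici (0:ℝ) := by
    intro r hr s hs
    rw [uIcc_of_le hr] at hs
    exact hs.1
  have hii : ∀ f : ℝ → ℝ, ContinuousOn f (Ici 0) → ∀ r, 0 ≤ r →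
      IntervalIntegrable f volume 0 r :=
    fun f hf r hr => (hf.mono (hsubs r hr)).intervalIntegrable
  have hlin : ∀ f : ℝ → ℝ, ContinuousOn f (Ici 0) → (∀ s, 0 ≤ f s) → ∀ r, 0 ≤ r →
      ∫⁻ s in Ioc (0:ℝ) r, ENNReal.ofReal (f s) = ENNReal.ofReal (∫ s in (0:ℝ)..r, f s) := by
    intro f hf hpos r hr
    rw [intervalIntegral.integral_of_le hr,
      ofReal_integral_eq_lintegral_ofReal ((hii f hf r hr).1) (ae_of_all _ hpos)]
  have hmeas : ∀ f : ℝ → ℝ, ContinuousOn f (Ici 0) → ∀ r,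
      AEMeasurable (fun s => ENNReal.ofReal (f s)) (volume.restrict (Ioc (0:ℝ) r)) := by
    intro f hf r
    exact ((hf.mono (fun s hs => hs.1.le)).aemeasurable measurableSet_Ioc).ennreal_ofReal
  -- cubic terms
  have hca : ∀ n, ContinuousOn (fun s => kk β n * |X n s| ^ 3) (Ici 0) :=
    fun n => continuousOn_const.mul ((hcont n).abs.pow 3)
  have hpa : ∀ n s, 0 ≤ kk β n * |X n s| ^ 3 := fun n s =>
    mul_nonneg (hkpos n).le (by positivity)
  set b : ℕ → ℝ := fun n => ∫ s in (0:ℝ)..T, kk β n * |X n s| ^ 3 with hb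
  have hb0 : ∀ n, 0 ≤ b n := fun n =>
    intervalIntegral.integral_nonneg hT.le (fun s _ => hpa n s)
  have hbsum : (∑' n, ENNReal.ofReal (b (n+1))) ≠ ⊤ := by
    have : (∑' n, ENNReal.ofReal (b (n+1))) = ∫⁻ t in Set.Ioc (0 : ℝ) T,
      ∑' n : ℕ, ENNReal.ofReal ((2 : ℝ) ^ (β * ((n : ℝ) + 1)) * |X (n + 1) t| ^ 3) := by
      have e : ∀ n : ℕ, (2 : ℝ) ^ (β * ((n : ℝ) + 1)) = kk β (n+1) := by
        intro n; simp [kk]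
      simp_rw [e]
      rw [lintegral_tsum (fun n => hmeas _ (hca (n+1)) T)]
      exact tsum_congr fun n => (hlin _ (hca (n+1)) (hpa (n+1)) T hT.le).symm
    rw [this]; exact hL3.ne
  have hbt : Tendsto b atTop (𝓝 0) := by
    rw [← tendsto_add_atTop_iff_nat 1]
    have h1 := ENNReal.tendsto_atTop_zero_of_tsum_ne_top hbsum
    have h2 := (ENNReal.tendsto_toReal ENNReal.zero_ne_top).comp h1
    simpa [Function.comp_def, ENNReal.toReal_ofReal, hb0] using h2
  -- flux
  have hcf : ∀ n, ContinuousOn (fun s => 2 * φ n * kk β n * X n s ^ 2 * X (n+1) s) (Ici 0) :=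
    fun n => (continuousOn_const.mul ((hcont n).pow 2)).mul (hcont (n+1))
  set F : ℕ → ℝ := fun n => ∫ s in (0:ℝ)..t, 2 * φ n * kk β n * X n s ^ 2 * X (n+1) s with hF
  have hF0 : F 0 = 0 := by simp [hF, h0]
  have hkmono : ∀ n, kk β n ≤ kk β (n+1) := by
    intro n
    unfold kk
    apply Real.rpow_le_rpow_of_exponent_le (by norm_num)
    push_cast; nlinarith
  have hFb : ∀ n, |F n| ≤ 2 * Φ * (b n + b (n+1)) := by
    intro n
    have hcab : ContinuousOn (fun s => 2 * Φ * (kk β n * |X n s| ^ 3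
        + kk β (n+1) * |X (n+1) s| ^ 3)) (Ici 0) :=
      continuousOn_const.mul ((hca n).add (hca (n+1)))
    have hpt : ∀ s, |2 * φ n * kk β n * X n s ^ 2 * X (n+1) s| ≤
        2 * Φ * (kk β n * |X n s| ^ 3 + kk β (n+1) * |X (n+1) s| ^ 3) := by
      intro s
      rw [abs_mul, abs_mul, abs_mul, abs_mul, abs_pow, abs_of_pos (hkpos n), abs_two]
      have ha := abs_nonneg (X n s)
      have hc := abs_nonneg (X (n+1) s)
      generalize |X n s| = p at *
      generalize |X (n+1) s| = q at *
      have h1 : p ^ 2 * q ≤ p ^ 3 + q ^ 3 := by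
        rcases le_total p q with h | h
        · nlinarith [pow_le_pow_left₀ ha h 2, pow_nonneg ha 3]
        · nlinarith [mul_le_mul_of_nonneg_left h (sq_nonneg p), pow_nonneg hc 3]
      calc 2 * |φ n| * kk β n * p ^ 2 * q = 2 * |φ n| * (kk β n * (p ^ 2 * q)) := by ring
        _ ≤ 2 * Φ * (kk β n * p ^ 3 + kk β (n+1) * q ^ 3) := by
          have h2 : kk β n * (p ^ 2 * q) ≤ kk β n * p ^ 3 + kk β (n+1) * q ^ 3 := by
            have := mul_le_mul_of_nonneg_left h1 (hkpos n).le
            have := mul_le_mul_of_nonneg_right (hkmono n) (pow_nonneg hc 3)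
            linarith
          have h3 : 0 ≤ kk β n * (p ^ 2 * q) := mul_nonneg (hkpos n).le (by positivity)
          exact mul_le_mul (by linarith [hΦ n]) h2 h3 (by positivity)
    calc |F n| ≤ ∫ s in (0:ℝ)..t, |2 * φ n * kk β n * X n s ^ 2 * X (n+1) s| :=
          intervalIntegral.abs_integral_le_integral_abs ht.1
      _ ≤ ∫ s in (0:ℝ)..t, 2 * Φ * (kk β n * |X n s| ^ 3 + kk β (n+1) * |X (n+1) s| ^ 3) :=
          intervalIntegral.integral_mono_on ht.1 (hii _ (hcf n).abs t ht.1) (hii _ hcab t ht.1)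
            (fun s _ => hpt s)
      _ ≤ ∫ s in (0:ℝ)..T, 2 * Φ * (kk β n * |X n s| ^ 3 + kk β (n+1) * |X (n+1) s| ^ 3) := by
          apply intervalIntegral.integral_mono_interval le_rfl ht.1 ht.2
          · exact ae_of_all _ fun s => (abs_nonneg _).trans (hpt s)
          · exact hii _ hcab T hT.le
      _ = 2 * Φ * (b n + b (n+1)) := by
          rw [intervalIntegral.integral_const_mul,
            intervalIntegral.integral_add (hii _ (hca n) T hT.le) (hii _ (hca (n+1)) T hT.le)]
  have hFt : Tendsto F atTop (𝓝 0) := by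
    apply squeeze_zero_norm hFb
    have := (hbt.add ((tendsto_add_atTop_iff_nat 1).2 hbt)).const_mul (2 * Φ)
    simpa using this
  -- dissipation
  have hcd : ∀ n, ContinuousOn (fun s => 2 * kk β (n+1) / g (n+1) * X (n+1) s ^ 2) (Ici 0) :=
    fun n => continuousOn_const.mul ((hcont (n+1)).pow 2)
  have hpd : ∀ n s, 0 ≤ 2 * kk β (n+1) / g (n+1) * X (n+1) s ^ 2 := fun n s => by
    have := hkpos (n+1)
    have := hgpos (n+1) (by omega)
    positivity
  set d : ℕ → ℝ := fun n => ∫ s in (0:ℝ)..t, 2 * kk β (n+1) / g (n+1) * X (n+1) s ^ 2 with hd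
  have hd0 : ∀ n, 0 ≤ d n := fun n =>
    intervalIntegral.integral_nonneg ht.1 (fun s _ => hpd n s)
  have hmode : ∀ n, X (n+1) t ^ 2 + d n = x (n+1) ^ 2 + (F n - F (n+1)) := by
    intro n
    have hi := hii _ (((hcf n).sub (hcf (n+1))).sub (hcd n)) t ht.1
    have key := intervalIntegral.integral_eq_sub_of_hasDerivAt_of_le (f := fun s => X (n+1) s ^ 2)
      ht.1 (((hcont (n+1)).pow 2).mono (fun s hs => hs.1))
      (fun s hs => by
        have h1 := (hode (n+1) (by omega) s hs.1.le).hasDerivAt (Ici_mem_nhds hs.1)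
        have h2 := h1.pow 2
        refine HasDerivAt.congr_deriv h2 ?_
        simp only [Pi.sub_apply, Nat.add_sub_cancel]
        ring) hi
    simp only [Pi.sub_apply] at key
    rw [intervalIntegral.integral_sub
        (hii (fun s => 2 * φ n * kk β n * X n s ^ 2 * X (n+1) s -
          2 * φ (n+1) * kk β (n+1) * X (n+1) s ^ 2 * X (n+1+1) s)
          ((hcf n).sub (hcf (n+1))) t ht.1) (hii _ (hcd n) t ht.1),
      intervalIntegral.integral_sub (hii _ (hcf n) t ht.1) (hii _ (hcf (n+1)) t ht.1),
      hinit (n+1) (by omega)] at key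
    simp only [hF, hd]
    linarith
  have hnn : ∀ n, 0 ≤ X (n+1) t ^ 2 + d n := fun n => add_nonneg (sq_nonneg _) (hd0 n)
  have hsum : HasSum (fun n => X (n+1) t ^ 2 + d n) (∑' n, x (n+1) ^ 2) := by
    rw [hasSum_iff_tendsto_nat_of_nonneg hnn]
    have h1 := hxH.hasSum.tendsto_sum_nat.sub hFt
    rw [sub_zero] at h1
    refine h1.congr fun N => ?_
    simp_rw [hmode]
    rw [Finset.sum_add_distrib, Finset.sum_range_sub', hF0]
    ring
  rw [lintegral_tsum (fun n => hmeas _ (hcd n) t), ← ENNReal.tsum_add,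
    ← ENNReal.ofReal_tsum_of_nonneg (fun n => sq_nonneg _) hxH, ← hsum.tsum_eq,
    ENNReal.ofReal_tsum_of_nonneg hnn hsum.summable]
  refine tsum_congr fun n => ?_
  rw [hlin _ (hcd n) (hpd n) t ht.1, ENNReal.ofReal_add (sq_nonneg _) (hd0 n)]
end

section
/- Let X be a weak solution of the dyadic model with initial condition x ∈ H that satisfies the energy inequality on [0,T], and for n≥1 set F_n(t) = ∑_{i≥n} X_i(t)². Then for every n≥1 and t∈[0,T], F_n(t) ≤ F_n(0) + ∫_0^t 2 φ_{n-1} k_{n-1} X_{n-1}(s)² X_n(s) ds − ∫_0^t ∑_{i≥n} (2k_i/g_i) X_i(s)² ds. -/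
open scoped BigOperators ENNReal
open MeasureTheory Filter Set Topology

/-- The energy inequality at time `t`:
`∑_{n≥1} Xₙ(t)² + ∫_0^t ∑_{n≥1} (2kₙ/gₙ) Xₙ(s)² ds ≤ ∑_{n≥1} xₙ²`. -/
def EnergyIneqAt (β : ℝ) (g x : ℕ → ℝ) (X : ℕ → ℝ → ℝ) (t : ℝ) : Prop :=
  (∑' n : ℕ, ENNReal.ofReal ((X (n + 1) t) ^ 2))
      + (∫⁻ s in Set.Ioc (0 : ℝ) t,
          ∑' n : ℕ, ENNReal.ofReal (2 * kk β (n + 1) / g (n + 1) * (X (n + 1) s) ^ 2))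
    ≤ ∑' n : ℕ, ENNReal.ofReal ((x (n + 1)) ^ 2)

lemma dy_cont {β : ℝ} {φ g x : ℕ → ℝ} {X : ℕ → ℝ → ℝ} (hsol : IsDyadicSolution β φ g x X)
    (n : ℕ) : ContinuousOn (X n) (Set.Ici 0) := by
  rcases Nat.eq_zero_or_pos n with rfl | hn
  · have : X 0 = fun _ => 0 := funext hsol.1
    rw [this]; exact continuousOn_const
  · intro t ht
    exact (hsol.2.2 n hn t ht).continuousWithinAt

lemma dy_int {f : ℝ → ℝ} (hf : ContinuousOn f (Set.Ici 0)) (t : ℝ) :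
    IntegrableOn f (Set.Ioc 0 t) :=
  ((hf.mono Set.Icc_subset_Ici_self).integrableOn_Icc).mono_set Set.Ioc_subset_Icc_self

lemma dy_mode {β : ℝ} {φ g x : ℕ → ℝ} {X : ℕ → ℝ → ℝ} (hsol : IsDyadicSolution β φ g x X)
    (n : ℕ) {t : ℝ} (ht : 0 ≤ t) :
    (X (n + 1) t) ^ 2
      + (∫ s in Set.Ioc (0 : ℝ) t, 2 * kk β (n + 1) / g (n + 1) * (X (n + 1) s) ^ 2)
      = (x (n + 1)) ^ 2
        + (∫ s in Set.Ioc (0 : ℝ) t, 2 * φ n * kk β n * (X n s) ^ 2 * X (n + 1) s)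
        - ∫ s in Set.Ioc (0 : ℝ) t,
            2 * φ (n + 1) * kk β (n + 1) * (X (n + 1) s) ^ 2 * X (n + 1 + 1) s := by
  have c0 := dy_cont hsol n
  have c1 := dy_cont hsol (n + 1)
  have c2 := dy_cont hsol (n + 1 + 1)
  have i1 := dy_int (f := fun s => 2 * kk β (n + 1) / g (n + 1) * (X (n + 1) s) ^ 2)
    (by fun_prop) t
  have i2 := dy_int (f := fun s => 2 * φ n * kk β n * (X n s) ^ 2 * X (n + 1) s)
    (by fun_prop) t
  have i3 := dy_int (f := fun s =>
    2 * φ (n + 1) * kk β (n + 1) * (X (n + 1) s) ^ 2 * X (n + 1 + 1) s) (by fun_prop) t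
  have i23 := i2.sub i3
  have key := intervalIntegral.integral_eq_sub_of_hasDeriv_right_of_le (a := 0) (b := t)
    (f := fun s => (X (n + 1) s) ^ 2)
    (f' := fun s => (2 * φ n * kk β n * (X n s) ^ 2 * X (n + 1) s
      - 2 * φ (n + 1) * kk β (n + 1) * (X (n + 1) s) ^ 2 * X (n + 1 + 1) s)
      - 2 * kk β (n + 1) / g (n + 1) * (X (n + 1) s) ^ 2) ht
    ((c1.pow 2).mono Set.Icc_subset_Ici_self)
    (by
      intro s hs
      have h := ((hsol.2.2 (n + 1) (by omega) s hs.1.le).pow 2).mono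
        (fun u (hu : u ∈ Set.Ioi s) => (hs.1.trans hu).le)
      refine HasDerivWithinAt.congr_deriv h ?_
      simp only [Nat.add_sub_cancel]
      push_cast
      ring)
    ((intervalIntegrable_iff_integrableOn_Ioc_of_le ht).2 (i23.sub i1))
  rw [intervalIntegral.integral_of_le ht] at key
  have e1 := integral_sub i23 i1
  have e2 := integral_sub i2 i3
  have hx := hsol.2.1 (n + 1) (by omega)
  simp only [Pi.sub_apply] at e1 e2
  rw [hx] at key
  linarith

theorem dyadic_tail_energy_inequality
    (β : ℝ) (hβ : 0 < β) (φ g : ℕ → ℝ)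
    (hφ : ∃ Φ : ℝ, ∀ n : ℕ, |φ n| ≤ Φ)
    (hgpos : ∀ n : ℕ, 1 ≤ n → 0 < g n)
    (T : ℝ) (hT : 0 < T)
    (x : ℕ → ℝ) (hxH : Summable fun n : ℕ => (x (n + 1)) ^ 2)
    (X : ℕ → ℝ → ℝ) (hsol : IsDyadicSolution β φ g x X)
    (hEI : ∀ t ∈ Set.Icc (0 : ℝ) T, EnergyIneqAt β g x X t) :
    ∀ n : ℕ, 1 ≤ n → ∀ t ∈ Set.Icc (0 : ℝ) T,
      (∑' i : ℕ, (X (n + i) t) ^ 2)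
        ≤ (∑' i : ℕ, (x (n + i)) ^ 2)
          + (∫ s in Set.Ioc (0 : ℝ) t,
              2 * φ (n - 1) * kk β (n - 1) * (X (n - 1) s) ^ 2 * X n s)
          - ∫ s in Set.Ioc (0 : ℝ) t,
              ∑' i : ℕ, 2 * kk β (n + i) / g (n + i) * (X (n + i) s) ^ 2 := by
  intro n hn t ht
  obtain ⟨m, rfl⟩ : ∃ m, n = m + 1 := ⟨n - 1, by omega⟩
  have hE := hEI t ht
  unfold EnergyIneqAt at hE
  have hsh : ∀ i, m + 1 + i = i + m + 1 := fun i => by omega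
  simp only [Nat.add_sub_cancel, hsh]
  let f : ℕ → ℝ → ℝ := fun i s => 2 * kk β (i + 1) / g (i + 1) * (X (i + 1) s) ^ 2
  let a : ℕ → ℝ := fun i => (X (i + 1) t) ^ 2
  let d : ℕ → ℝ := fun i => ∫ s in Set.Ioc (0 : ℝ) t, f i s
  let y : ℕ → ℝ := fun i => (x (i + 1)) ^ 2
  let A : ℕ → ℝ := fun i => ∫ s in Set.Ioc (0 : ℝ) t, 2 * φ i * kk β i * (X i s) ^ 2 * X (i + 1) s
  have hf0 : ∀ i s, 0 ≤ f i s := by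
    intro i s
    have := hgpos (i + 1) (by omega)
    have hk : 0 ≤ kk β (i + 1) := by unfold kk; positivity
    simp only [f]; positivity
  have hfi : ∀ i, IntegrableOn (f i) (Set.Ioc 0 t) := by
    intro i
    have c1 := dy_cont hsol (i + 1)
    exact dy_int (by simp only [f]; fun_prop) t
  have ha0 : ∀ i, 0 ≤ a i := fun i => sq_nonneg _
  have hy0 : ∀ i, 0 ≤ y i := fun i => sq_nonneg _
  have hd0 : ∀ i, 0 ≤ d i := fun i => integral_nonneg (hf0 i)
  have hl : (∫⁻ s in Set.Ioc (0 : ℝ) t, ∑' n : ℕ, ENNReal.ofReal (f n s))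
      = ∑' n, ENNReal.ofReal (d n) := by
    rw [lintegral_tsum (fun i => (hfi i).aemeasurable.ennreal_ofReal)]
    refine tsum_congr fun i => ?_
    exact (ofReal_integral_eq_lintegral_ofReal (hfi i) (ae_of_all _ (hf0 i))).symm
  have hE' : (∑' i, ENNReal.ofReal (a i)) + ∑' i, ENNReal.ofReal (d i)
      ≤ ENNReal.ofReal (∑' i, y i) := by
    rw [← hl, ENNReal.ofReal_tsum_of_nonneg hy0 hxH]; exact hE
  rw [← ENNReal.tsum_add] at hE'
  have hY : 0 ≤ ∑' i, y i := tsum_nonneg hy0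
  have hb : ∀ s : Finset ℕ, ∑ i ∈ s, (a i + d i) ≤ ∑' i, y i := by
    intro s
    rw [← ENNReal.ofReal_le_ofReal_iff hY,
      ENNReal.ofReal_sum_of_nonneg (fun i _ => add_nonneg (ha0 i) (hd0 i))]
    refine le_trans ?_ hE'
    simp only [ENNReal.ofReal_add (ha0 _) (hd0 _)]
    exact ENNReal.sum_le_tsum s
  have had : Summable fun i => a i + d i :=
    summable_of_sum_le (fun i => add_nonneg (ha0 i) (hd0 i)) hb
  have hsa : Summable a := had.of_nonneg_of_le ha0 fun i => le_add_of_nonneg_right (hd0 i)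
  have hsd : Summable d := had.of_nonneg_of_le hd0 fun i => le_add_of_nonneg_left (ha0 i)
  have htot : ∑' i, (a i + d i) ≤ ∑' i, y i := had.tsum_le_of_sum_le hb
  rw [hsa.tsum_add hsd] at htot
  have hfin : ∀ m, ∑ i ∈ Finset.range m, a i + ∑ i ∈ Finset.range m, d i
      = ∑ i ∈ Finset.range m, y i - A m := by
    intro m
    induction m with
    | zero => simp [A, hsol.1]
    | succ k ih =>
      have := dy_mode hsol k ht.1
      simp only [Finset.sum_range_succ]
      change a k + d k = y k + A k - A (k + 1) at this
      linarith
  have h1 := hsa.sum_add_tsum_nat_add m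
  have h2 := hsd.sum_add_tsum_nat_add m
  have h3 := Summable.sum_add_tsum_nat_add (f := y) m hxH
  have hint : ∑' i, d (i + m) = ∫ s in Set.Ioc (0 : ℝ) t, ∑' i, f (i + m) s := by
    refine integral_tsum_of_summable_integral_norm (fun i => hfi (i + m)) ?_
    simp only [Real.norm_of_nonneg (hf0 _ _)]
    exact (summable_nat_add_iff m).2 hsd
  have := hfin m
  change ∑' i, a (i + m) ≤ ∑' i, y (i + m) + A m - ∫ s in Set.Ioc (0 : ℝ) t, ∑' i, f (i + m) s
  rw [← hint]
  linarith
end
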